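/- Assume the Riemann Hypothesis. Let 0 < γ₁ ≤ γ₂ ≤ γ₃ ≤ ... be the ordinates of the non-trivial zeros of ζ in the upper half-plane, listed in nondecreasing order with multiplicity. Then liminf_{n→∞} (γ_{n+1} − γ_n) (log γ_n)/(2π) ≤ 0.6073. -/

import Mathlib

open Complex Filter MeasureTheory Real Set

noncomputable section

/-- A non-trivial zero of the Riemann zeta function. -/
def ZetaNontrivZero (ρ : ℂ) : Prop := riemannZeta ρ = 0 ∧ 0 < ρ.re ∧ ρ.re < 1

/-- The multiplicity of `ρ` as a zero of `ζ`. -/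
def zetaMult (ρ : ℂ) : ℕ := sInf {n : ℕ | iteratedDeriv n riemannZeta ρ ≠ 0}

/-!
Following Montgomery and Odlyzko, weight the ordinates by
`w(t) = |∑_{k ≤ N} λ(k) k ^ (-1 / 2 + it)|² exp(-(t - T)² / 2H²)`, with `λ` Liouville's function.
If ordinates near `T` were at least `2η` apart, the intervals `[γ - η, γ + η]` would be disjoint,
so `∑_γ ∫_{-η}^{η} w(γ + α) dα` would be at most the mass of `w`. The explicit formula evaluates
the same sum: the density of the ordinates contributes `2η log T / 2π` times the mass, and the
primes contribute a further positive amount because `λ(p) = -1`. For `T = M ^ 20`, `H = M ^ 18`,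
`N = M ^ 16` and `η = 0.03 π / log M`, these two contributions are about `0.6` and `0.419` times the
mass, a contradiction. Since `2η` is `0.6` mean spacings, the gaps cannot all stay above that size.
-/

open scoped Topology

namespace ZetaGaps

/-! ### Logarithmic derivatives of entire functions of order less than two -/

lemma exists_eq_mul_exp_on_ball {g : ℂ → ℂ} {c : ℂ} {R : ℝ}
    (hg : DifferentiableOn ℂ g (Metric.ball c R)) (hne : ∀ w ∈ Metric.ball c R, g w ≠ 0) :
    ∃ h : ℂ → ℂ, h c = 0 ∧ (∀ w ∈ Metric.ball c R, HasDerivAt h (logDeriv g w) w) ∧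
      ∀ w ∈ Metric.ball c R, g w = g c * cexp (h w) := by
  have hlog : DifferentiableOn ℂ (logDeriv g) (Metric.ball c R) :=
    (hg.deriv Metric.isOpen_ball).div hg hne
  obtain ⟨h, hc, hh⟩ := hlog.isExactOn_ball.with_val_at c 0
  refine ⟨h, hc, hh, fun w hw => ?_⟩
  have hcR : c ∈ Metric.ball c R := Metric.mem_ball_self (Metric.pos_of_mem_ball hw)
  have hder : ∀ x ∈ Metric.ball c R, HasDerivAt (fun x => g x * cexp (-h x)) 0 x := by
    intro x hx
    have hgx := (hg.differentiableAt (Metric.isOpen_ball.mem_nhds hx)).hasDerivAt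
    convert! hgx.mul (hh x hx).neg.cexp using 1
    rw [logDeriv_apply]
    field_simp [hne x hx]
    ring
  have hconst := (convex_ball c R).is_const_of_fderivWithin_eq_zero (𝕜 := ℂ)
    (fun x hx => (hder x hx).differentiableAt.differentiableWithinAt)
    (fun x hx => by
      rw [fderivWithin_of_isOpen Metric.isOpen_ball hx, (hder x hx).hasFDerivAt.fderiv]
      ext
      simp) hw hcR
  simp only [hc, neg_zero, Complex.exp_zero, mul_one] at hconst
  rw [← hconst, mul_assoc, ← Complex.exp_add, neg_add_cancel, Complex.exp_zero, mul_one]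

section ZeroFreeBall

variable {g : ℂ → ℂ} {c z : ℂ} {R K : ℝ}

lemma norm_logDeriv_le_of_norm_le_exp (hg : DifferentiableOn ℂ g (Metric.ball c R))
    (hne : ∀ w ∈ Metric.ball c R, g w ≠ 0) (hK : 0 < K)
    (hbound : ∀ w ∈ Metric.ball c R, ‖g w‖ ≤ Real.exp K * ‖g c‖)
    (hz : z ∈ Metric.ball c (R / 4)) : ‖logDeriv g z‖ ≤ 8 * K / R := by
  have hR : 0 < R := by linarith [Metric.pos_of_mem_ball hz]
  obtain ⟨h, hc, hh, hexp⟩ := exists_eq_mul_exp_on_ball hg hne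
  have hmem : ∀ {x}, ‖x‖ < R → c + x ∈ Metric.ball c R := by simp
  have hdiff : DifferentiableOn ℂ (fun x => h (c + x)) (Metric.ball 0 R) := fun x hx =>
    ((hh _ (hmem (by simpa using hx))).differentiableAt.comp x
      (by fun_prop : DifferentiableAt ℂ (fun x => c + x) x)).differentiableWithinAt
  have hre : MapsTo (fun x => h (c + x)) (Metric.ball 0 R) {w | w.re ≤ K} := by
    intro x hx
    have hcx := hmem (by simpa using hx)
    have hgc : 0 < ‖g c‖ := norm_pos_iff.mpr (hne c (Metric.mem_ball_self hR))
    have hle := hbound _ hcx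
    rw [hexp _ hcx, norm_mul, Complex.norm_exp, mul_comm] at hle
    exact Real.exp_le_exp.mp (le_of_mul_le_mul_right hle hgc)
  have hhalf : ∀ x, ‖x‖ ≤ R / 2 → ‖h (c + x)‖ ≤ 2 * K := by
    intro x hx
    refine (borelCaratheodory_zero hK hdiff hre hR (by simp; linarith) (by simpa)).trans ?_
    rw [div_le_iff₀ (by linarith)]
    nlinarith
  rw [mem_ball_iff_norm] at hz
  rw [← (hh z (by rw [mem_ball_iff_norm]; linarith)).deriv]
  have hball : Metric.closedBall z (R / 4) ⊆ Metric.ball c R := fun x hx => by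
    rw [mem_closedBall_iff_norm] at hx
    rw [mem_ball_iff_norm]
    linarith [norm_sub_le_norm_sub_add_norm_sub x z c]
  refine (norm_deriv_le_of_forall_mem_sphere_norm_le (R := R / 4) (C := 2 * K) (by linarith)
    (DifferentiableOn.diffContOnCl fun x hx => ?_) fun x hx => ?_).trans_eq (by field_simp; ring)
  · exact (hh x (hball (Metric.closure_ball_subset_closedBall hx))).differentiableAt
      |>.differentiableWithinAt
  · rw [mem_sphere_iff_norm] at hx
    have := hhalf (x - c) (by linarith [norm_sub_le_norm_sub_add_norm_sub x z c])
    rwa [add_sub_cancel] at this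

lemma norm_logDeriv_sub_logDeriv_le (hg : DifferentiableOn ℂ g (Metric.ball c R))
    (hne : ∀ w ∈ Metric.ball c R, g w ≠ 0) (hK : 0 < K)
    (hbound : ∀ w ∈ Metric.ball c R, ‖g w‖ ≤ Real.exp K * ‖g c‖)
    (hz : z ∈ Metric.ball c (R / 4)) :
    ‖logDeriv g z - logDeriv g c‖ ≤ 64 * K / R ^ 2 * ‖z - c‖ := by
  have hR : 0 < R / 4 := Metric.pos_of_mem_ball hz
  have hsub : Metric.ball c (R / 4) ⊆ Metric.ball c R := Metric.ball_subset_ball (by linarith)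
  have hlog : DifferentiableOn ℂ (logDeriv g) (Metric.ball c R) :=
    (hg.deriv Metric.isOpen_ball).div hg hne
  have hmaps : MapsTo (logDeriv g) (Metric.ball c (R / 4))
      (Metric.closedBall (logDeriv g c) (16 * K / R)) := fun w hw => by
    rw [mem_closedBall_iff_norm]
    calc ‖logDeriv g w - logDeriv g c‖ ≤ 8 * K / R + 8 * K / R :=
          (norm_sub_le _ _).trans (add_le_add
            (norm_logDeriv_le_of_norm_le_exp hg hne hK hbound hw)
            (norm_logDeriv_le_of_norm_le_exp hg hne hK hbound (Metric.mem_ball_self hR)))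
      _ = 16 * K / R := by ring
  have hschwarz := dist_le_div_mul_dist_of_mapsTo_ball (hlog.mono hsub) hmaps hz
  rw [dist_eq_norm, dist_eq_norm] at hschwarz
  refine hschwarz.trans_eq ?_
  have : R ≠ 0 := by linarith
  field_simp
  ring

end ZeroFreeBall

lemma exists_eq_sub_mul {F : ℂ → ℂ} (hF : Differentiable ℂ F) {a : ℂ} (ha : F a = 0) :
    ∃ G : ℂ → ℂ, Differentiable ℂ G ∧ ∀ z, F z = (z - a) * G z := by
  refine ⟨dslope F a, ?_, fun z => ?_⟩
  · rw [← differentiableOn_univ, Complex.differentiableOn_dslope univ_mem]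
    exact hF.differentiableOn
  · rw [← smul_eq_mul, sub_smul_dslope, ha, sub_zero]

open Classical in
lemma analyticOrderAt_sub_mul {G : ℂ → ℂ} (hG : Differentiable ℂ G) (a b : ℂ) :
    analyticOrderAt (fun z => (z - a) * G z) b =
      (if a = b then 1 else 0) + analyticOrderAt G b := by
  rw [show (fun z => (z - a) * G z) = (fun z => z - a) * G from rfl,
    analyticOrderAt_mul (by fun_prop) (hG.analyticAt b)]
  split_ifs with h
  · rw [← h, analyticOrderAt_id_sub_const_self]
  · rw [analyticOrderAt_id_sub_const_of_ne (Ne.symm h)]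

open Classical in
lemma exists_eq_prod_sub_mul {ι : Type*} (p : ι → ℂ) (S : Finset ι) {F : ℂ → ℂ}
    (hF : Differentiable ℂ F)
    (hcard : ∀ a, ((S.filter (p · = a)).card : ℕ∞) ≤ analyticOrderAt F a) :
    ∃ g : ℂ → ℂ, Differentiable ℂ g ∧ (∀ z, F z = (∏ i ∈ S, (z - p i)) * g z) ∧
      ∀ a, analyticOrderAt F a = (S.filter (p · = a)).card + analyticOrderAt g a := by
  induction S using Finset.induction_on generalizing F with
  | empty => exact ⟨F, hF, by simp, by simp⟩
  | insert i S hi ih =>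
    have hinsert : ∀ a, (((insert i S).filter (p · = a)).card : ℕ∞) =
        (if p i = a then 1 else 0) + (S.filter (p · = a)).card := by
      intro a
      rw [Finset.filter_insert]
      split_ifs with h
      · rw [Finset.card_insert_of_notMem (by simp [hi]), Nat.cast_add, Nat.cast_one, add_comm]
      · rw [zero_add]
    have hzero : F (p i) = 0 := by
      refine apply_eq_zero_of_analyticOrderAt_ne_zero fun h => ?_
      have := hcard (p i)
      rw [hinsert, if_pos rfl, h] at this
      simp at this
    obtain ⟨G, hG, hFG⟩ := exists_eq_sub_mul hF hzero
    obtain rfl : F = fun z => (z - p i) * G z := funext hFG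
    obtain ⟨g, hg, hGg, hord⟩ := ih hG fun a => by
      have := hcard a
      rw [hinsert, analyticOrderAt_sub_mul hG] at this
      split_ifs at this
      · exact (ENat.add_le_add_iff_left (by simp)).mp this
      · simpa using this
    exact ⟨g, hg, fun z => by rw [hFG, Finset.prod_insert hi, hGg, mul_assoc],
      fun a => by rw [analyticOrderAt_sub_mul hG, hinsert, hord, add_assoc]⟩

section HadamardProduct

variable {ι : Type*} {F : ℂ → ℂ} {p : ι → ℂ}

/-- `p` lists the zeros of `F`, each repeated according to its multiplicity. -/
def IsZeroEnumeration (F : ℂ → ℂ) (p : ι → ℂ) : Prop :=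
  ∀ a, {i | p i = a}.encard = analyticOrderAt F a

namespace IsZeroEnumeration

lemma eq_zero_iff (hp : IsZeroEnumeration F p) (hF : Differentiable ℂ F) {z : ℂ} :
    F z = 0 ↔ ∃ i, p i = z := by
  rw [← not_iff_not, ← ne_eq, ← (hF.analyticAt z).analyticOrderAt_eq_zero, ← hp z,
    Set.encard_eq_zero, Set.eq_empty_iff_forall_notMem]
  simp

lemma exists_eq_prod_sub_mul_of_norm_le (hp : IsZeroEnumeration F p) (hF : Differentiable ℂ F)
    {R : ℝ} (hfin : {i | ‖p i‖ ≤ R}.Finite) :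
    ∃ g : ℂ → ℂ, Differentiable ℂ g ∧ (∀ z, F z = (∏ i ∈ hfin.toFinset, (z - p i)) * g z) ∧
      ∀ z, ‖z‖ ≤ R → g z ≠ 0 := by
  classical
  have hcard : ∀ a, ((hfin.toFinset.filter (p · = a)).card : ℕ∞) ≤ analyticOrderAt F a := by
    intro a
    rw [← hp a, ← Set.encard_coe_eq_coe_finsetCard]
    exact Set.encard_le_encard fun i => by simp
  obtain ⟨g, hg, hFg, hord⟩ := exists_eq_prod_sub_mul p hfin.toFinset hF hcard
  refine ⟨g, hg, hFg, fun z hz => (hg.analyticAt z).analyticOrderAt_eq_zero.mp ?_⟩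
  have hfiber : {i | p i = z}.encard = (hfin.toFinset.filter (p · = z)).card := by
    rw [← Set.encard_coe_eq_coe_finsetCard]
    congr 1
    ext i
    simpa using fun h : p i = z => h ▸ hz
  have hadd := hord z
  rw [← hp z, hfiber] at hadd
  exact (ENat.add_right_injective_of_ne_top (ENat.natCast_ne_top _)
    ((add_zero _).trans hadd)).symm

end IsZeroEnumeration

lemma logDeriv_prod_sub_mul {g : ℂ → ℂ} (hg : Differentiable ℂ g) {S : Finset ι}
    (hFg : ∀ z, F z = (∏ i ∈ S, (z - p i)) * g z) {z : ℂ} (hz : F z ≠ 0) :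
    logDeriv F z = ∑ i ∈ S, 1 / (z - p i) + logDeriv g z := by
  have hne := hz
  rw [hFg] at hne
  have hfac := Finset.prod_ne_zero_iff.mp (left_ne_zero_of_mul hne)
  obtain rfl : F = fun z => (∏ i ∈ S, (z - p i)) * g z := funext hFg
  rw [logDeriv_mul z (left_ne_zero_of_mul hne) (right_ne_zero_of_mul hne) (by fun_prop) (hg z),
    logDeriv_prod hfac (fun i _ => by fun_prop)]
  simp [logDeriv_apply]

lemma norm_quotient_mul_norm_le {g : ℂ → ℂ} (hg : Differentiable ℂ g) {S : Finset ι} {R M : ℝ}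
    (hFg : ∀ z, F z = (∏ i ∈ S, (z - p i)) * g z) (hS : ∀ i ∈ S, ‖p i‖ ≤ R)
    (hM : ∀ z, ‖z‖ = 4 * R → ‖F z‖ ≤ M) {w x : ℂ} (hw : ‖w‖ ≤ R) (hx : ‖x‖ < 4 * R) :
    ‖g x‖ * ‖F w‖ ≤ M * ‖g w‖ := by
  have hR : 0 ≤ R := (norm_nonneg w).trans hw
  have hcircle : ∀ z, ‖z‖ = 4 * R → ‖∏ i ∈ S, (w - p i)‖ ≤ ‖∏ i ∈ S, (z - p i)‖ := by
    intro z hz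
    rw [norm_prod, norm_prod]
    refine Finset.prod_le_prod (fun i _ => norm_nonneg _) fun i hi => ?_
    linarith [hS i hi, norm_sub_le w (p i), norm_sub_norm_le z (p i)]
  have hmax : ‖g x * ∏ i ∈ S, (w - p i)‖ ≤ M := by
    refine norm_le_of_forall_mem_frontier_norm_le (f := fun z => g z * ∏ i ∈ S, (w - p i))
      (U := Metric.ball 0 (4 * R)) Metric.isBounded_ball
      (hg.mul_const _).diffContOnCl (fun z hz => ?_) (subset_closure (by simpa using hx))
    have hz : ‖z‖ = 4 * R := by simpa using Metric.frontier_ball_subset_sphere hz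
    calc ‖g z * ∏ i ∈ S, (w - p i)‖ ≤ ‖∏ i ∈ S, (z - p i)‖ * ‖g z‖ := by
          rw [norm_mul, mul_comm]
          exact mul_le_mul_of_nonneg_right (hcircle z hz) (norm_nonneg _)
      _ ≤ M := by rw [← norm_mul, ← hFg]; exact hM z hz
  calc ‖g x‖ * ‖F w‖ = ‖g x * ∏ i ∈ S, (w - p i)‖ * ‖g w‖ := by
        rw [hFg, norm_mul, norm_mul]; ring
    _ ≤ M * ‖g w‖ := by gcongr

lemma tendsto_growth_div_sq {K : ℝ → ℝ} (hK : K =o[atTop] fun R => R ^ 2) (A B : ℝ) :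
    Tendsto (fun R => 64 * (|K (4 * R)| + A) / (R / 2) ^ 2 * B) atTop (𝓝 0) := by
  have hscale : Tendsto (fun R : ℝ => 4 * R) atTop atTop :=
    tendsto_id.const_mul_atTop (by norm_num)
  have hKlim : Tendsto (fun R => |K (4 * R) / (4 * R) ^ 2|) atTop (𝓝 0) := by
    simpa using (hK.tendsto_div_nhds_zero.comp hscale).abs
  have hAlim : Tendsto (fun R : ℝ => A / R ^ 2) atTop (𝓝 0) :=
    tendsto_const_nhds.div_atTop (tendsto_pow_atTop two_ne_zero)
  have hsum := ((hKlim.const_mul 16).add hAlim).const_mul (256 * B)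
  rw [mul_zero, zero_add, mul_zero] at hsum
  refine hsum.congr' ?_
  filter_upwards [eventually_gt_atTop 0] with R hR
  rw [abs_div, abs_of_pos (by positivity : (0 : ℝ) < (4 * R) ^ 2)]
  field_simp
  ring

/- Dividing `F` by its zeros in `‖z‖ ≤ R` leaves a function without zeros there, of size
`exp o(R ^ 2)` by the maximum principle; Borel–Carathéodory and the Schwarz lemma show that its
logarithmic derivative varies by `o(1)` between two fixed points. -/
theorem IsZeroEnumeration.tendsto_sum_inv_sub_sub_inv_sub (hp : IsZeroEnumeration F p)
    (hF : Differentiable ℂ F) (hfin : ∀ R : ℝ, {i | ‖p i‖ ≤ R}.Finite) {K : ℝ → ℝ}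
    (hK : K =o[atTop] fun R => R ^ 2)
    (hgrowth : ∀ᶠ R in atTop, ∀ z, ‖z‖ = R → ‖F z‖ ≤ Real.exp (K R))
    {z w : ℂ} (hz : F z ≠ 0) (hw : F w ≠ 0) :
    Tendsto (fun R => ∑ i ∈ (hfin R).toFinset, (1 / (z - p i) - 1 / (w - p i))) atTop
      (𝓝 (logDeriv F z - logDeriv F w)) := by
  rw [tendsto_iff_norm_sub_tendsto_zero]
  refine squeeze_zero' (Eventually.of_forall fun R => norm_nonneg _) ?_
    (tendsto_growth_div_sq hK (|Real.log ‖F w‖| + 1) ‖z - w‖)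
  have hgrowth4 := (tendsto_id.const_mul_atTop (by norm_num : (0 : ℝ) < 4)).eventually hgrowth
  filter_upwards [hgrowth4, eventually_gt_atTop (2 * ‖w‖), eventually_gt_atTop (8 * ‖z - w‖),
    eventually_gt_atTop 0] with R hgR hwR hzR hR
  obtain ⟨g, hg, hFg, hne⟩ := hp.exists_eq_prod_sub_mul_of_norm_le hF (hfin R)
  have hmem : ∀ x ∈ Metric.ball w (R / 2), ‖x‖ ≤ R := fun x hx => by
    rw [mem_ball_iff_norm] at hx
    linarith [norm_sub_norm_le x w]
  have hbound : ∀ x ∈ Metric.ball w (R / 2),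
      ‖g x‖ ≤ Real.exp (|K (4 * R)| + (|Real.log ‖F w‖| + 1)) * ‖g w‖ := by
    intro x hx
    have hFw : 0 < ‖F w‖ := norm_pos_iff.mpr hw
    have hle := norm_quotient_mul_norm_le (R := R) hg hFg (by simp) hgR (w := w) (x := x)
      (by linarith) (by linarith [hmem x hx])
    rw [← le_div_iff₀ hFw] at hle
    calc ‖g x‖ ≤ Real.exp (K (4 * R) - Real.log ‖F w‖) * ‖g w‖ := by
          rw [Real.exp_sub, Real.exp_log hFw, div_mul_eq_mul_div]; exact hle
      _ ≤ _ := by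
          gcongr
          linarith [le_abs_self (K (4 * R)), neg_abs_le (Real.log ‖F w‖)]
  have hvar := norm_logDeriv_sub_logDeriv_le hg.differentiableOn (fun x hx => hne x (hmem x hx))
    (by positivity) hbound (z := z) (by rw [mem_ball_iff_norm]; linarith)
  rw [Finset.sum_sub_distrib, logDeriv_prod_sub_mul hg hFg hz, logDeriv_prod_sub_mul hg hFg hw]
  convert! hvar using 1
  rw [← norm_neg]
  congr 1
  ring

lemma logDeriv_neg_of_even (hF : ∀ z, F (-z) = F z) (z : ℂ) :
    logDeriv F (-z) = -logDeriv F z := by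
  have hderiv : deriv F z = -deriv F (-z) := by
    simpa only [hF] using deriv_comp_neg F z
  rw [logDeriv_apply, logDeriv_apply, hF, hderiv, neg_div, neg_neg]

/- For even `F` the base point `w = -z` symmetrises the sum. -/
theorem IsZeroEnumeration.tendsto_sum_div_sq_sub_sq (hp : IsZeroEnumeration F p)
    (hF : Differentiable ℂ F) (heven : ∀ z, F (-z) = F z)
    (hfin : ∀ R : ℝ, {i | ‖p i‖ ≤ R}.Finite) {K : ℝ → ℝ} (hK : K =o[atTop] fun R => R ^ 2)
    (hgrowth : ∀ᶠ R in atTop, ∀ z, ‖z‖ = R → ‖F z‖ ≤ Real.exp (K R)) {z : ℂ} (hz : F z ≠ 0) :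
    Tendsto (fun R => ∑ i ∈ (hfin R).toFinset, z / (z ^ 2 - p i ^ 2)) atTop
      (𝓝 (logDeriv F z)) := by
  have hlim := (hp.tendsto_sum_inv_sub_sub_inv_sub hF hfin hK hgrowth hz
    ((heven z).trans_ne hz)).div_const 2
  rw [logDeriv_neg_of_even heven, sub_neg_eq_add, add_self_div_two] at hlim
  refine hlim.congr fun R => ?_
  rw [Finset.sum_div]
  refine Finset.sum_congr rfl fun i _ => ?_
  have hsub : z - p i ≠ 0 := fun h => hz ((hp.eq_zero_iff hF).mpr ⟨i, (sub_eq_zero.mp h).symm⟩)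
  have hadd : z + p i ≠ 0 := fun h => hz <| by
    rw [← heven, hp.eq_zero_iff hF]
    exact ⟨i, by linear_combination h⟩
  have hsq : z ^ 2 - p i ^ 2 ≠ 0 := by
    rw [sq_sub_sq]; exact mul_ne_zero hadd hsub
  rw [show -z - p i = -(z + p i) by ring]
  field_simp
  ring

end HadamardProduct

section EvenRealZeros

variable {ι : Type*}

lemma tendsto_toFinset_sublevel_atTop {f : ι → ℝ} (hfin : ∀ R, {i | f i ≤ R}.Finite) :
    Tendsto (fun R => (hfin R).toFinset) atTop atTop :=
  tendsto_atTop_finset_of_monotone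
    (fun _ _ hab => Set.Finite.toFinset_mono fun _ hi => le_trans hi hab)
    fun i => ⟨f i, by simp⟩

lemma summable_of_tendsto_sum_sublevel {f g : ι → ℝ} (hfin : ∀ R, {i | f i ≤ R}.Finite)
    (hg : 0 ≤ g) {l : ℝ} (h : Tendsto (fun R => ∑ i ∈ (hfin R).toFinset, g i) atTop (𝓝 l)) :
    Summable g := by
  have hmono : Monotone fun R => ∑ i ∈ (hfin R).toFinset, g i := fun _ _ hab =>
    Finset.sum_le_sum_of_subset_of_nonneg
      (Set.Finite.toFinset_mono fun _ hi => le_trans hi hab) fun i _ _ => hg i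
  refine summable_of_sum_le (c := l) hg fun u => ?_
  obtain ⟨R, hR⟩ :=
    ((tendsto_toFinset_sublevel_atTop hfin).eventually (eventually_ge_atTop u)).exists
  exact (Finset.sum_le_sum_of_subset_of_nonneg hR fun i _ _ => hg i).trans (hmono.ge_of_tendsto h R)

lemma norm_sub_I_sq_sub_sq (x p : ℝ) :
    ‖((x : ℂ) - I) ^ 2 - p ^ 2‖ ^ 2 = (x ^ 2 - 1 - p ^ 2) ^ 2 + 4 * x ^ 2 := by
  rw [← Complex.normSq_eq_norm_sq, Complex.normSq_apply]
  simp [pow_two]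
  ring

lemma one_add_sq_le_mul_norm_sub_I_sq_sub_sq (x p : ℝ) :
    1 + p ^ 2 ≤ 8 * (1 + x ^ 2) * ‖((x : ℂ) - I) ^ 2 - p ^ 2‖ := by
  refine (sq_le_sq₀ (by positivity) (by positivity)).mp ?_
  rw [mul_pow, mul_pow, norm_sub_I_sq_sub_sq]
  rcases le_total (1 + p ^ 2) (2 * x ^ 2) with hnear | hfar
  · nlinarith [sq_nonneg x, sq_nonneg p, mul_nonneg (sq_nonneg x) (sq_nonneg x),
      sq_nonneg (x ^ 2 - 1 - p ^ 2), mul_nonneg (sq_nonneg x) (sq_nonneg (1 + x ^ 2)),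
      mul_nonneg (sq_nonneg (x ^ 2 - 1 - p ^ 2)) (sq_nonneg (1 + x ^ 2))]
  · have hsq : ((1 + p ^ 2) / 2) ^ 2 ≤ (1 + p ^ 2 - x ^ 2) ^ 2 := by
      gcongr
      linarith
    have hone : 1 ≤ (1 + x ^ 2) ^ 2 := one_le_pow₀ (by linarith [sq_nonneg x])
    nlinarith [mul_le_mul hone hsq (by positivity) (by positivity),
      mul_nonneg (sq_nonneg (1 + x ^ 2)) (sq_nonneg x)]

lemma norm_ofReal_sub_I_le (x : ℝ) : ‖(x : ℂ) - I‖ ≤ 1 + x ^ 2 := by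
  rw [Complex.norm_def, Complex.normSq_apply]
  refine Real.sqrt_le_iff.mpr ⟨by positivity, ?_⟩
  simp only [sub_re, ofReal_re, I_re, sub_im, ofReal_im, I_im]
  nlinarith [sq_nonneg x]

lemma norm_div_sub_I_sq_sub_sq_le (x p : ℝ) :
    ‖((x : ℂ) - I) / (((x : ℂ) - I) ^ 2 - p ^ 2)‖ ≤ 8 * (1 + x ^ 2) ^ 2 * (1 / (1 + p ^ 2)) := by
  have hle := one_add_sq_le_mul_norm_sub_I_sq_sub_sq x p
  have hpos : 0 < ‖((x : ℂ) - I) ^ 2 - p ^ 2‖ :=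
    pos_of_mul_pos_right ((by positivity : 0 < 1 + p ^ 2).trans_le hle) (by positivity)
  rw [norm_div, mul_one_div, div_le_div_iff₀ hpos (by positivity)]
  calc ‖(x : ℂ) - I‖ * (1 + p ^ 2)
      ≤ (1 + x ^ 2) * (8 * (1 + x ^ 2) * ‖((x : ℂ) - I) ^ 2 - p ^ 2‖) := by
        gcongr
        exact norm_ofReal_sub_I_le x
    _ = _ := by ring

namespace IsZeroEnumeration

variable {F : ℂ → ℂ} {p : ι → ℝ} {K : ℝ → ℝ}

lemma ne_zero_of_im_ne_zero (hp : IsZeroEnumeration F (fun i => (p i : ℂ)))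
    (hF : Differentiable ℂ F) {z : ℂ} (hz : z.im ≠ 0) : F z ≠ 0 := fun h0 => by
  obtain ⟨i, rfl⟩ := (hp.eq_zero_iff hF).mp h0
  exact hz (ofReal_im _)

lemma summable_one_div_one_add_sq (hp : IsZeroEnumeration F (fun i => (p i : ℂ)))
    (hF : Differentiable ℂ F) (heven : ∀ z, F (-z) = F z)
    (hfin : ∀ R : ℝ, {i | ‖(p i : ℂ)‖ ≤ R}.Finite) (hK : K =o[atTop] fun R => R ^ 2)
    (hgrowth : ∀ᶠ R in atTop, ∀ z, ‖z‖ = R → ‖F z‖ ≤ Real.exp (K R)) :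
    Summable fun i => 1 / (1 + p i ^ 2) := by
  have hlim := hp.tendsto_sum_div_sq_sub_sq hF heven hfin hK hgrowth
    (hp.ne_zero_of_im_ne_zero hF (z := I) (by simp))
  refine summable_of_tendsto_sum_sublevel hfin (fun i => by positivity)
    ((((Complex.continuous_im.tendsto _).comp hlim).neg).congr fun R => ?_)
  rw [Function.comp_apply, Complex.im_sum, ← Finset.sum_neg_distrib]
  refine Finset.sum_congr rfl fun i _ => ?_
  have hterm : I / (I ^ 2 - (p i : ℂ) ^ 2) = ((-(1 / (1 + p i ^ 2)) : ℝ) : ℂ) * I := by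
    rw [I_sq, ← neg_add', div_neg]
    push_cast
    ring
  rw [hterm, Complex.im_ofReal_mul, I_im, mul_one, neg_neg]

theorem hasSum_div_sub_I_sq_sub_sq (hp : IsZeroEnumeration F (fun i => (p i : ℂ)))
    (hF : Differentiable ℂ F) (heven : ∀ z, F (-z) = F z)
    (hfin : ∀ R : ℝ, {i | ‖(p i : ℂ)‖ ≤ R}.Finite) (hK : K =o[atTop] fun R => R ^ 2)
    (hgrowth : ∀ᶠ R in atTop, ∀ z, ‖z‖ = R → ‖F z‖ ≤ Real.exp (K R)) (x : ℝ) :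
    HasSum (fun i => ((x : ℂ) - I) / (((x : ℂ) - I) ^ 2 - (p i : ℂ) ^ 2))
      (logDeriv F ((x : ℂ) - I)) := by
  have hsum : Summable fun i => ((x : ℂ) - I) / (((x : ℂ) - I) ^ 2 - (p i : ℂ) ^ 2) :=
    Summable.of_norm_bounded ((hp.summable_one_div_one_add_sq hF heven hfin hK hgrowth).mul_left _)
      fun i => norm_div_sub_I_sq_sub_sq_le x (p i)
  have hlim := hp.tendsto_sum_div_sq_sub_sq hF heven hfin hK hgrowth
    (hp.ne_zero_of_im_ne_zero hF (z := x - I) (by simp))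
  rw [tendsto_nhds_unique hlim (hsum.hasSum.comp (tendsto_toFinset_sublevel_atTop hfin))]
  exact hsum.hasSum

end IsZeroEnumeration

end EvenRealZeros

/-! ### The Riemann xi function -/

section Xi

/-- Twice Riemann's entire function `ξ`, that is `s (s - 1) π ^ (-s / 2) Γ(s / 2) ζ(s)`, written
so that no values have to be filled in at `s = 0, 1`. -/
def xi (s : ℂ) : ℂ := s * (s - 1) * completedRiemannZeta₀ s + 1

lemma differentiable_xi : Differentiable ℂ xi := by
  unfold xi
  have := differentiable_completedZeta₀
  fun_prop

lemma xi_one_sub (s : ℂ) : xi (1 - s) = xi s := by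
  unfold xi
  rw [completedRiemannZeta₀_one_sub]
  ring

lemma xi_eq_mul_Gammaℝ_mul_riemannZeta {s : ℂ} (h0 : 0 < s.re) (h1 : s ≠ 1) :
    xi s = s * (s - 1) * (Gammaℝ s * riemannZeta s) := by
  have hs0 : s ≠ 0 := ne_zero_of_re_pos h0
  have hs1 : 1 - s ≠ 0 := sub_ne_zero.mpr h1.symm
  rw [riemannZeta_def_of_ne_zero hs0, mul_div_cancel₀ _ (Gammaℝ_ne_zero_of_re_pos h0),
    completedRiemannZeta_eq, xi]
  field_simp
  ring

lemma norm_Gamma_le_Gamma_re {s : ℂ} (hs : 0 < s.re) : ‖Complex.Gamma s‖ ≤ Real.Gamma s.re := by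
  rw [Complex.Gamma_eq_integral hs, Real.Gamma_eq_integral hs, Complex.GammaIntegral]
  refine (norm_integral_le_integral_norm _).trans_eq ?_
  refine setIntegral_congr_fun measurableSet_Ioi fun x hx => ?_
  simp only [norm_mul, Complex.norm_real]
  rw [Complex.norm_cpow_eq_rpow_re_of_pos hx]
  simp [abs_of_pos, Real.exp_pos]

lemma Gamma_le_add_one_rpow {x : ℝ} (hx : 1 ≤ x) : Real.Gamma x ≤ (x + 1) ^ (x + 1) := by
  have hceil : (⌈x⌉₊ : ℝ) ≤ x + 1 := (Nat.ceil_lt_add_one (by linarith)).le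
  calc Real.Gamma x ≤ x * Real.Gamma x :=
        le_mul_of_one_le_left (Real.Gamma_pos_of_pos (by linarith)).le hx
    _ = Real.Gamma (x + 1) := (Real.Gamma_add_one (by linarith)).symm
    _ ≤ Real.Gamma (⌈x⌉₊ + 1) := Real.Gamma_strictMonoOn_Ici.monotoneOn
        (by rw [Set.mem_Ici]; linarith) (by rw [Set.mem_Ici]; linarith [Nat.le_ceil x])
        (by linarith [Nat.le_ceil x])
    _ ≤ (⌈x⌉₊ : ℝ) ^ (⌈x⌉₊ : ℝ) := by
        rw [Real.Gamma_nat_eq_factorial, Real.rpow_natCast]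
        exact_mod_cast Nat.factorial_le_pow _
    _ ≤ (⌈x⌉₊ : ℝ) ^ (x + 1) :=
        Real.rpow_le_rpow_of_exponent_le (hx.trans (Nat.le_ceil x)) hceil
    _ ≤ (x + 1) ^ (x + 1) := Real.rpow_le_rpow (by positivity) hceil (by linarith)

lemma rpow_self_le_exp {x : ℝ} (hx : 0 < x) : x ^ x ≤ Real.exp (2 * x ^ (3 / 2 : ℝ)) := by
  rw [Real.rpow_def_of_pos hx, Real.exp_le_exp]
  have hlog := Real.log_le_rpow_div (x := x) (ε := 1 / 2) hx.le (by norm_num)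
  have hpow : x ^ (3 / 2 : ℝ) = x ^ (1 / 2 : ℝ) * x := by
    rw [← Real.rpow_add_one hx.ne']; norm_num
  rw [hpow]
  nlinarith

lemma norm_Gammaℝ_le_exp {s : ℂ} {R : ℝ} (hs : 2 ≤ s.re) (hR : s.re / 2 + 1 ≤ R) :
    ‖Gammaℝ s‖ ≤ Real.exp (2 * R ^ (3 / 2 : ℝ)) := by
  have hre : (s / 2).re = s.re / 2 := by simp
  have hpi : ‖(π : ℂ) ^ (-s / 2)‖ ≤ 1 := by
    rw [Complex.norm_cpow_eq_rpow_re_of_pos Real.pi_pos]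
    refine Real.rpow_le_one_of_one_le_of_nonpos (by linarith [Real.pi_gt_three]) ?_
    rw [neg_div, neg_re, hre]
    linarith
  calc ‖Gammaℝ s‖ = ‖(π : ℂ) ^ (-s / 2)‖ * ‖Complex.Gamma (s / 2)‖ := by
        rw [Gammaℝ_def, norm_mul]
    _ ≤ 1 * Real.Gamma (s.re / 2) := by
        gcongr
        rw [← hre]
        exact norm_Gamma_le_Gamma_re (by rw [hre]; linarith)
    _ ≤ (s.re / 2 + 1) ^ (s.re / 2 + 1) := by
        rw [one_mul]; exact Gamma_le_add_one_rpow (by linarith)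
    _ ≤ Real.exp (2 * (s.re / 2 + 1) ^ (3 / 2 : ℝ)) := rpow_self_le_exp (by linarith)
    _ ≤ Real.exp (2 * R ^ (3 / 2 : ℝ)) := by gcongr

lemma norm_riemannZeta_le_tsum {s : ℂ} (hs : 2 ≤ s.re) :
    ‖riemannZeta s‖ ≤ ∑' n : ℕ, 1 / ((n : ℝ) + 1) ^ 2 := by
  rw [zeta_eq_tsum_one_div_nat_add_one_cpow (by linarith)]
  have hsum : Summable fun n : ℕ => 1 / ((n : ℝ) + 1) ^ 2 := by
    simpa using (summable_nat_add_iff 1).mpr (Real.summable_one_div_nat_pow.mpr (le_refl 2))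
  refine tsum_of_norm_bounded hsum.hasSum fun n => ?_
  rw [norm_div, norm_one, ← Nat.cast_add_one,
    Complex.norm_natCast_cpow_of_pos n.succ_pos, Nat.cast_add_one]
  gcongr
  rw [← Real.rpow_natCast]
  exact Real.rpow_le_rpow_of_exponent_le (by linarith [(Nat.cast_nonneg n : (0 : ℝ) ≤ n)])
    (by simpa using hs)

lemma exists_norm_mellin_le_of_re_mem_Icc {f : ℝ → ℂ} {a b : ℝ} (ha : MellinConvergent f a)
    (hb : MellinConvergent f b) : ∃ K, ∀ s : ℂ, s.re ∈ Icc a b → ‖mellin f s‖ ≤ K := by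
  refine ⟨∫ t in Ioi (0 : ℝ), (‖(t : ℂ) ^ ((a : ℂ) - 1) • f t‖ + ‖(t : ℂ) ^ ((b : ℂ) - 1) • f t‖),
    fun s ⟨has, hsb⟩ => norm_integral_le_of_norm_le (ha.norm.add hb.norm) ?_⟩
  filter_upwards [ae_restrict_mem measurableSet_Ioi] with t (ht : 0 < t)
  simp only [norm_smul]
  rw [← add_mul]
  gcongr
  simp only [Complex.norm_cpow_eq_rpow_re_of_pos ht, sub_re, one_re, ofReal_re]
  have hpos (c : ℝ) : 0 ≤ t ^ (c - 1) := Real.rpow_nonneg ht.le _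
  rcases le_total 1 t with h1 | h1
  · linarith [Real.rpow_le_rpow_of_exponent_le h1 (sub_le_sub_right hsb 1), hpos a]
  · linarith [Real.rpow_le_rpow_of_exponent_ge ht h1 (sub_le_sub_right has 1), hpos b]

lemma exists_norm_completedRiemannZeta₀_le :
    ∃ K, ∀ s : ℂ, s.re ∈ Icc 0 2 → ‖completedRiemannZeta₀ s‖ ≤ K := by
  set P := HurwitzZeta.hurwitzEvenFEPair 0
  have hconv (s : ℂ) : MellinConvergent P.f_modif s :=
    (P.isStrongFEPair_toStrongFEPair.hasMellin s).1
  obtain ⟨K, hK⟩ := exists_norm_mellin_le_of_re_mem_Icc (hconv (0 : ℝ)) (hconv (1 : ℝ))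
  refine ⟨K / 2, fun s hs => ?_⟩
  have hmellin : completedRiemannZeta₀ s = mellin P.f_modif (s / 2) / 2 := rfl
  rw [hmellin, norm_div, Complex.norm_ofNat]
  gcongr
  refine hK _ ?_
  rw [Complex.div_ofNat_re]
  exact ⟨by linarith [hs.1], by linarith [hs.2]⟩

lemma exists_norm_xi_le_of_half_le_re : ∃ K, 0 ≤ K ∧ ∀ R, 1 ≤ R → ∀ s : ℂ, 1 / 2 ≤ s.re →
    ‖s‖ ≤ 2 * R → ‖xi s‖ ≤ 7 * R ^ 2 * K * Real.exp (2 * (2 * R) ^ (3 / 2 : ℝ)) := by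
  obtain ⟨K, hK⟩ := exists_norm_completedRiemannZeta₀_le
  have hK0 : 0 ≤ K := (norm_nonneg _).trans (hK 0 (by simp))
  set Z : ℝ := ∑' n : ℕ, 1 / ((n : ℝ) + 1) ^ 2
  have hZ : 0 ≤ Z := tsum_nonneg fun n => by positivity
  refine ⟨K + Z + 1, by positivity, fun R hR s hs hsR => ?_⟩
  have hpoly : ‖s * (s - 1)‖ ≤ 6 * R ^ 2 := by
    have hs1 : ‖s - 1‖ ≤ 2 * R + 1 := (norm_sub_le _ _).trans (by simpa using hsR)
    calc ‖s * (s - 1)‖ ≤ 2 * R * (2 * R + 1) := by rw [norm_mul]; gcongr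
      _ ≤ _ := by nlinarith
  have hexp : 1 ≤ Real.exp (2 * (2 * R) ^ (3 / 2 : ℝ)) := Real.one_le_exp (by positivity)
  rcases le_total s.re 2 with h2 | h2
  · calc ‖xi s‖ ≤ ‖s * (s - 1) * completedRiemannZeta₀ s‖ + 1 :=
          (norm_add_le _ _).trans_eq (by rw [norm_one])
      _ ≤ 6 * R ^ 2 * K + 1 := by
          rw [norm_mul]
          gcongr
          exact hK s ⟨by linarith, h2⟩
      _ ≤ 7 * R ^ 2 * (K + Z + 1) * 1 := by
          nlinarith [mul_nonneg (sq_nonneg R) hK0, mul_nonneg (sq_nonneg R) hZ,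
            one_le_pow₀ hR (n := 2)]
      _ ≤ _ := by gcongr
  · have hGamma := norm_Gammaℝ_le_exp h2
      (by linarith [(Complex.re_le_norm s).trans hsR] : s.re / 2 + 1 ≤ 2 * R)
    have hzeta := norm_riemannZeta_le_tsum h2
    rw [xi_eq_mul_Gammaℝ_mul_riemannZeta (by linarith) (by rintro rfl; norm_num at h2),
      norm_mul, norm_mul (Gammaℝ s)]
    calc _ ≤ 6 * R ^ 2 * (Real.exp (2 * (2 * R) ^ (3 / 2 : ℝ)) * Z) := by gcongr
      _ ≤ 7 * R ^ 2 * (Real.exp (2 * (2 * R) ^ (3 / 2 : ℝ)) * (K + Z + 1)) := by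
        gcongr
        · norm_num
        · linarith
      _ = _ := by ring

/-- Twice Riemann's `Ξ`: the function `xi` in the coordinate `z` with `s = 1 / 2 + i z`, in which
the Riemann Hypothesis says that all zeros are real. -/
def Xi (z : ℂ) : ℂ := xi (1 / 2 + I * z)

lemma differentiable_Xi : Differentiable ℂ Xi := by
  unfold Xi
  have := differentiable_xi
  fun_prop

lemma Xi_neg (z : ℂ) : Xi (-z) = Xi z := by
  unfold Xi
  rw [← xi_one_sub]
  ring_nf

lemma Xi_I_div_two : Xi (I / 2) = 1 := by
  have hs : (1 / 2 + I * (I / 2) : ℂ) = 0 := by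
    rw [← mul_div_assoc, I_mul_I]; norm_num
  rw [Xi, hs, xi, zero_mul, zero_mul, zero_add]

lemma isLittleO_rpow_rpow_atTop_of_lt {p q : ℝ} (h : p < q) :
    (fun x : ℝ => x ^ p) =o[atTop] fun x => x ^ q := by
  refine (Asymptotics.isLittleO_iff_tendsto' ?_).mpr ?_
  · filter_upwards [eventually_gt_atTop 0] with x hx hzero
    exact absurd hzero (Real.rpow_pos_of_pos hx q).ne'
  · refine (tendsto_rpow_neg_atTop (sub_pos.mpr h)).congr' ?_
    filter_upwards [eventually_gt_atTop 0] with x hx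
    rw [neg_sub, Real.rpow_sub hx]

/- Polynomial factors and constants are absorbed in the exponential by `x ≤ exp x`. -/
lemma exists_norm_Xi_le_exp :
    ∃ C, ∀ R, 1 ≤ R → ∀ z : ℂ, ‖z‖ ≤ R → ‖Xi z‖ ≤ Real.exp (C * R ^ (3 / 2 : ℝ)) := by
  obtain ⟨K, hK, hxi⟩ := exists_norm_xi_le_of_half_le_re
  refine ⟨9 + K + 2 * 2 ^ (3 / 2 : ℝ), fun R hR z hz => ?_⟩
  have hnorm : ∀ w : ℂ, ‖w‖ ≤ R → ‖(1 / 2 + I * w : ℂ)‖ ≤ 2 * R := fun w hw =>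
    (norm_add_le _ _).trans (by simp; linarith)
  have hle : ‖Xi z‖ ≤ 7 * R ^ 2 * K * Real.exp (2 * (2 * R) ^ (3 / 2 : ℝ)) := by
    rcases le_total z.im 0 with h | h
    · exact hxi R hR _ (by simp; linarith) (hnorm z hz)
    · rw [← Xi_neg]
      exact hxi R hR _ (by simp; linarith) (hnorm (-z) (by simpa using hz))
  have hR_le : R ≤ R ^ (3 / 2 : ℝ) := Real.self_le_rpow_of_one_le hR (by norm_num)
  have h7 : (7 : ℝ) ≤ Real.exp (7 * R ^ (3 / 2 : ℝ)) := by
    linarith [Real.add_one_le_exp (7 * R ^ (3 / 2 : ℝ))]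
  have hR_exp : R ≤ Real.exp (R ^ (3 / 2 : ℝ)) := by
    linarith [Real.add_one_le_exp (R ^ (3 / 2 : ℝ))]
  have hK_exp : K ≤ Real.exp (K * R ^ (3 / 2 : ℝ)) := by
    nlinarith [Real.add_one_le_exp (K * R ^ (3 / 2 : ℝ))]
  calc ‖Xi z‖ ≤ 7 * R ^ 2 * K * Real.exp (2 * (2 * R) ^ (3 / 2 : ℝ)) := hle
    _ ≤ Real.exp (7 * R ^ (3 / 2 : ℝ)) * Real.exp (R ^ (3 / 2 : ℝ)) ^ 2 *
        Real.exp (K * R ^ (3 / 2 : ℝ)) * Real.exp (2 * (2 * R) ^ (3 / 2 : ℝ)) := by gcongr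
    _ = _ := by
      rw [← Real.exp_nat_mul, ← Real.exp_add, ← Real.exp_add, ← Real.exp_add,
        Real.mul_rpow (by norm_num) (by linarith)]
      congr 1
      push_cast
      ring

lemma exists_isLittleO_sq_norm_Xi_le_exp : ∃ K : ℝ → ℝ, (K =o[atTop] fun R => R ^ 2) ∧
    ∀ᶠ R in atTop, ∀ z : ℂ, ‖z‖ = R → ‖Xi z‖ ≤ Real.exp (K R) := by
  obtain ⟨C, hC⟩ := exists_norm_Xi_le_exp
  refine ⟨fun R => C * R ^ (3 / 2 : ℝ), .const_mul_left ?_ C,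
    (eventually_ge_atTop 1).mono fun R hR z hz => hC R hR z hz.le⟩
  exact_mod_cast isLittleO_rpow_rpow_atTop_of_lt (by norm_num : (3 / 2 : ℝ) < 2)

end Xi

lemma analyticAt_riemannZeta {s : ℂ} (hs : s ≠ 1) : AnalyticAt ℂ riemannZeta s :=
  DifferentiableOn.analyticAt (s := {1}ᶜ)
    (fun _ hz => (differentiableAt_riemannZeta hz).differentiableWithinAt)
    (isOpen_compl_singleton.mem_nhds hs)

lemma analyticAt_Gammaℝ {s : ℂ} (hs : 0 < s.re) : AnalyticAt ℂ Gammaℝ s := by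
  simpa only [inv_inv] using (differentiable_Gammaℝ_inv.analyticAt s).fun_inv
    (inv_ne_zero (Gammaℝ_ne_zero_of_re_pos hs))

lemma analyticOrderAt_Xi_ne_top (z : ℂ) : analyticOrderAt Xi z ≠ ⊤ := by
  rw [ne_eq, AnalyticOnNhd.analyticOrderAt_eq_top_iff_eq_zero z
    fun x => differentiable_Xi.analyticAt x]
  intro h
  simpa [h] using Xi_I_div_two

lemma xi_eventuallyEq {s : ℂ} (h0 : 0 < s.re) (h1 : s ≠ 1) :
    xi =ᶠ[𝓝 s] fun s => s * (s - 1) * (Gammaℝ s * riemannZeta s) := by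
  filter_upwards [(isOpen_lt continuous_const Complex.continuous_re).mem_nhds h0,
    isOpen_ne.mem_nhds h1] with w hw0 hw1
  exact xi_eq_mul_Gammaℝ_mul_riemannZeta hw0 hw1

lemma analyticOrderAt_xi {s : ℂ} (h0 : 0 < s.re) (h1 : s ≠ 1) :
    analyticOrderAt xi s = analyticOrderAt riemannZeta s := by
  have hpoly : AnalyticAt ℂ (fun s : ℂ => s * (s - 1)) s := by fun_prop
  have hpoly0 : s * (s - 1) ≠ 0 :=
    mul_ne_zero (ne_zero_of_re_pos h0) (sub_ne_zero.mpr h1)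
  have hGamma := analyticAt_Gammaℝ h0
  have hzeta := analyticAt_riemannZeta h1
  have hmul : (fun s => s * (s - 1) * (Gammaℝ s * riemannZeta s)) =
    (fun s => s * (s - 1)) * (Gammaℝ * riemannZeta) := rfl
  rw [analyticOrderAt_congr (xi_eventuallyEq h0 h1), hmul,
    analyticOrderAt_mul hpoly (hGamma.mul hzeta), analyticOrderAt_mul hGamma hzeta,
    hpoly.analyticOrderAt_eq_zero.mpr hpoly0,
    hGamma.analyticOrderAt_eq_zero.mpr (Gammaℝ_ne_zero_of_re_pos h0), zero_add, zero_add]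

lemma analyticOrderAt_riemannZeta_eq_zetaMult {s : ℂ} (hs : s ≠ 1)
    (htop : analyticOrderAt riemannZeta s ≠ ⊤) :
    analyticOrderAt riemannZeta s = zetaMult s := by
  obtain ⟨n, hn⟩ := ENat.ne_top_iff_exists.mp htop
  obtain ⟨hlt, hne⟩ := (analyticOrderAt_eq_nat_iff_iteratedDeriv_eq_zero
    (analyticAt_riemannZeta hs)).mp hn.symm
  rw [← hn, zetaMult, Nat.cast_inj]
  refine le_antisymm (le_csInf ⟨n, hne⟩ fun k hk => ?_) (Nat.sInf_le hne)
  by_contra! hkn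
  exact hk (hlt k hkn)

lemma analyticOrderAt_Xi_ofReal (t : ℝ) :
    analyticOrderAt Xi (t : ℂ) = zetaMult ((1 / 2 : ℝ) + (t : ℝ) * I) := by
  set s : ℂ := (1 / 2 : ℝ) + t * I with hs
  have hre : s.re = 1 / 2 := by simp [hs]
  have h1 : s ≠ 1 := fun h => by norm_num [h] at hre
  have hs' : 1 / 2 + I * (t : ℂ) = s := by rw [hs]; push_cast; ring
  have hlin (z : ℂ) : HasDerivAt (fun z : ℂ => 1 / 2 + I * z) I z := by
    simpa using ((hasDerivAt_id z).const_mul I).const_add (1 / 2 : ℂ)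
  have hcomp : analyticOrderAt Xi (t : ℂ) = analyticOrderAt xi s := by
    rw [← hs']
    exact analyticOrderAt_comp_of_deriv_ne_zero (f := xi) (by fun_prop)
      (by rw [(hlin t).deriv]; exact I_ne_zero)
  have hxi := analyticOrderAt_xi (by rw [hre]; norm_num) h1
  have htop := analyticOrderAt_Xi_ne_top t
  rw [hcomp, hxi] at htop ⊢
  exact analyticOrderAt_riemannZeta_eq_zetaMult h1 htop

lemma im_nonneg_of_Xi_eq_zero (hRH : RiemannHypothesis) {z : ℂ} (hz : Xi z = 0) : 0 ≤ z.im := by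
  by_contra! him
  set s : ℂ := 1 / 2 + I * z with hs
  have hre : s.re = 1 / 2 - z.im := by simp [hs, sub_eq_add_neg]
  have h1 : s ≠ 1 := fun h => by
    rw [Xi, ← hs, h, xi, sub_self, mul_zero, zero_mul, zero_add] at hz
    exact one_ne_zero hz
  have h0 : 0 < s.re := by linarith
  rw [Xi, ← hs, xi_eq_mul_Gammaℝ_mul_riemannZeta h0 h1] at hz
  have hzeta : riemannZeta s = 0 := by
    simpa [ne_zero_of_re_pos h0, sub_ne_zero.mpr h1, Gammaℝ_ne_zero_of_re_pos h0] using hz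
  have hhalf := hRH s hzeta (fun ⟨n, hn⟩ => by
    rw [hn] at h0
    simp only [neg_mul, neg_re, mul_re, re_ofNat, add_re, natCast_re, one_re, im_ofNat, add_im,
      natCast_im, one_im, add_zero, mul_zero, sub_zero, Left.neg_pos_iff] at h0
    linarith [(Nat.cast_nonneg n : (0 : ℝ) ≤ n)]) h1
  linarith

lemma im_eq_zero_of_Xi_eq_zero (hRH : RiemannHypothesis) {z : ℂ} (hz : Xi z = 0) : z.im = 0 := by
  refine le_antisymm ?_ (im_nonneg_of_Xi_eq_zero hRH hz)
  have hneg := im_nonneg_of_Xi_eq_zero hRH ((Xi_neg z).trans hz)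
  rwa [neg_im, Left.nonneg_neg_iff] at hneg

lemma analyticOrderAt_Xi_neg (z : ℂ) : analyticOrderAt Xi (-z) = analyticOrderAt Xi z := by
  have hcomp : Xi ∘ Neg.neg = Xi := funext Xi_neg
  rw [← analyticOrderAt_comp_of_deriv_ne_zero (f := Xi) (g := Neg.neg) (z₀ := z)
    analyticAt_id.neg (by simp), hcomp]

lemma encard_sum_fiber {α β γ : Type*} (f : α → γ) (g : β → γ) (c : γ) :
    {i | Sum.elim f g i = c}.encard = {a | f a = c}.encard + {b | g b = c}.encard := by
  have hunion : {i | Sum.elim f g i = c} = Sum.inl '' {a | f a = c} ∪ Sum.inr '' {b | g b = c} := by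
    ext (a | b) <;> simp
  rw [hunion, Set.encard_union_eq (by
      rw [Set.disjoint_left]; rintro _ ⟨a, -, rfl⟩ ⟨b, -, hb⟩; simp at hb),
    Sum.inl_injective.encard_image, Sum.inr_injective.encard_image]

/-- The numbers `γ n` and `-γ n` together with `m` copies of `0`. If the `γ n` are the ordinates
of the zeros of `ζ` in the upper half-plane and `m` is the multiplicity of `1 / 2`, these are all
the zeros of `Xi`. -/
def symmetrize (m : ℕ) (γ : ℕ → ℝ) : Fin m ⊕ (ℕ ⊕ ℕ) → ℝ :=
  Sum.elim (fun _ => 0) (Sum.elim γ fun n => -γ n)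

lemma finite_abs_symmetrize_le {m : ℕ} {γ : ℕ → ℝ} (hpos : ∀ n, 0 < γ n)
    (htop : Tendsto γ atTop atTop) (R : ℝ) : {i | |symmetrize m γ i| ≤ R}.Finite := by
  have hγ : {n | γ n ≤ R}.Finite := by
    have hev : ∀ᶠ n in cofinite, R < γ n := by
      rw [Nat.cofinite_eq_atTop]; exact htop.eventually_gt_atTop R
    simpa only [eventually_cofinite, not_lt] using hev
  refine (((Set.finite_univ (α := Fin m)).image Sum.inl).union
    (((hγ.image Sum.inl).union (hγ.image Sum.inr)).image Sum.inr)).subset ?_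
  rintro (k | n | n) hn
  · simp
  all_goals
    simp only [symmetrize, Set.mem_ofPred_eq, Sum.elim_inr, Sum.elim_inl, abs_neg,
      abs_of_pos (hpos n)] at hn
    simp [hn]

lemma encard_symmetrize_eq {m : ℕ} {γ : ℕ → ℝ} (t : ℝ) : {i | symmetrize m γ i = t}.encard =
    {_i : Fin m | 0 = t}.encard + ({n | γ n = t}.encard + {n | γ n = -t}.encard) := by
  rw [symmetrize, encard_sum_fiber, encard_sum_fiber]
  simp only [neg_eq_iff_eq_neg]

lemma encard_symmetrize_of_pos {m : ℕ} {γ : ℕ → ℝ} (hpos : ∀ n, 0 < γ n) {t : ℝ} (ht : 0 < t) :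
    {i | symmetrize m γ i = t}.encard = {n | γ n = t}.encard := by
  have hneg : {n | γ n = -t} = ∅ :=
    Set.eq_empty_of_forall_notMem fun n (hn : γ n = -t) => by linarith [hpos n]
  simp [encard_symmetrize_eq, hneg, ht.ne]

lemma encard_symmetrize_neg {m : ℕ} {γ : ℕ → ℝ} (t : ℝ) :
    {i | symmetrize m γ i = -t}.encard = {i | symmetrize m γ i = t}.encard := by
  rw [encard_symmetrize_eq, encard_symmetrize_eq, neg_neg, add_comm {n | γ n = -t}.encard]
  simp only [eq_comm (a := (0 : ℝ)), neg_eq_zero]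

theorem isZeroEnumeration_Xi (hRH : RiemannHypothesis) {γ : ℕ → ℝ} (hpos : ∀ n, 0 < γ n)
    (htop : Tendsto γ atTop atTop)
    (hcount : ∀ t, 0 < t → {n | γ n = t}.ncard = zetaMult ((1 / 2 : ℝ) + (t : ℝ) * I)) :
    IsZeroEnumeration Xi
      (fun i => (symmetrize (analyticOrderAt Xi 0).toNat γ i : ℂ)) := by
  set m := (analyticOrderAt Xi 0).toNat
  have hreal_pos : ∀ t : ℝ, 0 < t →
      {i | symmetrize m γ i = t}.encard = analyticOrderAt Xi t := fun t ht => by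
    have hfin : {n | γ n = t}.Finite := by
      have hne : ∀ᶠ n in cofinite, γ n ≠ t := by
        rw [Nat.cofinite_eq_atTop]; exact htop.eventually_ne_atTop t
      simpa only [eventually_cofinite, not_not] using hne
    rw [encard_symmetrize_of_pos hpos ht, analyticOrderAt_Xi_ofReal, ← hcount t ht,
      hfin.cast_ncard_eq]
  intro a
  by_cases him : a.im = 0
  · obtain ⟨t, rfl⟩ : ∃ t : ℝ, a = t := ⟨a.re, Complex.ext rfl him⟩
    simp only [ofReal_inj]
    rcases lt_trichotomy t 0 with ht | rfl | ht
    · rw [← encard_symmetrize_neg, hreal_pos _ (neg_pos.mpr ht), ofReal_neg,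
        analyticOrderAt_Xi_neg]
    · have hempty : {n | γ n = 0} = ∅ :=
        Set.eq_empty_of_forall_notMem fun n hn => (hpos n).ne' hn
      rw [encard_symmetrize_eq, neg_zero, hempty]
      simp [m, ENat.natCast_toNat (analyticOrderAt_Xi_ne_top 0)]
    · exact hreal_pos t ht
  · have hempty : {i | (symmetrize m γ i : ℂ) = a} = ∅ :=
      Set.eq_empty_of_forall_notMem fun i hi => him (hi ▸ ofReal_im _)
    rw [hempty, Set.encard_empty, eq_comm, (differentiable_Xi.analyticAt a).analyticOrderAt_eq_zero]
    exact fun h => him (im_eq_zero_of_Xi_eq_zero hRH h)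

/-! ### Integrals along horizontal lines -/

lemma integrable_of_norm_le_div_one_add_sq {f : ℝ → ℂ} (hf : Continuous f) {C : ℝ}
    (hb : ∀ x, ‖f x‖ ≤ C / (1 + x ^ 2)) : Integrable f :=
  (integrable_inv_one_add_sq.const_mul C).mono' hf.aestronglyMeasurable
    (.of_forall fun x => by simpa only [div_eq_mul_inv] using hb x)

lemma integrable_horizontal {f : ℂ → ℂ} {a C : ℝ} (hd : ∀ z, z.im = a → DifferentiableAt ℂ f z)
    (hb : ∀ z, z.im = a → ‖f z‖ ≤ C / (1 + z.re ^ 2)) : Integrable fun x : ℝ => f (x + a * I) := by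
  refine integrable_of_norm_le_div_one_add_sq (C := C)
    (continuous_iff_continuousAt.mpr fun x => ?_) fun x => by simpa using hb (x + a * I) (by simp)
  exact (hd (x + a * I) (by simp)).continuousAt.comp (f := fun x : ℝ => (x : ℂ) + a * I)
    (by fun_prop)

lemma tendsto_integral_horizontal_sub_integral_horizontal {f : ℂ → ℂ} {a b : ℝ} (hab : a ≤ b)
    {B : ℝ → ℝ} (hB : Tendsto B atTop (𝓝 0))
    (hd : ∀ z, z.im ∈ Icc a b → DifferentiableAt ℂ f z)
    (hb : ∀ᶠ R in atTop, ∀ z, |z.re| = R → z.im ∈ Icc a b → ‖f z‖ ≤ B R) :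
    Tendsto (fun R : ℝ => (∫ x in (-R)..R, f (x + a * I)) - ∫ x in (-R)..R, f (x + b * I))
      atTop (𝓝 0) := by
  have hlim : Tendsto (fun R => 2 * (B R * |b - a|)) atTop (𝓝 0) := by
    simpa using (hB.mul_const |b - a|).const_mul 2
  refine squeeze_zero_norm' ?_ hlim
  filter_upwards [hb, eventually_ge_atTop 0] with R hR hR0
  have hrect := Complex.integral_boundary_rect_eq_zero_of_differentiableOn f
    (-R + a * I) (R + b * I) fun z hz => by
      have hz' : z ∈ Set.uIcc (-R) R ×ℂ Set.uIcc a b := by simpa using hz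
      exact (hd z (Set.uIcc_of_le hab ▸ hz'.2)).differentiableWithinAt
  simp only [add_re, neg_re, ofReal_re, mul_re, I_re, mul_zero, ofReal_im, I_im, mul_one, sub_self,
    add_zero, add_im, neg_im, mul_im, zero_add, neg_zero] at hrect
  have hsides : (∫ x in (-R)..R, f (x + a * I)) - ∫ x in (-R)..R, f (x + b * I) =
      I • (∫ y : ℝ in a..b, f ((-R : ℝ) + y * I)) - I • (∫ y : ℝ in a..b, f (R + y * I)) := by
    linear_combination hrect
  have hside (u : ℝ) (hu : |u| = R) : ‖I • ∫ y : ℝ in a..b, f (u + y * I)‖ ≤ B R * |b - a| := by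
    rw [norm_smul, norm_I, one_mul]
    refine intervalIntegral.norm_integral_le_of_norm_le_const fun y hy => ?_
    rw [Set.uIoc_of_le hab] at hy
    exact hR _ (by simpa using hu) (by simpa using ⟨hy.1.le, hy.2⟩)
  rw [hsides]
  calc _ ≤ _ := norm_sub_le _ _
    _ ≤ B R * |b - a| + B R * |b - a| :=
      add_le_add (hside (-R) (by rw [abs_neg, abs_of_nonneg hR0])) (hside R (abs_of_nonneg hR0))
    _ = 2 * (B R * |b - a|) := by ring

lemma tendsto_div_one_add_sq_atTop (C : ℝ) :
    Tendsto (fun R : ℝ => C / (1 + R ^ 2)) atTop (𝓝 0) :=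
  (tendsto_atTop_add_const_left _ _ (tendsto_pow_atTop two_ne_zero)).const_div_atTop C

lemma integral_horizontal_eq_integral_horizontal {f : ℂ → ℂ} {a b C : ℝ} (hab : a ≤ b)
    (hd : ∀ z, z.im ∈ Icc a b → DifferentiableAt ℂ f z)
    (hb : ∀ z, z.im ∈ Icc a b → ‖f z‖ ≤ C / (1 + z.re ^ 2)) :
    ∫ x : ℝ, f (x + a * I) = ∫ x : ℝ, f (x + b * I) := by
  have hlim (y : ℝ) (hy : y ∈ Icc a b) :
      Tendsto (fun R : ℝ => ∫ x in (-R)..R, f (x + y * I)) atTop (𝓝 (∫ x : ℝ, f (x + y * I))) :=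
    intervalIntegral_tendsto_integral
      (integrable_horizontal (fun z hz => hd z (hz ▸ hy)) fun z hz => hb z (hz ▸ hy))
      tendsto_neg_atTop_atBot tendsto_id
  refine sub_eq_zero.mp (tendsto_nhds_unique
    ((hlim a (left_mem_Icc.mpr hab)).sub (hlim b (right_mem_Icc.mpr hab)))
    (tendsto_integral_horizontal_sub_integral_horizontal hab (tendsto_div_one_add_sq_atTop C) hd
      (.of_forall fun R z hR hz => ?_)))
  rw [← hR, sq_abs]
  exact hb z hz

lemma tendsto_log_mul_add_sub_log {c : ℂ} (hc : c ∈ slitPlane) (w : ℂ) :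
    Tendsto (fun R : ℝ => Complex.log (R * c + w) - Real.log R) atTop (𝓝 (Complex.log c)) := by
  have hlim : Tendsto (fun R : ℝ => c + w / (R : ℂ)) atTop (𝓝 c) := by
    have hinv : Tendsto (fun R : ℝ => ((R⁻¹ : ℝ) : ℂ)) atTop (𝓝 0) :=
      (continuous_ofReal.tendsto 0).comp tendsto_inv_atTop_zero
    simpa [div_eq_mul_inv] using (hinv.const_mul w).const_add c
  refine (hlim.clog hc).congr' ?_
  filter_upwards [eventually_gt_atTop 0,
    hlim.eventually (isOpen_slitPlane.mem_nhds hc)] with R hR hmem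
  have hfactor : (R : ℂ) * c + w = R * (c + w / R) := by
    rw [mul_add, mul_div_cancel₀ _ (ofReal_ne_zero.mpr hR.ne')]
  rw [hfactor, Complex.log_ofReal_mul hR (slitPlane_ne_zero hmem), add_sub_cancel_left]

lemma tendsto_integral_one_div_sub_of_im_pos {w : ℂ} (hw : 0 < w.im) :
    Tendsto (fun R : ℝ => ∫ x in (-R)..R, 1 / ((x : ℂ) - w)) atTop (𝓝 (π * I)) := by
  have hslit (x : ℝ) : I * ((x : ℂ) - w) ∈ slitPlane := .inl (by simpa using hw)
  have hderiv (x : ℝ) : HasDerivAt (fun x : ℝ => Complex.log (I * ((x : ℂ) - w)))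
      (1 / ((x : ℂ) - w)) x := by
    have hlin : HasDerivAt (fun x : ℝ => I * ((x : ℂ) - w)) I x := by
      simpa using (ofRealCLM.hasDerivAt.sub_const w).const_mul I
    convert! hlin.clog_real (hslit x) using 1
    rw [div_mul_cancel_left₀ I_ne_zero, one_div]
  have hcont : Continuous fun x : ℝ => 1 / ((x : ℂ) - w) := by
    have hne (x : ℝ) : (x : ℂ) - w ≠ 0 := fun h =>
      slitPlane_ne_zero (hslit x) (by rw [h, mul_zero])
    fun_prop (disch := simp_all)
  have heval (R : ℝ) : ∫ x in (-R)..R, 1 / ((x : ℂ) - w) =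
      (Complex.log (R * I + -(I * w)) - Real.log R) -
        (Complex.log (R * -I + -(I * w)) - Real.log R) := by
    rw [intervalIntegral.integral_eq_sub_of_hasDerivAt (fun x _ => hderiv x)
      (hcont.intervalIntegrable _ _)]
    push_cast
    ring_nf
  simp_rw [heval]
  convert! (tendsto_log_mul_add_sub_log (c := I) (by simp [mem_slitPlane_iff]) _).sub
    (tendsto_log_mul_add_sub_log (c := -I) (by simp [mem_slitPlane_iff]) _) using 2
  rw [Complex.log_I, Complex.log_neg_I]
  ring

lemma tendsto_integral_one_div_sub_of_im_neg {w : ℂ} (hw : w.im < 0) :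
    Tendsto (fun R : ℝ => ∫ x in (-R)..R, 1 / ((x : ℂ) - w)) atTop (𝓝 (-(π * I))) := by
  refine (tendsto_integral_one_div_sub_of_im_pos (w := -w) (by simpa using hw)).neg.congr
    fun R => ?_
  have hreflect := intervalIntegral.integral_comp_neg (a := -R) (b := R)
    fun x : ℝ => 1 / ((x : ℂ) - w)
  rw [neg_neg] at hreflect
  rw [← hreflect, ← intervalIntegral.integral_neg]
  refine intervalIntegral.integral_congr fun x _ => ?_
  rw [ofReal_neg, ← neg_add', ← sub_neg_eq_add (x : ℂ), div_neg]

lemma add_mul_I_sub_ne_zero {p : ℂ} {y : ℝ} (hy : y ≠ p.im) (x : ℝ) : (x + y * I - p : ℂ) ≠ 0 :=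
  sub_ne_zero.mpr fun h => hy (by simpa using congrArg Complex.im h)

lemma integrable_horizontal_div_sub {f : ℂ → ℂ} (hf : Differentiable ℂ f) {p : ℂ} {y C : ℝ}
    (hb : ∀ z, z.im = y → ‖f z‖ ≤ C / (1 + z.re ^ 2)) (hy : y ≠ p.im) :
    Integrable fun x : ℝ => f (x + y * I) / (x + y * I - p) := by
  refine integrable_horizontal (f := fun z => f z / (z - p)) (C := C / |y - p.im|)
    (fun z hz => (hf z).div (by fun_prop) (sub_ne_zero.mpr fun h => hy (by rw [← hz, h])))
    fun z hz => ?_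
  have him : |y - p.im| ≤ ‖z - p‖ := by simpa [hz] using abs_im_le_norm (z - p)
  rw [norm_div, div_right_comm]
  exact div_le_div₀ ((norm_nonneg _).trans (hb z hz)) (hb z hz)
    (abs_pos.mpr (sub_ne_zero.mpr hy)) him

lemma tendsto_integral_dslope_horizontal_sub {f : ℂ → ℂ} (hf : Differentiable ℂ f) {a b C : ℝ}
    (hab : a ≤ b) (hb : ∀ z, z.im ∈ Icc a b → ‖f z‖ ≤ C / (1 + z.re ^ 2)) (p : ℂ) :
    Tendsto (fun R : ℝ => (∫ x in (-R)..R, dslope f p (x + a * I)) -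
      ∫ x in (-R)..R, dslope f p (x + b * I)) atTop (𝓝 0) := by
  have hC : 0 ≤ C := by
    simpa using (norm_nonneg _).trans (hb (a * I) (by simp [hab]))
  refine tendsto_integral_horizontal_sub_integral_horizontal hab
    (B := fun R => (C + ‖f p‖) / (R - |p.re|))
    ((tendsto_atTop_add_const_right _ _ tendsto_id).const_div_atTop _)
    (fun z _ => (differentiableOn_dslope univ_mem).mpr hf.differentiableOn |>.differentiableAt
      univ_mem) ?_
  filter_upwards [eventually_gt_atTop |p.re|] with R hR z hzR hz
  have hdist : R - |p.re| ≤ ‖z - p‖ := by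
    rw [← hzR]
    exact (abs_sub_abs_le_abs_sub _ _).trans (abs_re_le_norm (z - p))
  have hzp : z ≠ p := fun h => by rw [← hzR, h] at hR; exact lt_irrefl _ hR
  have hfz : ‖f z‖ ≤ C :=
    (hb z hz).trans (div_le_self hC (le_add_of_nonneg_right (sq_nonneg _)))
  rw [dslope_of_ne _ hzp, slope_def_field, norm_div]
  exact div_le_div₀ (by positivity) ((norm_sub_le _ _).trans (by gcongr)) (sub_pos.mpr hR) hdist

theorem integral_horizontal_div_sub_sub_integral_horizontal {f : ℂ → ℂ} (hf : Differentiable ℂ f)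
    {a b C : ℝ} (hb : ∀ z, z.im ∈ Icc a b → ‖f z‖ ≤ C / (1 + z.re ^ 2)) {p : ℂ} (ha : a < p.im)
    (hp : p.im < b) :
    (∫ x : ℝ, f (x + a * I) / (x + a * I - p)) - ∫ x : ℝ, f (x + b * I) / (x + b * I - p) =
      2 * π * I * f p := by
  have hab : a ≤ b := (ha.trans hp).le
  have hkernel {y : ℝ} (hy : y ≠ p.im) (R : ℝ) :
      IntervalIntegrable (fun x : ℝ => 1 / ((x : ℂ) - (p - y * I))) volume (-R) R := by
    refine Continuous.intervalIntegrable (continuous_const.div (by fun_prop) fun x => ?_) _ _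
    convert! add_mul_I_sub_ne_zero hy x using 1
    ring
  have hintegrable {y : ℝ} (hy : y ∈ Icc a b) (hyp : y ≠ p.im) :=
    integrable_horizontal_div_sub hf (fun z hz => hb z (hz ▸ hy)) hyp
  have hsplit {y : ℝ} (hy : y ∈ Icc a b) (hyp : y ≠ p.im) (R : ℝ) :
      ∫ x in (-R)..R, dslope f p (x + y * I) =
        (∫ x in (-R)..R, f (x + y * I) / (x + y * I - p)) -
          f p * ∫ x in (-R)..R, 1 / ((x : ℂ) - (p - y * I)) := by
    rw [← intervalIntegral.integral_const_mul, ← intervalIntegral.integral_sub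
      (hintegrable hy hyp).intervalIntegrable ((hkernel hyp R).const_mul _)]
    refine intervalIntegral.integral_congr fun x _ => ?_
    have hne := add_mul_I_sub_ne_zero hyp x
    rw [dslope_of_ne _ (sub_ne_zero.mp hne), slope_def_field, sub_div, mul_one_div]
    congr 2
    ring
  have hlim {y : ℝ} (hy : y ∈ Icc a b) (hyp : y ≠ p.im) := intervalIntegral_tendsto_integral
    (hintegrable hy hyp) tendsto_neg_atTop_atBot tendsto_id
  have hmema := left_mem_Icc.mpr hab
  have hmemb := right_mem_Icc.mpr hab
  have hpv := ((hlim hmema ha.ne).sub ((tendsto_integral_one_div_sub_of_im_pos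
    (w := p - a * I) (by simpa using ha)).const_mul (f p))).sub ((hlim hmemb hp.ne').sub
    ((tendsto_integral_one_div_sub_of_im_neg (w := p - b * I) (by simpa using hp)).const_mul (f p)))
  have hzero := tendsto_nhds_unique (hpv.congr fun R => by
    simp only [id, ← hsplit hmema ha.ne, ← hsplit hmemb hp.ne'])
    (tendsto_integral_dslope_horizontal_sub hf hab hb p)
  linear_combination hzero

section SymmetricKernel

variable {Ψ : ℂ → ℂ} {C : ℝ} {p : ℂ}

lemma neg_one_ne_im_neg (hp : |p.im| < 1) : (-1 : ℝ) ≠ (-p).im := by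
  rw [neg_im]
  exact fun h => (abs_lt.mp hp).2.ne (neg_inj.mp h).symm

lemma div_sub_I_sq_sub_sq_mul_eq (hp : |p.im| < 1) (w : ℂ) (x : ℝ) :
    ((x : ℂ) - I) / (((x : ℂ) - I) ^ 2 - p ^ 2) * w =
      1 / 2 * (w / (x + (-1 : ℝ) * I - p) + w / (x + (-1 : ℝ) * I - -p)) := by
  have h1 := add_mul_I_sub_ne_zero (p := p) (y := -1) (abs_lt.mp hp).1.ne x
  have h2 := add_mul_I_sub_ne_zero (p := -p) (y := -1) (neg_one_ne_im_neg hp) x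
  rw [show ((x : ℂ) - I) = x + (-1 : ℝ) * I by push_cast; ring]
  generalize (x + (-1 : ℝ) * I : ℂ) = z at *
  rw [show z ^ 2 - p ^ 2 = (z - p) * (z - -p) by ring]
  field_simp
  ring

lemma integrable_div_sub_I_sq_sub_sq_mul (hd : Differentiable ℂ Ψ)
    (hb : ∀ z : ℂ, z.im = -1 → ‖Ψ z‖ ≤ C / (1 + z.re ^ 2)) (hp : |p.im| < 1) :
    Integrable fun x : ℝ => ((x : ℂ) - I) / (((x : ℂ) - I) ^ 2 - p ^ 2) * Ψ (x - I) := by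
  simp_rw [div_sub_I_sq_sub_sq_mul_eq hp]
  have hline (x : ℝ) : Ψ (x - I) = Ψ (x + (-1 : ℝ) * I) := by
    congr 1; push_cast; ring
  simp_rw [hline]
  exact ((integrable_horizontal_div_sub hd hb (abs_lt.mp hp).1.ne).add
    (integrable_horizontal_div_sub hd hb (neg_one_ne_im_neg hp))).const_mul _

theorem integral_div_sub_I_sq_sub_sq_mul (hd : Differentiable ℂ Ψ) (heven : ∀ z, Ψ (-z) = Ψ z)
    (hb : ∀ z : ℂ, |z.im| ≤ 1 → ‖Ψ z‖ ≤ C / (1 + z.re ^ 2)) (hp : |p.im| < 1) :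
    ∫ x : ℝ, ((x : ℂ) - I) / (((x : ℂ) - I) ^ 2 - p ^ 2) * Ψ (x - I) = π * I * Ψ p := by
  obtain ⟨hp1, hp2⟩ := abs_lt.mp hp
  have hb' (z : ℂ) (hz : z.im ∈ Icc (-1 : ℝ) 1) := hb z (abs_le.mpr hz)
  have hcauchy := integral_horizontal_div_sub_sub_integral_horizontal hd hb' hp1 hp2
  have hintegrable (q : ℂ) (hq : (-1 : ℝ) ≠ q.im) := integrable_horizontal_div_sub hd
    (p := q) (y := -1) (fun z hz => hb' z (by simp [hz])) hq
  have hreflect : ∫ x : ℝ, Ψ (x + (-1 : ℝ) * I) / (x + (-1 : ℝ) * I - -p) =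
      -∫ x : ℝ, Ψ (x + (1 : ℝ) * I) / (x + (1 : ℝ) * I - p) := by
    rw [← integral_neg_eq_self, ← integral_neg]
    congr 1 with x
    rw [show ((-x : ℝ) : ℂ) + (-1 : ℝ) * I = -(x + (1 : ℝ) * I) by push_cast; ring, heven,
      ← neg_sub', div_neg]
  have hline (x : ℝ) : Ψ (x - I) = Ψ (x + (-1 : ℝ) * I) := by
    congr 1; push_cast; ring
  simp_rw [div_sub_I_sq_sub_sq_mul_eq hp, hline]
  rw [integral_const_mul,
    integral_add (hintegrable p hp1.ne) (hintegrable (-p) (neg_one_ne_im_neg hp)),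
    hreflect]
  linear_combination (1 / 2 : ℂ) * hcauchy

end SymmetricKernel

/-! ### The digamma function -/

lemma ne_neg_natCast_of_re_pos {s : ℂ} (hs : 0 < s.re) (m : ℕ) : s ≠ -m := by
  rintro rfl
  rw [neg_re, natCast_re] at hs
  linarith [m.cast_nonneg (α := ℝ)]

lemma digamma_ofReal {x : ℝ} (hx : 0 < x) :
    digamma (x : ℂ) = (deriv (Real.log ∘ Real.Gamma) x : ℝ) := by
  have hne (m : ℕ) : x ≠ -m := by
    exact_mod_cast ne_neg_natCast_of_re_pos (s := x) (by simpa using hx) m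
  have hreal := Real.differentiableAt_Gamma hne
  have hderiv : deriv Complex.Gamma (x : ℂ) = (deriv Real.Gamma x : ℝ) := by
    refine (Complex.differentiableAt_Gamma _ fun m => ?_).hasDerivAt.comp_ofReal.unique ?_
    · exact_mod_cast hne m
    · simpa only [Complex.Gamma_ofReal] using hreal.hasDerivAt.ofReal_comp
  rw [digamma_def, logDeriv_apply, hderiv, Complex.Gamma_ofReal, Function.comp_def,
    deriv.log hreal (Real.Gamma_pos_of_pos hx).ne', ofReal_div]

lemma monotoneOn_deriv_log_Gamma : MonotoneOn (deriv (Real.log ∘ Real.Gamma)) (Ioi 0) :=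
  Real.convexOn_log_Gamma.monotoneOn_deriv fun x (hx : 0 < x) => by
    have hne (m : ℕ) : x ≠ -m := by
      exact_mod_cast ne_neg_natCast_of_re_pos (s := x) (by simpa using hx) m
    exact (Real.differentiableAt_Gamma hne).log (Real.Gamma_pos_of_pos hx).ne'

lemma digamma_add_natCast {s : ℂ} (hs : 0 < s.re) (N : ℕ) :
    digamma (s + N) = digamma s + ∑ n ∈ Finset.range N, 1 / ((n : ℂ) + s) := by
  induction N with
  | zero => simp
  | succ N ih =>
    have hre : 0 < (s + N).re := by
      rw [add_re, natCast_re]; positivity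
    rw [Finset.sum_range_succ, ← add_assoc, ← ih, Nat.cast_add_one, ← add_assoc,
      digamma_apply_add_one _ (ne_neg_natCast_of_re_pos hre), one_div, add_comm (N : ℂ) s]

/-- The general term of the series `digamma s = digamma 1 + ∑ (1 / (n + 1) - 1 / (n + s))`. -/
def digammaTerm (s : ℂ) (n : ℕ) : ℂ := 1 / ((n : ℂ) + 1) - 1 / ((n : ℂ) + s)

lemma summable_one_div_natCast_add_one_sq : Summable fun n : ℕ => 1 / ((n : ℝ) + 1) ^ 2 := by
  simpa using (summable_nat_add_iff 1).mpr (Real.summable_one_div_nat_pow.mpr one_lt_two)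

section DigammaTerm

variable {δ : ℝ} {s : ℂ}

lemma norm_digammaTerm_le (hδ0 : 0 < δ) (hδ1 : δ ≤ 1) (hs : δ ≤ s.re) (n : ℕ) :
    ‖digammaTerm s n‖ ≤ δ⁻¹ * ‖s - 1‖ * (1 / ((n : ℝ) + 1) ^ 2) := by
  have hden : δ * ((n : ℝ) + 1) ≤ ‖(n : ℂ) + s‖ := by
    have hre := re_le_norm ((n : ℂ) + s)
    rw [add_re, natCast_re] at hre
    nlinarith [n.cast_nonneg (α := ℝ)]
  have hden1 : ‖(n : ℂ) + 1‖ = (n : ℝ) + 1 := by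
    rw [← Nat.cast_add_one, Complex.norm_natCast, Nat.cast_add_one]
  have hne : (n : ℂ) + s ≠ 0 := 
    norm_pos_iff.mp ((mul_pos hδ0 n.cast_add_one_pos).trans_le hden)
  have hterm : digammaTerm s n = (s - 1) / (((n : ℂ) + 1) * (n + s)) := by
    rw [digammaTerm, div_sub_div _ _ n.cast_add_one_ne_zero hne]
    ring
  calc ‖digammaTerm s n‖ ≤ ‖s - 1‖ / (((n : ℝ) + 1) * (δ * (n + 1))) := by
        rw [hterm, norm_div, norm_mul, hden1]
        gcongr
    _ = δ⁻¹ * ‖s - 1‖ * (1 / ((n : ℝ) + 1) ^ 2) := by field_simp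

lemma summable_digammaTerm (hs : 0 < s.re) : Summable (digammaTerm s) :=
  .of_norm_bounded (summable_one_div_natCast_add_one_sq.mul_left _)
    (norm_digammaTerm_le (lt_min hs one_pos) (min_le_right _ _) (min_le_left _ _))

lemma norm_tsum_digammaTerm_le (hδ0 : 0 < δ) (hδ1 : δ ≤ 1) (hs : δ ≤ s.re) :
    ‖∑' n, digammaTerm s n‖ ≤ δ⁻¹ * ‖s - 1‖ * ∑' n : ℕ, 1 / ((n : ℝ) + 1) ^ 2 := by
  rw [← tsum_mul_left]
  exact tsum_of_norm_bounded (summable_one_div_natCast_add_one_sq.mul_left _).hasSum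
    (norm_digammaTerm_le hδ0 hδ1 hs)

lemma differentiableAt_tsum_digammaTerm (hs : 0 < s.re) :
    DifferentiableAt ℂ (fun w => ∑' n, digammaTerm w n) s := by
  obtain ⟨δ, hδ0, hδ⟩ := exists_between (lt_min hs one_pos)
  obtain ⟨hδs, hδ1⟩ := lt_min_iff.mp hδ
  have hopen : IsOpen ({w : ℂ | δ < w.re} ∩ Metric.ball 1 (‖s - 1‖ + 1)) :=
    (isOpen_lt continuous_const Complex.continuous_re).inter Metric.isOpen_ball
  refine (Complex.differentiableOn_tsum_of_summable_norm
    (summable_one_div_natCast_add_one_sq.mul_left (δ⁻¹ * (‖s - 1‖ + 1)))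
    (fun n w hw => ?_) hopen fun n w hw => ?_).differentiableAt
    (hopen.mem_nhds ⟨hδs, by simp [dist_eq_norm]⟩)
  · have hne : (n : ℂ) + w ≠ 0 := fun h => ne_neg_natCast_of_re_pos
      (hδ0.trans hw.1) n (eq_neg_of_add_eq_zero_right h)
    exact ((differentiableAt_const _).sub ((differentiableAt_const _).div
      (by fun_prop) hne)).differentiableWithinAt
  · have hw' : ‖w - 1‖ < ‖s - 1‖ + 1 := by simpa [dist_eq_norm] using hw.2
    refine (norm_digammaTerm_le hδ0 hδ1.le hw.1.le n).trans ?_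
    gcongr

end DigammaTerm

-- The partial sums are `digamma x - digamma 1 - (digamma (x + N) - digamma (1 + N))`, and by
-- convexity of `log Γ` the last difference lies between `0` and `1 / (1 + N)`.
lemma norm_digamma_sub_sum_digammaTerm_le {x : ℝ} (h1 : 1 ≤ x) (h2 : x ≤ 2) (N : ℕ) :
    ‖digamma (x : ℂ) - digamma 1 - ∑ n ∈ Finset.range N, digammaTerm x n‖ ≤ 1 / ((N : ℝ) + 1) := by
  have : (0 : ℝ) ≤ N := N.cast_nonneg
  have hdiff : digamma (x : ℂ) - digamma 1 - ∑ n ∈ Finset.range N, digammaTerm x n =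
      digamma ((x + N : ℝ) : ℂ) - digamma ((1 + N : ℝ) : ℂ) := by
    push_cast
    rw [digamma_add_natCast (s := x) (by rw [ofReal_re]; linarith),
      digamma_add_natCast (s := 1) (by simp)]
    simp only [digammaTerm, Finset.sum_sub_distrib]
    ring
  have hmono1 := monotoneOn_deriv_log_Gamma (show 0 < 1 + (N : ℝ) by positivity)
    (show 0 < x + (N : ℝ) by positivity) (by linarith)
  have hmono2 := monotoneOn_deriv_log_Gamma (show 0 < x + (N : ℝ) by positivity)
    (show 0 < 1 + (N : ℝ) + 1 by positivity) (by linarith)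
  have hrec := digamma_apply_add_one ((1 + N : ℝ) : ℂ)
    (ne_neg_natCast_of_re_pos (by rw [ofReal_re]; positivity))
  rw [← ofReal_one, ← ofReal_add, digamma_ofReal (by positivity), digamma_ofReal (by positivity),
    ← ofReal_inv, ← ofReal_add, ofReal_inj] at hrec
  rw [hdiff, digamma_ofReal (by positivity), digamma_ofReal (by positivity), ← ofReal_sub,
    norm_real, Real.norm_eq_abs, abs_of_nonneg (sub_nonneg.mpr hmono1), one_div, add_comm (N : ℝ)]
  linarith

lemma digamma_ofReal_eq_add_tsum {x : ℝ} (h1 : 1 ≤ x) (h2 : x ≤ 2) :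
    digamma (x : ℂ) = digamma 1 + ∑' n, digammaTerm x n := by
  have hzero := squeeze_zero_norm (norm_digamma_sub_sum_digammaTerm_le h1 h2)
    tendsto_one_div_add_atTop_nhds_zero_nat
  have hsum := (summable_digammaTerm (s := x)
    (by rw [ofReal_re]; linarith)).hasSum.tendsto_sum_nat
  linear_combination tendsto_nhds_unique (hsum.const_sub (digamma (x : ℂ) - digamma 1)) hzero

lemma frequently_nhdsNE_ofReal {p : ℂ → Prop} {x : ℝ} (h : ∀ᶠ y : ℝ in 𝓝 x, p y) :
    ∃ᶠ z in 𝓝[≠] (x : ℂ), p z := by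
  have hmap : Tendsto ((↑) : ℝ → ℂ) (𝓝[≠] x) (𝓝[≠] (x : ℂ)) :=
    (continuous_ofReal.continuousAt).continuousWithinAt.tendsto_nhdsWithin
      fun y hy h => hy (ofReal_injective h)
  exact hmap.frequently (h.filter_mono nhdsWithin_le_nhds).frequently

theorem digamma_eq_add_tsum {s : ℂ} (hs : 0 < s.re) :
    digamma s = digamma 1 + ∑' n, digammaTerm s n := by
  have hopen : IsOpen {s : ℂ | 0 < s.re} := isOpen_lt continuous_const Complex.continuous_re
  have hGamma : DifferentiableOn ℂ Complex.Gamma {s | 0 < s.re} := fun s hs =>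
    (differentiableAt_Gamma _ (ne_neg_natCast_of_re_pos hs)).differentiableWithinAt
  have hleft : AnalyticOnNhd ℂ digamma {s | 0 < s.re} := fun s hs =>
    ((hGamma.analyticOnNhd hopen).deriv s hs).div (hGamma.analyticOnNhd hopen s hs)
      (Complex.Gamma_ne_zero (ne_neg_natCast_of_re_pos hs))
  have hright : AnalyticOnNhd ℂ (fun s => digamma 1 + ∑' n, digammaTerm s n) {s | 0 < s.re} :=
    DifferentiableOn.analyticOnNhd (fun s hs =>
      ((differentiableAt_tsum_digammaTerm hs).const_add _).differentiableWithinAt) hopen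
  refine hleft.eqOn_of_preconnected_of_frequently_eq hright
    (convex_halfSpace_re_gt _).isPreconnected (z₀ := ((3 / 2 : ℝ) : ℂ))
    (by simp) (frequently_nhdsNE_ofReal ?_) hs
  filter_upwards [Ioo_mem_nhds (a := 1) (b := 2) (by norm_num) (by norm_num)] with x hx
  exact digamma_ofReal_eq_add_tsum hx.1.le hx.2.le

lemma exists_norm_digamma_le {δ : ℝ} (hδ0 : 0 < δ) (hδ1 : δ ≤ 1) :
    ∃ C, ∀ s : ℂ, δ ≤ s.re → ‖digamma s‖ ≤ C * (1 + ‖s‖) := by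
  set S := ∑' n : ℕ, 1 / ((n : ℝ) + 1) ^ 2
  have : 0 ≤ S := tsum_nonneg fun n => by positivity
  refine ⟨‖digamma 1‖ + δ⁻¹ * S, fun s hs => ?_⟩
  have hsub : ‖s - 1‖ ≤ 1 + ‖s‖ := (norm_sub_le s 1).trans (by rw [norm_one, add_comm])
  calc ‖digamma s‖ ≤ ‖digamma 1‖ + δ⁻¹ * ‖s - 1‖ * S := by
        rw [digamma_eq_add_tsum (hδ0.trans_le hs)]
        exact (norm_add_le _ _).trans (by gcongr; exact norm_tsum_digammaTerm_le hδ0 hδ1 hs)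
    _ ≤ ‖digamma 1‖ * (1 + ‖s‖) + δ⁻¹ * (1 + ‖s‖) * S := by
        gcongr
        exact le_mul_of_one_le_right (norm_nonneg _) (by linarith [norm_nonneg s])
    _ = (‖digamma 1‖ + δ⁻¹ * S) * (1 + ‖s‖) := by ring

section DigammaLower

variable {σ : ℝ} (τ : ℝ)

lemma re_digammaTerm (n : ℕ) : (digammaTerm (σ + τ * I) n).re =
    1 / ((n : ℝ) + 1) - (n + σ) / ((n + σ) ^ 2 + τ ^ 2) := by
  have h1 : 1 / ((n : ℂ) + 1) = ((1 / ((n : ℝ) + 1) : ℝ) : ℂ) := by push_cast; rfl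
  have h2 : (n : ℂ) + (σ + τ * I) = ((n + σ : ℝ) : ℂ) + τ * I := by push_cast; ring
  rw [digammaTerm, h1, h2, sub_re, ofReal_re, one_div (_ + _ * I), inv_re, normSq_add_mul_I]
  simp

lemma neg_le_re_digammaTerm (hσ0 : 0 < σ) (hσ1 : σ ≤ 1) (n : ℕ) :
    -(σ⁻¹ * (1 / ((n : ℝ) + 1) ^ 2)) ≤ (digammaTerm (σ + τ * I) n).re := by
  have hτ : ((n : ℝ) + σ) / ((n + σ) ^ 2 + τ ^ 2) ≤ 1 / (n + σ) := by
    rw [div_le_div_iff₀ (by positivity) (by positivity)]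
    nlinarith [sq_nonneg τ]
  have hσ : 1 / ((n : ℝ) + σ) ≤ 1 / ((n : ℝ) + 1) + σ⁻¹ * (1 / ((n : ℝ) + 1) ^ 2) := by
    have hn : (0 : ℝ) ≤ n := n.cast_nonneg
    rw [← sub_le_iff_le_add', div_sub_div _ _ (by positivity) (by positivity), inv_mul_eq_div,
      div_div, div_le_div_iff₀ (by positivity) (by positivity)]
    nlinarith [mul_nonneg hn (sub_nonneg.mpr hσ1), mul_nonneg hσ0.le hn,
      mul_nonneg (mul_nonneg hσ0.le hn) hn, mul_nonneg hσ0.le hσ0.le]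
  rw [re_digammaTerm]
  linarith

lemma sub_le_re_digammaTerm (hσ : 0 < σ) (n : ℕ) :
    1 / ((n : ℝ) + 1) - (σ⁻¹ + 1) / (1 + |τ|) ≤ (digammaTerm (σ + τ * I) n).re := by
  rw [re_digammaTerm]
  refine sub_le_sub_left ?_ _
  have : σ ≤ n + σ := le_add_of_nonneg_left n.cast_nonneg
  have hlin : (n : ℝ) + σ ≤ σ⁻¹ * (n + σ) ^ 2 := by
    rw [inv_mul_eq_div, le_div_iff₀ hσ]
    nlinarith
  rw [div_le_div_iff₀ (by positivity) (by positivity)]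
  nlinarith [sq_nonneg ((n : ℝ) + σ - |τ|), sq_abs τ, abs_nonneg τ,
    mul_nonneg (inv_pos.mpr hσ).le (sq_nonneg τ)]

lemma log_sub_le_re_tsum_digammaTerm (hσ0 : 0 < σ) (hσ1 : σ ≤ 1) :
    Real.log (1 + |τ|) - (σ⁻¹ + 1) - σ⁻¹ * ∑' n : ℕ, 1 / ((n : ℝ) + 1) ^ 2 ≤
      (∑' n, digammaTerm (σ + τ * I) n).re := by
  set T := 1 + |τ|
  have hT : 0 < T := by positivity
  set N := ⌊T⌋₊
  have hsum := summable_digammaTerm (s := σ + τ * I) (by simpa using hσ0)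
  have hsumre := (hasSum_re hsum.hasSum).summable
  have hsq := summable_one_div_natCast_add_one_sq
  have hhead : Real.log T - (σ⁻¹ + 1) ≤
      ∑ n ∈ Finset.range N, (digammaTerm (σ + τ * I) n).re := by
    have hlog : Real.log T ≤ ∑ n ∈ Finset.range N, 1 / ((n : ℝ) + 1) := by
      have hharm := log_add_one_le_harmonic N
      rw [harmonic] at hharm
      push_cast at hharm
      simpa only [one_div] using (Real.log_le_log hT (Nat.lt_floor_add_one T).le).trans hharm
    have hconst : N * ((σ⁻¹ + 1) / T) ≤ σ⁻¹ + 1 := by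
      rw [mul_div_left_comm]
      exact mul_le_of_le_one_right (by positivity) ((div_le_one hT).mpr (Nat.floor_le hT.le))
    refine le_trans ?_ (Finset.sum_le_sum fun n _ => sub_le_re_digammaTerm τ hσ0 n)
    rw [Finset.sum_sub_distrib, Finset.sum_const, Finset.card_range, nsmul_eq_mul]
    linarith
  have htail : -(σ⁻¹ * ∑' n : ℕ, 1 / ((n : ℝ) + 1) ^ 2) ≤
      ∑' n, (digammaTerm (σ + τ * I) (n + N)).re := by
    have hle : ∑' n : ℕ, 1 / (((n + N : ℕ) : ℝ) + 1) ^ 2 ≤ ∑' n : ℕ, 1 / ((n : ℝ) + 1) ^ 2 := by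
      rw [← hsq.sum_add_tsum_nat_add N]
      exact le_add_of_nonneg_left (Finset.sum_nonneg fun n _ => by positivity)
    refine (neg_le_neg (mul_le_mul_of_nonneg_left hle (by positivity))).trans ?_
    rw [← tsum_mul_left, ← tsum_neg]
    exact (((summable_nat_add_iff N).mpr hsq).mul_left _).neg.tsum_le_tsum
      (fun n => neg_le_re_digammaTerm τ hσ0 hσ1 _) ((summable_nat_add_iff N).mpr hsumre)
  rw [re_tsum hsum, ← hsumre.sum_add_tsum_nat_add N]
  linarith

end DigammaLower

lemma exists_log_sub_le_re_digamma {σ : ℝ} (hσ0 : 0 < σ) (hσ1 : σ ≤ 1) :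
    ∃ C, ∀ τ : ℝ, Real.log (1 + |τ|) - C ≤ (digamma (σ + τ * I)).re := by
  refine ⟨σ⁻¹ + 1 + σ⁻¹ * (∑' n : ℕ, 1 / ((n : ℝ) + 1) ^ 2) - (digamma 1).re, fun τ => ?_⟩
  rw [digamma_eq_add_tsum (s := σ + τ * I) (by simpa using hσ0), add_re]
  linarith [log_sub_le_re_tsum_digammaTerm τ hσ0 hσ1]

lemma logDeriv_Gammaℝ {s : ℂ} (hs : 0 < s.re) :
    logDeriv Gammaℝ s = -(Real.log π : ℂ) / 2 + digamma (s / 2) / 2 := by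
  have hne := ne_neg_natCast_of_re_pos (s := s / 2) (by simpa using hs)
  have hpi : (π : ℂ) ≠ 0 := ofReal_ne_zero.mpr Real.pi_ne_zero
  have hcpow : HasDerivAt (fun s : ℂ => (π : ℂ) ^ (-s / 2))
      ((π : ℂ) ^ (-s / 2) * Complex.log π * (-1 / 2)) s :=
    ((hasDerivAt_id s).neg.div_const 2).const_cpow (.inl hpi)
  have hGamma : HasDerivAt (fun s : ℂ => Complex.Gamma (s / 2))
      (deriv Complex.Gamma (s / 2) * (1 / 2)) s :=
    (differentiableAt_Gamma _ hne).hasDerivAt.comp s ((hasDerivAt_id s).div_const 2)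
  have hdef : Gammaℝ = fun s : ℂ => (π : ℂ) ^ (-s / 2) * Complex.Gamma (s / 2) :=
    funext Gammaℝ_def
  have hcpow0 : (π : ℂ) ^ (-s / 2) ≠ 0 := by simp [cpow_eq_zero_iff, hpi]
  rw [hdef, logDeriv_mul (f := fun s : ℂ => (π : ℂ) ^ (-s / 2))
    (g := fun s => Complex.Gamma (s / 2)) s hcpow0 (Complex.Gamma_ne_zero hne)
    hcpow.differentiableAt hGamma.differentiableAt, logDeriv_apply, logDeriv_apply, hcpow.deriv,
    hGamma.deriv, digamma_def, logDeriv_apply, ofReal_log Real.pi_pos.le]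
  field_simp

lemma exists_norm_logDeriv_Gammaℝ_le {δ : ℝ} (hδ0 : 0 < δ) (hδ1 : δ ≤ 1) :
    ∃ C, ∀ s : ℂ, δ ≤ s.re → ‖logDeriv Gammaℝ s‖ ≤ C * (1 + ‖s‖) := by
  obtain ⟨C, hC⟩ := exists_norm_digamma_le (half_pos hδ0) (by linarith)
  refine ⟨‖(Real.log π : ℂ)‖ / 2 + C / 2, fun s hs => ?_⟩
  have hdig := hC (s / 2) (by simpa using (div_le_div_iff_of_pos_right two_pos).mpr hs)
  have hC0 : 0 ≤ C := nonneg_of_mul_nonneg_left ((norm_nonneg _).trans hdig) (by positivity)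
  have hhalf : ‖s / 2‖ ≤ ‖s‖ := by rw [norm_div, Complex.norm_ofNat]; linarith [norm_nonneg s]
  rw [logDeriv_Gammaℝ (hδ0.trans_le hs)]
  calc _ ≤ ‖(Real.log π : ℂ)‖ / 2 + ‖digamma (s / 2)‖ / 2 := by
        refine (norm_add_le _ _).trans (le_of_eq ?_)
        rw [norm_div, norm_div, norm_neg, Complex.norm_ofNat]
    _ ≤ ‖(Real.log π : ℂ)‖ / 2 * (1 + ‖s‖) + C * (1 + ‖s‖) / 2 := by
        gcongr
        · exact le_mul_of_one_le_right (by positivity) (by linarith [norm_nonneg s])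
        · exact hdig.trans (by gcongr)
    _ = (‖(Real.log π : ℂ)‖ / 2 + C / 2) * (1 + ‖s‖) := by ring

lemma exists_log_sub_le_re_logDeriv_Gammaℝ :
    ∃ C, ∀ t : ℝ, 1 / 2 * Real.log (1 + |t|) - C ≤ (logDeriv Gammaℝ (1 / 2 + I * t)).re := by
  obtain ⟨C, hC⟩ := exists_log_sub_le_re_digamma (σ := 1 / 4) (by norm_num) (by norm_num)
  refine ⟨(Real.log π + Real.log 2 + C) / 2, fun t => ?_⟩
  have hlog : Real.log (1 + |t|) ≤ Real.log 2 + Real.log (1 + |t / 2|) := by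
    rw [← Real.log_mul two_ne_zero (by positivity), abs_div, abs_two]
    exact Real.log_le_log (by positivity) (by linarith [abs_nonneg t])
  have hhalf : (1 / 2 + I * t : ℂ) / 2 = ((1 / 4 : ℝ) : ℂ) + ((t / 2 : ℝ) : ℂ) * I := by
    push_cast; ring
  rw [logDeriv_Gammaℝ (by simp), hhalf, add_re, div_ofNat_re, div_ofNat_re, neg_re, ofReal_re]
  linarith [hC (t / 2)]

/-! ### The explicit formula -/

lemma differentiableAt_logDeriv {f : ℂ → ℂ} {s : ℂ} (hf : AnalyticAt ℂ f s) (hs : f s ≠ 0) :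
    DifferentiableAt ℂ (logDeriv f) s :=
  (hf.deriv.div hf hs).differentiableAt

lemma logDeriv_xi {s : ℂ} (h0 : 0 < s.re) (h1 : s ≠ 1) (hζ : riemannZeta s ≠ 0) :
    logDeriv xi s = 1 / s + 1 / (s - 1) + logDeriv Gammaℝ s + logDeriv riemannZeta s := by
  have hs0 : s ≠ 0 := ne_zero_of_re_pos h0
  have hs1 : s - 1 ≠ 0 := sub_ne_zero.mpr h1
  have hΓ := Gammaℝ_ne_zero_of_re_pos h0
  have hderiv : HasDerivAt (fun s => s * (s - 1) * (Gammaℝ s * riemannZeta s))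
      ((1 * (s - 1) + s * 1) * (Gammaℝ s * riemannZeta s) + s * (s - 1) *
        (deriv Gammaℝ s * riemannZeta s + Gammaℝ s * deriv riemannZeta s)) s :=
    ((hasDerivAt_id s).mul ((hasDerivAt_id s).sub_const 1)).mul
      ((analyticAt_Gammaℝ h0).differentiableAt.hasDerivAt.mul
        (differentiableAt_riemannZeta h1).hasDerivAt)
  have hev := xi_eventuallyEq h0 h1
  rw [logDeriv_apply, logDeriv_apply, logDeriv_apply, hev.deriv_eq, hev.eq_of_nhds, hderiv.deriv]
  field_simp
  ring

lemma logDeriv_Xi (z : ℂ) : logDeriv Xi z = I * logDeriv xi (1 / 2 + I * z) := by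
  have hlin : HasDerivAt (fun z : ℂ => 1 / 2 + I * z) I z := by
    simpa using ((hasDerivAt_id z).const_mul I).const_add (1 / 2)
  have hcomp : HasDerivAt Xi (deriv xi (1 / 2 + I * z) * I) z :=
    (differentiable_xi (1 / 2 + I * z)).hasDerivAt.comp z hlin
  rw [logDeriv_apply, logDeriv_apply, hcomp.deriv, Xi, mul_comm _ I, mul_div_assoc]

lemma logDeriv_Xi_of_im_lt {z : ℂ} (hz : z.im < -(1 / 2)) :
    logDeriv Xi z = 2 * (z / (z ^ 2 - (I / 2) ^ 2)) +
      I * logDeriv Gammaℝ (1 / 2 + I * z) + I * logDeriv riemannZeta (1 / 2 + I * z) := by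
  set s := 1 / 2 + I * z with hs
  have hre : 1 < s.re := by simp [hs]; linarith
  have hs0 : s ≠ 0 := ne_zero_of_re_pos (one_pos.trans hre)
  have hs1 : s ≠ 1 := fun h => by simp [h] at hre
  have hzs : z = -I * (s - 1 / 2) := by rw [hs]; linear_combination z * I_sq
  have hsq : z ^ 2 - (I / 2) ^ 2 = -(s * (s - 1)) := by
    rw [hzs]; linear_combination (s ^ 2 - s) * I_sq
  have hs1' := sub_ne_zero.mpr hs1
  rw [logDeriv_Xi, ← hs, logDeriv_xi (one_pos.trans hre) hs1
    (riemannZeta_ne_zero_of_one_lt_re hre), hsq, hzs]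
  field_simp
  ring

/-- The test functions of the explicit formula: even entire functions whose decay on the strip
`|Im z| ≤ 1` is fast enough for the sum over the zeros to converge absolutely. -/
structure IsTestFunction (Ψ : ℂ → ℂ) : Prop where
  differentiable : Differentiable ℂ Ψ
  even (z : ℂ) : Ψ (-z) = Ψ z
  exists_norm_le : ∃ C, ∀ z : ℂ, |z.im| ≤ 1 → ‖Ψ z‖ ≤ C / (1 + z.re ^ 2) ^ 3

lemma norm_mul_le_div_one_add_sq {u v : ℂ} {x K C : ℝ} (hu : ‖u‖ ≤ K * (1 + x ^ 2) ^ 2)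
    (hv : ‖v‖ ≤ C / (1 + x ^ 2) ^ 3) : ‖u * v‖ ≤ K * C / (1 + x ^ 2) := by
  rw [norm_mul]
  refine (mul_le_mul hu hv (norm_nonneg _) ((norm_nonneg _).trans hu)).trans (le_of_eq ?_)
  have : 1 + x ^ 2 ≠ 0 := by positivity
  field_simp

namespace IsTestFunction

variable {Ψ f : ℂ → ℂ} {K : ℝ}

lemma exists_norm_le_div_one_add_sq (hΨ : IsTestFunction Ψ) :
    ∃ C, ∀ z : ℂ, |z.im| ≤ 1 → ‖Ψ z‖ ≤ C / (1 + z.re ^ 2) := by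
  obtain ⟨C, hC⟩ := hΨ.exists_norm_le
  refine ⟨1 * C, fun z hz => ?_⟩
  rw [← one_mul (Ψ z)]
  refine norm_mul_le_div_one_add_sq ?_ (hC z hz)
  rw [norm_one, one_mul]
  exact one_le_pow₀ (le_add_of_nonneg_right (sq_nonneg _))

lemma integrable_horizontal_mul (hΨ : IsTestFunction Ψ) {a : ℝ} (ha : |a| ≤ 1)
    (hd : ∀ z, z.im = a → DifferentiableAt ℂ f z)
    (hb : ∀ z, z.im = a → ‖f z‖ ≤ K * (1 + z.re ^ 2) ^ 2) :
    Integrable fun x : ℝ => f (x + a * I) * Ψ (x + a * I) := by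
  obtain ⟨C, hC⟩ := hΨ.exists_norm_le
  exact integrable_horizontal (f := fun z => f z * Ψ z)
    (fun z hz => (hd z hz).mul (hΨ.differentiable z))
    fun z hz => norm_mul_le_div_one_add_sq (hb z hz) (hC z (hz ▸ ha))

lemma integral_sub_I_mul_eq (hΨ : IsTestFunction Ψ)
    (hd : ∀ z, z.im ∈ Icc (-1 : ℝ) 0 → DifferentiableAt ℂ f z)
    (hb : ∀ z, z.im ∈ Icc (-1 : ℝ) 0 → ‖f z‖ ≤ K * (1 + z.re ^ 2) ^ 2) :
    ∫ x : ℝ, f (x - I) * Ψ (x - I) = ∫ x : ℝ, f x * Ψ x := by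
  obtain ⟨C, hC⟩ := hΨ.exists_norm_le
  have hshift := integral_horizontal_eq_integral_horizontal (f := fun z => f z * Ψ z)
    (a := -1) (b := 0) (by norm_num) (fun z hz => (hd z hz).mul (hΨ.differentiable z))
    fun z hz => norm_mul_le_div_one_add_sq (hb z hz)
      (hC z (abs_le.mpr ⟨hz.1, hz.2.trans zero_le_one⟩))
  simpa [sub_eq_add_neg] using hshift

lemma integrable_mul (hΨ : IsTestFunction Ψ) (hd : ∀ z, z.im = 0 → DifferentiableAt ℂ f z)
    (hb : ∀ z, z.im = 0 → ‖f z‖ ≤ K * (1 + z.re ^ 2) ^ 2) :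
    Integrable fun x : ℝ => f x * Ψ x := by
  simpa using hΨ.integrable_horizontal_mul (a := 0) (by simp) hd hb

lemma integrable_sub_I_mul (hΨ : IsTestFunction Ψ) (hd : ∀ z, z.im = -1 → DifferentiableAt ℂ f z)
    (hb : ∀ z, z.im = -1 → ‖f z‖ ≤ K * (1 + z.re ^ 2) ^ 2) :
    Integrable fun x : ℝ => f (x - I) * Ψ (x - I) := by
  simpa [sub_eq_add_neg] using hΨ.integrable_horizontal_mul (a := -1) (by simp) hd hb

end IsTestFunction

section SumOverZeros

variable {ι : Type*} {F Ψ : ℂ → ℂ} {p : ι → ℝ} {K : ℝ → ℝ}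

lemma countable_of_finite_norm_le {u : ι → ℂ} (hfin : ∀ R : ℝ, {i | ‖u i‖ ≤ R}.Finite) :
    Countable ι := by
  rw [← Set.countable_univ_iff]
  refine (Set.countable_iUnion fun n : ℕ => (hfin n).countable).mono fun i _ => ?_
  exact Set.mem_iUnion.mpr (exists_nat_ge ‖u i‖)

lemma exists_eq_sub_I_of_im_eq {z : ℂ} (hz : z.im = -1) : ∃ x : ℝ, z = x - I :=
  ⟨z.re, Complex.ext (by simp) (by simp [hz])⟩

theorem IsZeroEnumeration.hasSum_apply (hp : IsZeroEnumeration F (fun i => (p i : ℂ)))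
    (hF : Differentiable ℂ F) (heven : ∀ z, F (-z) = F z)
    (hfin : ∀ R : ℝ, {i | ‖(p i : ℂ)‖ ≤ R}.Finite) (hK : K =o[atTop] fun R => R ^ 2)
    (hgrowth : ∀ᶠ R in atTop, ∀ z, ‖z‖ = R → ‖F z‖ ≤ Real.exp (K R)) (hΨ : IsTestFunction Ψ) :
    HasSum (fun i => π * I * Ψ (p i)) (∫ x : ℝ, logDeriv F (x - I) * Ψ (x - I)) := by
  obtain ⟨C, hC⟩ := hΨ.exists_norm_le_div_one_add_sq
  obtain ⟨C', hC'⟩ := hΨ.exists_norm_le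
  set f : ι → ℝ → ℂ := fun i x => (x - I) / ((x - I) ^ 2 - (p i : ℂ) ^ 2) * Ψ (x - I)
  have hf (i : ι) : Integrable (f i) :=
    integrable_div_sub_I_sq_sub_sq_mul hΨ.differentiable (fun z hz => hC z (by simp [hz])) (by simp)
  have hnorm : Summable fun i => ∫ x, ‖f i x‖ := by
    refine Summable.of_nonneg_of_le (fun i => integral_nonneg fun x => norm_nonneg _) (fun i => ?_)
      ((hp.summable_one_div_one_add_sq hF heven hfin hK hgrowth).mul_left
        (8 * C' * ∫ x : ℝ, (1 + x ^ 2)⁻¹))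
    rw [mul_right_comm, ← integral_const_mul]
    refine integral_mono (hf i).norm (integrable_inv_one_add_sq.const_mul _) fun x => ?_
    refine (norm_mul_le_div_one_add_sq (x := x) (K := 8 * (1 / (1 + p i ^ 2)))
      (C := C') ?_ ?_).trans (le_of_eq (by ring))
    · simpa [mul_right_comm] using norm_div_sub_I_sq_sub_sq_le x (p i)
    · simpa using hC' (x - I) (by simp)
  have : Countable ι := countable_of_finite_norm_le hfin
  have hpole (i : ι) : ∫ x, f i x = π * I * Ψ (p i) :=
    integral_div_sub_I_sq_sub_sq_mul hΨ.differentiable hΨ.even hC (by simp)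
  have hpartial (x : ℝ) : ∑' i, f i x = logDeriv F (x - I) * Ψ (x - I) :=
    ((hp.hasSum_div_sub_I_sq_sub_sq hF heven hfin hK hgrowth x).mul_right _).tsum_eq
  simpa only [hpole, hpartial] using hasSum_integral_of_summable_integral_norm hf hnorm

end SumOverZeros

section SumOverPrimes

variable {s : ℂ}

lemma hasSum_vonMangoldt_mul_cpow_neg (hs : 1 < s.re) :
    HasSum (fun n : ℕ => (ArithmeticFunction.vonMangoldt n : ℂ) * (n : ℂ) ^ (-s))
      (-logDeriv riemannZeta s) := by
  have hsum := (ArithmeticFunction.LSeriesSummable_vonMangoldt hs).LSeriesHasSum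
  rw [ArithmeticFunction.LSeries_vonMangoldt_eq_deriv_riemannZeta_div hs, neg_div,
    LSeriesHasSum] at hsum
  convert! hsum using 1
  ext n
  rcases eq_or_ne n 0 with rfl | hn
  · simp
  · rw [LSeries.term_of_ne_zero hn, Complex.cpow_neg, div_eq_mul_inv]

lemma norm_vonMangoldt_mul_cpow_neg (n : ℕ) (s : ℂ) :
    ‖(ArithmeticFunction.vonMangoldt n : ℂ) * (n : ℂ) ^ (-s)‖ =
      ArithmeticFunction.vonMangoldt n * (n : ℝ) ^ (-s.re) := by
  rcases eq_or_ne n 0 with rfl | hn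
  · simp
  · rw [norm_mul, Complex.norm_natCast_cpow_of_pos (Nat.pos_of_ne_zero hn), Complex.norm_real,
      Real.norm_of_nonneg ArithmeticFunction.vonMangoldt_nonneg, neg_re]

lemma summable_vonMangoldt_mul_rpow_neg {σ : ℝ} (hσ : 1 < σ) :
    Summable fun n : ℕ => ArithmeticFunction.vonMangoldt n * (n : ℝ) ^ (-σ) :=
  (hasSum_vonMangoldt_mul_cpow_neg (s := σ) (by simpa)).summable.norm.congr fun n => by
    rw [norm_vonMangoldt_mul_cpow_neg, ofReal_re]

lemma norm_logDeriv_riemannZeta_le (hs : 1 < s.re) : ‖logDeriv riemannZeta s‖ ≤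
    ∑' n : ℕ, ArithmeticFunction.vonMangoldt n * (n : ℝ) ^ (-s.re) := by
  rw [← norm_neg, ← (hasSum_vonMangoldt_mul_cpow_neg hs).tsum_eq]
  exact tsum_of_norm_bounded (summable_vonMangoldt_mul_rpow_neg hs).hasSum
    fun n => (norm_vonMangoldt_mul_cpow_neg n s).le

end SumOverPrimes

section ExplicitFormula

variable {Ψ : ℂ → ℂ}

lemma exists_norm_logDeriv_Gammaℝ_half_add_I_mul_le :
    ∃ K, ∀ z : ℂ, z.im ∈ Icc (-1 : ℝ) 0 →
      ‖logDeriv Gammaℝ (1 / 2 + I * z)‖ ≤ K * (1 + z.re ^ 2) ^ 2 := by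
  obtain ⟨C, hC⟩ := exists_norm_logDeriv_Gammaℝ_le (δ := 1 / 2) (by norm_num) (by norm_num)
  refine ⟨C * 4, fun z hz => ?_⟩
  have hle := hC (1 / 2 + I * z) (by simp [hz.2])
  have hC0 : 0 ≤ C := nonneg_of_mul_nonneg_left ((norm_nonneg _).trans hle) (by positivity)
  have hnorm : ‖(1 / 2 + I * z : ℂ)‖ ≤ 1 / 2 + (|z.re| + 1) := by
    refine (norm_add_le _ _).trans ?_
    have him : |z.im| ≤ 1 := abs_le.mpr ⟨hz.1, hz.2.trans zero_le_one⟩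
    have := norm_le_abs_re_add_abs_im z
    simp only [norm_mul, norm_I, one_mul, norm_div, norm_one, Complex.norm_ofNat]
    linarith
  rw [mul_assoc]
  refine hle.trans (mul_le_mul_of_nonneg_left ?_ hC0)
  nlinarith [sq_nonneg (|z.re| - 1), sq_abs z.re, sq_nonneg (z.re ^ 2), sq_nonneg z.re]

lemma differentiableAt_logDeriv_Gammaℝ_half_add_I_mul {z : ℂ} (hz : z.im ≤ 0) :
    DifferentiableAt ℂ (fun z => logDeriv Gammaℝ (1 / 2 + I * z)) z := by
  have hre : 0 < (1 / 2 + I * z).re := by simp; linarith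
  exact (differentiableAt_logDeriv (analyticAt_Gammaℝ hre)
    (Gammaℝ_ne_zero_of_re_pos hre)).comp z (by fun_prop)

lemma IsTestFunction.integrable_logDeriv_Gammaℝ_mul (hΨ : IsTestFunction Ψ) :
    Integrable fun x : ℝ => logDeriv Gammaℝ (1 / 2 + I * x) * Ψ x := by
  obtain ⟨K, hK⟩ := exists_norm_logDeriv_Gammaℝ_half_add_I_mul_le
  exact hΨ.integrable_mul (fun z hz => differentiableAt_logDeriv_Gammaℝ_half_add_I_mul hz.le)
    fun z hz => hK z (by simp [hz])

lemma half_add_I_mul_sub_I_re (x : ℝ) : (1 / 2 + I * ((x : ℂ) - I)).re = 3 / 2 := by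
  simp; norm_num

lemma IsTestFunction.integrable_logDeriv_riemannZeta_mul (hΨ : IsTestFunction Ψ) :
    Integrable fun x : ℝ => logDeriv riemannZeta (1 / 2 + I * (x - I)) * Ψ (x - I) := by
  set K := ∑' n : ℕ, ArithmeticFunction.vonMangoldt n * (n : ℝ) ^ (-(3 / 2) : ℝ) with hK
  refine hΨ.integrable_sub_I_mul (f := fun z => logDeriv riemannZeta (1 / 2 + I * z)) (K := K)
    (fun z hz => ?_) fun z hz => ?_ <;> obtain ⟨x, rfl⟩ := exists_eq_sub_I_of_im_eq hz
  all_goals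
    have hre : 1 < (1 / 2 + I * ((x : ℂ) - I)).re := by rw [half_add_I_mul_sub_I_re]; norm_num
  · have hd := differentiableAt_logDeriv
      (analyticAt_riemannZeta fun h => by rw [h, one_re] at hre; exact hre.false)
      (riemannZeta_ne_zero_of_one_lt_re hre)
    exact hd.comp (f := fun z : ℂ => 1 / 2 + I * z) ((x : ℂ) - I) (by fun_prop)
  · have hle := norm_logDeriv_riemannZeta_le hre
    rw [half_add_I_mul_sub_I_re, ← hK] at hle
    exact hle.trans (le_mul_of_one_le_right ((norm_nonneg _).trans hle)
      (one_le_pow₀ (le_add_of_nonneg_right (sq_nonneg _))))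

lemma IsTestFunction.integral_cpow_mul_eq (hΨ : IsTestFunction Ψ) {n : ℕ} (hn : n ≠ 0) :
    ∫ x : ℝ, (n : ℂ) ^ (-(1 / 2 + I * (x - I))) * Ψ (x - I) =
      ∫ x : ℝ, (n : ℂ) ^ (-(1 / 2 + I * x)) * Ψ x := by
  refine hΨ.integral_sub_I_mul_eq (f := fun z => (n : ℂ) ^ (-(1 / 2 + I * z))) (K := 1)
    (fun z _ => .const_cpow (by fun_prop) (.inl (Nat.cast_ne_zero.mpr hn))) fun z hz => ?_
  rw [Complex.norm_natCast_cpow_of_pos (Nat.pos_of_ne_zero hn), one_mul]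
  refine (Real.rpow_le_one_of_one_le_of_nonpos (Nat.one_le_cast.mpr (Nat.one_le_iff_ne_zero.mpr hn))
    ?_).trans (one_le_pow₀ (le_add_of_nonneg_right (sq_nonneg _)))
  simp
  linarith [hz.2]

theorem IsTestFunction.hasSum_vonMangoldt_mul_integral (hΨ : IsTestFunction Ψ) :
    HasSum (fun n : ℕ => (ArithmeticFunction.vonMangoldt n : ℂ) *
        ∫ x : ℝ, (n : ℂ) ^ (-(1 / 2 + I * x)) * Ψ x)
      (-∫ x : ℝ, logDeriv riemannZeta (1 / 2 + I * (x - I)) * Ψ (x - I)) := by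
  have hre (x : ℝ) : 1 < (1 / 2 + I * ((x : ℂ) - I)).re := by
    rw [half_add_I_mul_sub_I_re]; norm_num
  set f : ℕ → ℝ → ℂ := fun n x => (ArithmeticFunction.vonMangoldt n : ℂ) *
    (n : ℂ) ^ (-(1 / 2 + I * ((x : ℂ) - I))) * Ψ (x - I)
  have hΨint : Integrable fun x : ℝ => Ψ (x - I) := by
    simpa using hΨ.integrable_sub_I_mul (f := 1) (K := 1) (fun z _ => differentiableAt_const 1)
      fun z _ => by
        rw [Pi.one_apply, norm_one, one_mul]
        exact one_le_pow₀ (le_add_of_nonneg_right (sq_nonneg _))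
  have hnorm (n : ℕ) (x : ℝ) : ‖f n x‖ =
      ArithmeticFunction.vonMangoldt n * (n : ℝ) ^ (-(3 / 2) : ℝ) * ‖Ψ (x - I)‖ := by
    rw [norm_mul, norm_vonMangoldt_mul_cpow_neg, half_add_I_mul_sub_I_re]
  have hintegrable (n : ℕ) : Integrable (f n) := by
    rcases eq_or_ne n 0 with rfl | hn
    · simp [f]
    refine (hΨint.norm.const_mul _).mono' ?_ (.of_forall fun x => (hnorm n x).le)
    refine Continuous.aestronglyMeasurable (.mul (continuous_const.mul ?_)
      (hΨ.differentiable.continuous.comp (by fun_prop)))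
    exact .const_cpow (by fun_prop) (.inl (Nat.cast_ne_zero.mpr hn))
  have hsum : Summable fun n => ∫ x, ‖f n x‖ := by
    simp_rw [hnorm, integral_const_mul]
    exact (summable_vonMangoldt_mul_rpow_neg (by norm_num)).mul_right _
  have hseries (x : ℝ) : ∑' n, f n x =
      -(logDeriv riemannZeta (1 / 2 + I * (x - I)) * Ψ (x - I)) := by
    rw [← neg_mul]
    exact ((hasSum_vonMangoldt_mul_cpow_neg (hre x)).mul_right _).tsum_eq
  have hterm (n : ℕ) : ∫ x, f n x = (ArithmeticFunction.vonMangoldt n : ℂ) *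
      ∫ x : ℝ, (n : ℂ) ^ (-(1 / 2 + I * x)) * Ψ x := by
    rcases eq_or_ne n 0 with rfl | hn
    · simp [f]
    · simp only [f, mul_assoc, integral_const_mul, hΨ.integral_cpow_mul_eq hn]
  simpa only [hterm, hseries, integral_neg] using
    hasSum_integral_of_summable_integral_norm hintegrable hsum

lemma IsTestFunction.integral_logDeriv_Xi_mul (hΨ : IsTestFunction Ψ) :
    ∫ x : ℝ, logDeriv Xi (x - I) * Ψ (x - I) = I * (2 * π * Ψ (I / 2) +
      (∫ x : ℝ, logDeriv Gammaℝ (1 / 2 + I * x) * Ψ x) -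
      ∑' n : ℕ, (ArithmeticFunction.vonMangoldt n : ℂ) *
        ∫ x : ℝ, (n : ℂ) ^ (-(1 / 2 + I * x)) * Ψ x) := by
  obtain ⟨C, hC⟩ := hΨ.exists_norm_le_div_one_add_sq
  obtain ⟨K, hK⟩ := exists_norm_logDeriv_Gammaℝ_half_add_I_mul_le
  have him (x : ℝ) : ((x : ℂ) - I).im < -(1 / 2) := by simp; norm_num
  have hpole := integrable_div_sub_I_sq_sub_sq_mul hΨ.differentiable 
    (fun z hz => hC z (by simp [hz])) (p := I / 2) (by simp; norm_num)
  have hΓ : Integrable fun x : ℝ => logDeriv Gammaℝ (1 / 2 + I * (x - I)) * Ψ (x - I) :=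
    hΨ.integrable_sub_I_mul (f := fun z => logDeriv Gammaℝ (1 / 2 + I * z))
      (fun z hz => differentiableAt_logDeriv_Gammaℝ_half_add_I_mul (by linarith))
      fun z hz => hK z (by simp [hz])
  simp_rw [logDeriv_Xi_of_im_lt (him _), add_mul, mul_assoc]
  rw [integral_add _ (hΨ.integrable_logDeriv_riemannZeta_mul.const_mul I),
    integral_add (hpole.const_mul 2) (hΓ.const_mul I), integral_const_mul, integral_const_mul,
    integral_const_mul, integral_div_sub_I_sq_sub_sq_mul hΨ.differentiable hΨ.even hC
      (by simp; norm_num),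
    hΨ.integral_sub_I_mul_eq (f := fun z => logDeriv Gammaℝ (1 / 2 + I * z))
      (fun z hz => differentiableAt_logDeriv_Gammaℝ_half_add_I_mul hz.2) hK,
    hΨ.hasSum_vonMangoldt_mul_integral.tsum_eq]
  · ring
  · exact (hpole.const_mul 2).add (hΓ.const_mul I)

section Ordinates

variable {m : ℕ} {γ : ℕ → ℝ}

lemma inr_inl_injective {α β γ : Type*} :
    (fun n => Sum.inr (Sum.inl n) : β → α ⊕ (β ⊕ γ)).Injective :=
  Sum.inr_injective.comp Sum.inl_injective

lemma hasSum_symmetrize {f : ℝ → ℂ} {a : ℂ} (hf : ∀ x, f (-x) = f x)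
    (h : HasSum (fun i => f (symmetrize m γ i)) a) :
    HasSum (fun n => 2 * f (γ n)) (a - m * f 0) := by
  have hγ : Summable fun n => f (γ n) :=
    h.summable.comp_injective (inr_inl_injective (α := Fin m) (γ := ℕ))
  have hzero : HasSum (fun _ : Fin m => f 0) (m * f 0) := by
    simpa using hasSum_fintype fun _ : Fin m => f 0
  have hneg : HasSum (fun n => f (-γ n)) (∑' n, f (γ n)) := by simpa only [hf] using hγ.hasSum
  have ha : a = m * f 0 + (∑' n, f (γ n) + ∑' n, f (γ n)) :=
    h.unique (HasSum.sum (f := fun i => f (symmetrize m γ i)) hzero (HasSum.sum hγ.hasSum hneg))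
  rw [ha, add_sub_cancel_left, ← two_mul]
  exact hγ.hasSum.mul_left 2

lemma finite_norm_symmetrize_le (hpos : ∀ n, 0 < γ n) (htop : Tendsto γ atTop atTop) (R : ℝ) :
    {i | ‖(symmetrize m γ i : ℂ)‖ ≤ R}.Finite := by
  simpa only [Complex.norm_real, Real.norm_eq_abs] using finite_abs_symmetrize_le hpos htop R

theorem summable_one_div_one_add_ordinate_sq
    (hp : IsZeroEnumeration Xi (fun i => (symmetrize m γ i : ℂ))) (hpos : ∀ n, 0 < γ n)
    (htop : Tendsto γ atTop atTop) : Summable fun n => 1 / (1 + γ n ^ 2) := by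
  obtain ⟨K, hK, hgrowth⟩ := exists_isLittleO_sq_norm_Xi_le_exp
  have hsum := hp.summable_one_div_one_add_sq differentiable_Xi Xi_neg
    (finite_norm_symmetrize_le hpos htop) hK hgrowth
  have hγ := hsum.comp_injective (inr_inl_injective (α := Fin m))
  exact hγ

/-- The Riemann–Weil explicit formula. -/
theorem IsTestFunction.hasSum_ordinate (hΨ : IsTestFunction Ψ)
    (hp : IsZeroEnumeration Xi (fun i => (symmetrize m γ i : ℂ))) (hpos : ∀ n, 0 < γ n)
    (htop : Tendsto γ atTop atTop) :
    HasSum (fun n => 2 * π * Ψ (γ n)) (2 * π * Ψ (I / 2) - π * m * Ψ 0 +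
      (∫ x : ℝ, logDeriv Gammaℝ (1 / 2 + I * x) * Ψ x) -
      ∑' n : ℕ, (ArithmeticFunction.vonMangoldt n : ℂ) *
        ∫ x : ℝ, (n : ℂ) ^ (-(1 / 2 + I * x)) * Ψ x) := by
  obtain ⟨K, hK, hgrowth⟩ := exists_isLittleO_sq_norm_Xi_le_exp
  have hzeros := hp.hasSum_apply differentiable_Xi Xi_neg (finite_norm_symmetrize_le hpos htop) hK
    hgrowth hΨ
  rw [hΨ.integral_logDeriv_Xi_mul] at hzeros
  have hγ := (hasSum_symmetrize (f := fun x : ℝ => π * I * Ψ x)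
    (fun x => by rw [ofReal_neg, hΨ.even]) hzeros).mul_left (-I)
  convert! hγ using 1
  · ext n
    linear_combination (2 * π * Ψ (γ n)) * I_sq
  · simp only [ofReal_zero]
    linear_combination ((2 * π * Ψ (I / 2) - π * m * Ψ 0 +
      (∫ x : ℝ, logDeriv Gammaℝ (1 / 2 + I * x) * Ψ x) -
      ∑' n : ℕ, (ArithmeticFunction.vonMangoldt n : ℂ) *
        ∫ x : ℝ, (n : ℂ) ^ (-(1 / 2 + I * x)) * Ψ x)) * I_sq

end Ordinates

end ExplicitFormula

/-! ### Gaussian-weighted Dirichlet polynomials -/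

section DirichletPolynomial

/-- The Dirichlet polynomial `∑_{k ≤ N} a k k^{ix}`. -/
def dirichletPoly (a : ℕ → ℝ) (N : ℕ) (x : ℝ) : ℂ :=
  ∑ k ∈ Finset.Icc 1 N, (a k : ℂ) * cexp (I * x * (Real.log k : ℂ))

/-- The entire function agreeing with `‖dirichletPoly a N x‖ ^ 2` for real `x`. -/
def dirichletPolySq (a : ℕ → ℝ) (N : ℕ) (z : ℂ) : ℂ :=
  ∑ k ∈ Finset.Icc 1 N, ∑ m ∈ Finset.Icc 1 N,
    ((a k : ℂ) * (a m : ℂ)) * cexp (I * z * ((Real.log k - Real.log m : ℝ) : ℂ))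

/-- The unnormalised Gaussian of mean `T` and standard deviation `H`. -/
def gaussianBump (T H : ℝ) (z : ℂ) : ℂ := cexp (-(z - T) ^ 2 / (2 * (H : ℂ) ^ 2))

/-- The total mass of `gaussianBump T H` on the real line. -/
def gaussianMass (H : ℝ) : ℝ := √(2 * π) * H

/-- The entire weight `|A(z)|² exp(-(z - T)² / 2H²)`, where `A` is the Dirichlet polynomial with
coefficients `a`. -/
def weight (a : ℕ → ℝ) (N : ℕ) (T H : ℝ) (z : ℂ) : ℂ := dirichletPolySq a N z * gaussianBump T H z

/-- The restriction of `weight` to the real line, as a real function. -/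
def realWeight (a : ℕ → ℝ) (N : ℕ) (T H x : ℝ) : ℝ :=
  ‖dirichletPoly a N x‖ ^ 2 * Real.exp (-(x - T) ^ 2 / (2 * H ^ 2))

variable {a : ℕ → ℝ} {N : ℕ} {T H : ℝ}

lemma dirichletPolySq_ofReal (x : ℝ) :
    dirichletPolySq a N x = ((‖dirichletPoly a N x‖ ^ 2 : ℝ) : ℂ) := by
  rw [← Complex.normSq_eq_norm_sq, ← Complex.mul_conj, dirichletPoly, dirichletPolySq, map_sum,
    Finset.sum_mul_sum]
  refine Finset.sum_congr rfl fun k _ => Finset.sum_congr rfl fun m _ => ?_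
  rw [map_mul, Complex.conj_ofReal, ← Complex.exp_conj, map_mul, map_mul, Complex.conj_I,
    Complex.conj_ofReal, Complex.conj_ofReal, mul_mul_mul_comm, ← Complex.exp_add]
  congr 2
  push_cast
  ring

lemma weight_ofReal (a : ℕ → ℝ) (N : ℕ) (T H x : ℝ) :
    weight a N T H x = realWeight a N T H x := by
  rw [weight, realWeight, dirichletPolySq_ofReal, gaussianBump]
  push_cast
  rfl

lemma realWeight_nonneg (a : ℕ → ℝ) (N : ℕ) (T H x : ℝ) : 0 ≤ realWeight a N T H x := by
  unfold realWeight
  positivity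

lemma differentiable_weight (a : ℕ → ℝ) (N : ℕ) (T H : ℝ) :
    Differentiable ℂ (weight a N T H) := by
  unfold weight dirichletPolySq gaussianBump
  fun_prop

lemma abs_log_sub_log_le {k m : ℕ} (hk : k ∈ Finset.Icc 1 N) (hm : m ∈ Finset.Icc 1 N) :
    |Real.log k - Real.log m| ≤ Real.log N := by
  have hlog {j : ℕ} (hj : j ∈ Finset.Icc 1 N) : 0 ≤ Real.log j ∧ Real.log j ≤ Real.log N := by
    obtain ⟨h1, hN⟩ := Finset.mem_Icc.1 hj
    exact ⟨Real.log_natCast_nonneg j, Real.log_le_log (by exact_mod_cast h1) (by exact_mod_cast hN)⟩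
  exact abs_sub_le_of_nonneg_of_le (hlog hk).1 (hlog hk).2 (hlog hm).1 (hlog hm).2

lemma norm_coeff_mul_coeff_le_one (ha : ∀ k, |a k| ≤ 1) (k m : ℕ) :
    ‖(a k : ℂ) * (a m : ℂ)‖ ≤ 1 := by
  rw [norm_mul, Complex.norm_real, Complex.norm_real]
  exact mul_le_one₀ (ha k) (norm_nonneg _) (ha m)

lemma norm_dirichletPolySq_le (ha : ∀ k, |a k| ≤ 1) (hN : 1 ≤ N) {z : ℂ} (hz : |z.im| ≤ 1) :
    ‖dirichletPolySq a N z‖ ≤ (N : ℝ) ^ 3 := by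
  have hterm : ∀ k ∈ Finset.Icc 1 N, ∀ m ∈ Finset.Icc 1 N,
      ‖((a k : ℂ) * (a m : ℂ)) * cexp (I * z * ((Real.log k - Real.log m : ℝ) : ℂ))‖ ≤ N := by
    intro k hk m hm
    have hre : (I * z * ((Real.log k - Real.log m : ℝ) : ℂ)).re =
        -z.im * (Real.log k - Real.log m) := by
      rw [Complex.re_mul_ofReal]
      simp
    have hexp : ‖cexp (I * z * ((Real.log k - Real.log m : ℝ) : ℂ))‖ ≤ N := by
      rw [Complex.norm_exp, hre, ← Real.exp_log (Nat.cast_pos.2 hN), Real.exp_le_exp]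
      calc -z.im * (Real.log k - Real.log m) ≤ |z.im| * |Real.log k - Real.log m| := by
            rw [← abs_neg, ← abs_mul]
            exact le_abs_self _
        _ ≤ 1 * Real.log N := by gcongr; exact abs_log_sub_log_le hk hm
        _ = Real.log N := one_mul _
    rw [norm_mul]
    exact (mul_le_mul (norm_coeff_mul_coeff_le_one ha k m) hexp (norm_nonneg _) one_pos.le).trans
      (one_mul _).le
  calc ‖dirichletPolySq a N z‖ ≤ ∑ _k ∈ Finset.Icc 1 N, ∑ _m ∈ Finset.Icc 1 N, (N : ℝ) :=
        norm_sum_le_of_le _ fun k hk => norm_sum_le_of_le _ fun m hm => hterm k hk m hm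
    _ = (N : ℝ) ^ 3 := by
        simp only [Finset.sum_const, Nat.card_Icc, nsmul_eq_mul, Nat.add_sub_cancel]
        ring

lemma norm_gaussianBump_le (hH : 1 ≤ H) {z : ℂ} (hz : |z.im| ≤ 1) :
    ‖gaussianBump T H z‖ ≤ 2 * Real.exp (-(z.re - T) ^ 2 / (2 * H ^ 2)) := by
  have hre : (-(z - T) ^ 2 / (2 * (H : ℂ) ^ 2)).re =
      z.im ^ 2 / (2 * H ^ 2) + -(z.re - T) ^ 2 / (2 * H ^ 2) := by
    rw [show 2 * (H : ℂ) ^ 2 = ((2 * H ^ 2 : ℝ) : ℂ) by push_cast; rfl, Complex.div_ofReal_re,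
      ← add_div]
    congr 1
    simp [pow_two]
    ring
  have him : z.im ^ 2 / (2 * H ^ 2) ≤ 1 / 2 := by
    rw [div_le_iff₀ (by positivity)]
    nlinarith [(sq_le_one_iff_abs_le_one _).2 hz]
  rw [gaussianBump, Complex.norm_exp, hre, Real.exp_add]
  gcongr
  calc Real.exp (z.im ^ 2 / (2 * H ^ 2)) ≤ Real.exp (Real.log 2) :=
        Real.exp_le_exp.2 (him.trans (by linarith [Real.log_two_gt_d9]))
    _ = 2 := Real.exp_log two_pos

lemma norm_weight_le (ha : ∀ k, |a k| ≤ 1) (hN : 1 ≤ N) (hH : 1 ≤ H) {z : ℂ} (hz : |z.im| ≤ 1) :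
    ‖weight a N T H z‖ ≤ 2 * (N : ℝ) ^ 3 * Real.exp (-(z.re - T) ^ 2 / (2 * H ^ 2)) := by
  rw [weight, norm_mul]
  refine (mul_le_mul (norm_dirichletPolySq_le ha hN hz) (norm_gaussianBump_le hH hz)
    (norm_nonneg _) (by positivity)).trans (le_of_eq (by ring))

lemma one_add_sq_le (x y : ℝ) : 1 + x ^ 2 ≤ 2 * (1 + y ^ 2) * (1 + (x - y) ^ 2) := by
  nlinarith [sq_nonneg (x - 2 * y), sq_nonneg (y * (x - y))]

lemma one_add_sq_le_mul_exp (hH : 1 ≤ H) (x : ℝ) :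
    1 + x ^ 2 ≤ 12 * (1 + T ^ 2) * H ^ 2 * Real.exp ((x - T) ^ 2 / (6 * H ^ 2)) := by
  have hexp : 1 + (x - T) ^ 2 ≤ 6 * H ^ 2 * Real.exp ((x - T) ^ 2 / (6 * H ^ 2)) := by
    calc 1 + (x - T) ^ 2 ≤ 6 * H ^ 2 * ((x - T) ^ 2 / (6 * H ^ 2) + 1) := by
          rw [mul_add, mul_div_cancel₀ _ (by positivity)]
          nlinarith
      _ ≤ _ := by gcongr; exact Real.add_one_le_exp _
  calc 1 + x ^ 2 ≤ 2 * (1 + T ^ 2) * (1 + (x - T) ^ 2) := one_add_sq_le x T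
    _ ≤ 2 * (1 + T ^ 2) * (6 * H ^ 2 * Real.exp ((x - T) ^ 2 / (6 * H ^ 2))) := by gcongr
    _ = _ := by ring

lemma exists_norm_weight_le (ha : ∀ k, |a k| ≤ 1) (hN : 1 ≤ N) (hH : 1 ≤ H) :
    ∃ C, 0 ≤ C ∧ ∀ z : ℂ, |z.im| ≤ 1 → ‖weight a N T H z‖ ≤ C / (1 + z.re ^ 2) ^ 3 := by
  refine ⟨2 * (N : ℝ) ^ 3 * (12 * (1 + T ^ 2) * H ^ 2) ^ 3, by positivity, fun z hz => ?_⟩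
  refine (norm_weight_le ha hN hH hz).trans ?_
  rw [le_div_iff₀ (by positivity), mul_assoc]
  gcongr
  set v := (z.re - T) ^ 2
  have hcancel : -v / (2 * H ^ 2) + ((3 : ℕ) : ℝ) * (v / (6 * H ^ 2)) = 0 := by
    push_cast
    field_simp
    ring
  calc Real.exp (-v / (2 * H ^ 2)) * (1 + z.re ^ 2) ^ 3
      ≤ Real.exp (-v / (2 * H ^ 2)) *
          (12 * (1 + T ^ 2) * H ^ 2 * Real.exp (v / (6 * H ^ 2))) ^ 3 := by
        gcongr
        exact one_add_sq_le_mul_exp hH z.re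
    _ = (12 * (1 + T ^ 2) * H ^ 2) ^ 3 *
          (Real.exp (-v / (2 * H ^ 2)) * Real.exp (v / (6 * H ^ 2)) ^ 3) := by ring
    _ = (12 * (1 + T ^ 2) * H ^ 2) ^ 3 := by
        rw [← Real.exp_nat_mul, ← Real.exp_add, hcancel, Real.exp_zero, mul_one]

/-- The size of `weight a N T H` at points whose distance from `T` is at least `T / 4`, relative to
`1 / (1 + x²)`. -/
def weightTail (N : ℕ) (T H : ℝ) : ℝ :=
  280 * (N : ℝ) ^ 3 * H ^ 2 * Real.exp (-(T ^ 2 / (64 * H ^ 2)))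

lemma weightTail_nonneg (N : ℕ) (T H : ℝ) : 0 ≤ weightTail N T H := by
  unfold weightTail
  positivity

lemma norm_weight_le_weightTail (ha : ∀ k, |a k| ≤ 1) (hN : 1 ≤ N) (hH : 1 ≤ H) (hT : 4 ≤ T)
    {z : ℂ} (hz : |z.im| ≤ 1) (hr : T / 4 ≤ |z.re - T|) :
    ‖weight a N T H z‖ ≤ weightTail N T H / (1 + z.re ^ 2) := by
  refine (norm_weight_le ha hN hH hz).trans ?_
  rw [weightTail, le_div_iff₀ (by positivity)]
  set v := (z.re - T) ^ 2 with hv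
  set u := v / (2 * H ^ 2) with hu
  have hfar : T ^ 2 / 16 ≤ v := by
    rw [hv, ← sq_abs (z.re - T)]
    exact (by ring : T ^ 2 / 16 = (T / 4) ^ 2).trans_le (by gcongr)
  have hre : 1 + z.re ^ 2 ≤ 35 * v := by nlinarith [sq_nonneg (z.re - 2 * T)]
  have hvu : v = 2 * H ^ 2 * u := by rw [hu]; field_simp
  have hu_le : u ≤ 2 * Real.exp (u / 2) := by linarith [Real.add_one_le_exp (u / 2)]
  have hu_ge : T ^ 2 / (64 * H ^ 2) ≤ u / 2 := by
    rw [hu, div_div, div_le_div_iff₀ (by positivity) (by positivity)]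
    nlinarith [mul_le_mul_of_nonneg_right hfar (sq_nonneg H)]
  rw [neg_div, ← hu]
  calc 2 * (N : ℝ) ^ 3 * Real.exp (-u) * (1 + z.re ^ 2)
      ≤ 2 * (N : ℝ) ^ 3 * Real.exp (-u) * (35 * v) := by gcongr
    _ = 140 * (N : ℝ) ^ 3 * H ^ 2 * (Real.exp (-u) * u) := by rw [hvu]; ring
    _ ≤ 140 * (N : ℝ) ^ 3 * H ^ 2 * (Real.exp (-u) * (2 * Real.exp (u / 2))) := by gcongr
    _ = 280 * (N : ℝ) ^ 3 * H ^ 2 * Real.exp (-(u / 2)) := by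
        rw [show -(u / 2) = -u + u / 2 by ring, Real.exp_add]
        ring
    _ ≤ _ := by gcongr

lemma integral_exp_mul_gaussianBump (hH : 0 < H) (T ℓ : ℝ) :
    ∫ x : ℝ, cexp (I * x * (ℓ : ℂ)) * gaussianBump T H x =
      ((gaussianMass H * Real.exp (-(H ^ 2 * ℓ ^ 2 / 2)) : ℝ) : ℂ) * cexp (I * T * (ℓ : ℂ)) := by
  set b : ℝ := 1 / (2 * H ^ 2) with hb
  have hb_pos : 0 < b := by rw [hb]; positivity
  have hHC : (H : ℂ) ≠ 0 := ofReal_ne_zero.2 hH.ne'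
  have hshift (x : ℝ) :
      cexp (I * ((x + T : ℝ) : ℂ) * (ℓ : ℂ)) * gaussianBump T H ((x + T : ℝ) : ℂ) =
      cexp (I * T * (ℓ : ℂ)) * (cexp (I * ℓ * x) * cexp (-b * x ^ 2)) := by
    simp only [gaussianBump, ← Complex.exp_add]
    congr 1
    rw [hb]
    push_cast
    ring
  have hmass : ((π : ℂ) / (b : ℂ)) ^ (1 / 2 : ℂ) = gaussianMass H := by
    have hquot : π / b = (2 * π) * H ^ 2 := by rw [hb]; field_simp
    rw [← Complex.ofReal_div, show (1 / 2 : ℂ) = ((1 / 2 : ℝ) : ℂ) by push_cast; rfl,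
      ← Complex.ofReal_cpow (by positivity), ← Real.sqrt_eq_rpow, gaussianMass, hquot,
      Real.sqrt_mul (by positivity), Real.sqrt_sq hH.le]
  rw [← integral_add_right_eq_self (fun x : ℝ => cexp (I * x * (ℓ : ℂ)) * gaussianBump T H x) T]
  simp_rw [hshift]
  rw [integral_const_mul, fourierIntegral_gaussian (b := (b : ℂ)) (by simpa using hb_pos) (ℓ : ℂ),
    hmass, mul_comm]
  push_cast
  congr 3
  rw [hb]
  push_cast
  field_simp
  norm_num

lemma integrable_exp_mul_gaussianBump (hH : 0 < H) (T ℓ : ℝ) :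
    Integrable fun x : ℝ => cexp (I * x * (ℓ : ℂ)) * gaussianBump T H x := by
  have hHC : (H : ℂ) ≠ 0 := ofReal_ne_zero.2 hH.ne'
  have hb : 0 < (((1 / (2 * H ^ 2) : ℝ) : ℂ)).re := by
    rw [Complex.ofReal_re]
    positivity
  refine (integrable_cexp_quadratic hb (I * ℓ + T / (H : ℂ) ^ 2)
    (-(T : ℂ) ^ 2 / (2 * (H : ℂ) ^ 2))).congr (Eventually.of_forall fun x => ?_)
  simp only [gaussianBump, ← Complex.exp_add]
  congr 1
  push_cast
  field_simp
  ring

lemma one_div_add_one_le_log_sub_log {k l : ℕ} (hk : 1 ≤ k) (h : k < l) :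
    1 / ((k : ℝ) + 1) ≤ Real.log l - Real.log k := by
  have hk' : (1 : ℝ) ≤ k := by exact_mod_cast hk
  have hl : (k : ℝ) + 1 ≤ l := by exact_mod_cast h
  have hl' : (0 : ℝ) < l := by linarith
  rw [← Real.log_div hl'.ne' (by positivity)]
  calc 1 / ((k : ℝ) + 1) = 1 - k / (k + 1) := by field_simp; ring
    _ ≤ 1 - k / l := by gcongr
    _ = 1 - ((l : ℝ) / k)⁻¹ := by rw [inv_div]
    _ ≤ Real.log (l / k) := Real.one_sub_inv_le_log_of_pos (by positivity)

lemma one_div_two_mul_le_abs_log_sub_log {k l : ℕ} (hk : 1 ≤ k) (hkN : k ≤ N) (hl : 1 ≤ l)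
    (hkl : k ≠ l) : 1 / (2 * (N : ℝ)) ≤ |Real.log k - Real.log l| := by
  have hN : (1 : ℝ) ≤ N := by exact_mod_cast hk.trans hkN
  rcases lt_or_gt_of_ne hkl with h | h
  · have hkN' : (k : ℝ) ≤ N := by exact_mod_cast hkN
    rw [abs_sub_comm]
    refine le_trans ?_ ((one_div_add_one_le_log_sub_log hk h).trans (le_abs_self _))
    exact one_div_le_one_div_of_le (by positivity) (by linarith)
  · have hlN : (l : ℝ) + 1 ≤ N := by exact_mod_cast h.trans_le hkN
    refine le_trans ?_ ((one_div_add_one_le_log_sub_log hl h).trans (le_abs_self _))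
    exact one_div_le_one_div_of_le (by positivity) (by linarith)

lemma natCast_sq_eq_exp {n : ℕ} (hn : 1 ≤ n) : (n : ℝ) ^ 2 = Real.exp (2 * Real.log n) := by
  rw [two_mul, Real.exp_add, Real.exp_log (by exact_mod_cast hn), sq]

lemma exp_neg_log_sub_log_sq_le {k m n : ℕ} (hk : k ∈ Finset.Icc 1 N) (hm : m ∈ Finset.Icc 1 N)
    (hn : 1 ≤ n) (hne : k ≠ m * n) (hH : 1 ≤ H) :
    Real.exp (-(H ^ 2 * (Real.log k - Real.log m - Real.log n) ^ 2 / 2)) ≤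
      Real.exp 4 * (N : ℝ) ^ 2 * ((n : ℝ) ^ 2)⁻¹ * Real.exp (-(H ^ 2 / (16 * (N : ℝ) ^ 2))) := by
  rw [Finset.mem_Icc] at hk hm
  have hk1 : (1 : ℝ) ≤ k := by exact_mod_cast hk.1
  have hm1 : (1 : ℝ) ≤ m := by exact_mod_cast hm.1
  have : (1 : ℝ) ≤ n := by exact_mod_cast hn
  have hkN : (k : ℝ) ≤ N := by exact_mod_cast hk.2
  set ℓ := Real.log k - Real.log m - Real.log n with hℓ
  have hgap : 1 / (2 * (N : ℝ)) ≤ |ℓ| := by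
    have hℓ' : ℓ = Real.log k - Real.log ((m * n : ℕ) : ℝ) := by
      push_cast
      rw [Real.log_mul (by positivity) (by positivity), hℓ]
      ring
    rw [hℓ']
    exact one_div_two_mul_le_abs_log_sub_log hk.1 hk.2 (Nat.mul_pos hm.1 hn) hne
  have hlog : Real.log n - Real.log N ≤ |ℓ| := by
    refine le_trans ?_ (neg_le_abs ℓ)
    linarith [Real.log_le_log (by linarith) hkN, Real.log_nonneg hm1]
  have hlinear : 2 * |ℓ| ≤ H ^ 2 * ℓ ^ 2 / 4 + 4 := by
    have hsq : (H * |ℓ|) ^ 2 = H ^ 2 * ℓ ^ 2 := by rw [mul_pow, sq_abs]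
    nlinarith [le_mul_of_one_le_left (abs_nonneg ℓ) hH, sq_nonneg (H * |ℓ| / 2 - 2)]
  have hquadratic : H ^ 2 / (16 * (N : ℝ) ^ 2) ≤ H ^ 2 * ℓ ^ 2 / 4 := by
    calc H ^ 2 / (16 * (N : ℝ) ^ 2) = H ^ 2 * (1 / (2 * (N : ℝ))) ^ 2 / 4 := by field_simp; norm_num
      _ ≤ H ^ 2 * |ℓ| ^ 2 / 4 := by gcongr
      _ = H ^ 2 * ℓ ^ 2 / 4 := by rw [sq_abs]
  calc Real.exp (-(H ^ 2 * ℓ ^ 2 / 2))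
      ≤ Real.exp (4 + 2 * Real.log N + -(2 * Real.log n) + -(H ^ 2 / (16 * (N : ℝ) ^ 2))) :=
        Real.exp_le_exp.2 (by linarith)
    _ = _ := by
        rw [Real.exp_add, Real.exp_add, Real.exp_add, Real.exp_neg (2 * Real.log n),
          ← natCast_sq_eq_exp hn, ← natCast_sq_eq_exp (hk.1.trans hk.2)]

/-- The autocorrelation `∑_{m n ≤ N} a m a (m n)` of the coefficients at the ratio `n`. -/
def autocorr (a : ℕ → ℝ) (N n : ℕ) : ℝ :=
  ∑ m ∈ Finset.Icc 1 N, if m * n ≤ N then a m * a (m * n) else 0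

/-- The relative size of the off-diagonal contribution to the Fourier transform of `weight`. -/
def offDiagonal (N : ℕ) (H : ℝ) : ℝ :=
  Real.exp 4 * (N : ℝ) ^ 4 * Real.exp (-(H ^ 2 / (16 * (N : ℝ) ^ 2)))

lemma gaussianMass_nonneg (hH : 0 ≤ H) : 0 ≤ gaussianMass H := by
  unfold gaussianMass
  positivity

lemma integral_exp_neg_mul_weight (hH : 0 < H) (n : ℕ) :
    ∫ x : ℝ, cexp (-(I * x * (Real.log n : ℂ))) * weight a N T H x =
      ∑ k ∈ Finset.Icc 1 N, ∑ m ∈ Finset.Icc 1 N, ((a k : ℂ) * (a m : ℂ)) *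
        (((gaussianMass H * Real.exp (-(H ^ 2 * (Real.log k - Real.log m - Real.log n) ^ 2 / 2)) :
          ℝ) : ℂ) * cexp (I * T * ((Real.log k - Real.log m - Real.log n : ℝ) : ℂ))) := by
  have hexpand (x : ℝ) : cexp (-(I * x * (Real.log n : ℂ))) * weight a N T H x =
      ∑ k ∈ Finset.Icc 1 N, ∑ m ∈ Finset.Icc 1 N, ((a k : ℂ) * (a m : ℂ)) *
        (cexp (I * x * ((Real.log k - Real.log m - Real.log n : ℝ) : ℂ)) *
          gaussianBump T H x) := by
    simp only [weight, dirichletPolySq, ← mul_assoc, Finset.mul_sum, Finset.sum_mul]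
    refine Finset.sum_congr rfl fun k _ => Finset.sum_congr rfl fun m _ => ?_
    have hsplit : cexp (I * x * ((Real.log k - Real.log m - Real.log n : ℝ) : ℂ)) =
        cexp (-(I * x * (Real.log n : ℂ))) *
          cexp (I * x * ((Real.log k - Real.log m : ℝ) : ℂ)) := by
      rw [← Complex.exp_add]
      congr 1
      push_cast
      ring
    rw [hsplit]
    ring
  have hintegrable (c : ℂ) (ℓ : ℝ) :
      Integrable fun x : ℝ => c * (cexp (I * x * (ℓ : ℂ)) * gaussianBump T H x) :=
    (integrable_exp_mul_gaussianBump hH T ℓ).const_mul c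
  simp_rw [hexpand]
  rw [integral_finsetSum _ fun k _ => integrable_finsetSum _ fun m _ => hintegrable _ _]
  refine Finset.sum_congr rfl fun k _ => ?_
  rw [integral_finsetSum _ fun m _ => hintegrable _ _]
  simp only [integral_const_mul, integral_exp_mul_gaussianBump hH]

lemma ofReal_mul_autocorr {n : ℕ} (hn : 1 ≤ n) (K : ℝ) :
    ((K * autocorr a N n : ℝ) : ℂ) = ∑ k ∈ Finset.Icc 1 N, ∑ m ∈ Finset.Icc 1 N,
      ((a k : ℂ) * (a m : ℂ)) * (if k = m * n then (K : ℂ) else 0) := by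
  rw [Finset.sum_comm, autocorr, Finset.mul_sum]
  push_cast
  refine Finset.sum_congr rfl fun m hm => ?_
  have hmem : m * n ∈ Finset.Icc 1 N ↔ m * n ≤ N :=
    Finset.mem_Icc.trans (and_iff_right (Nat.mul_pos (Finset.mem_Icc.1 hm).1 hn))
  simp only [mul_ite, mul_zero, Finset.sum_ite_eq', hmem]
  split_ifs
  · push_cast
    ring
  · simp

lemma norm_gaussian_sub_ite_le {k m n : ℕ} (hk : k ∈ Finset.Icc 1 N) (hm : m ∈ Finset.Icc 1 N)
    (hn : 1 ≤ n) (hH : 1 ≤ H) :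
    ‖((gaussianMass H * Real.exp (-(H ^ 2 * (Real.log k - Real.log m - Real.log n) ^ 2 / 2)) :
          ℝ) : ℂ) * cexp (I * T * ((Real.log k - Real.log m - Real.log n : ℝ) : ℂ)) -
        (if k = m * n then (gaussianMass H : ℂ) else 0)‖ ≤
      gaussianMass H * (Real.exp 4 * (N : ℝ) ^ 2 * ((n : ℝ) ^ 2)⁻¹ *
        Real.exp (-(H ^ 2 / (16 * (N : ℝ) ^ 2)))) := by
  have hK : 0 ≤ gaussianMass H := gaussianMass_nonneg (zero_le_one.trans hH)
  by_cases h : k = m * n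
  · have hm0 : (m : ℝ) ≠ 0 := Nat.cast_ne_zero.2 (Nat.one_le_iff_ne_zero.1 (Finset.mem_Icc.1 hm).1)
    have hn0 : (n : ℝ) ≠ 0 := Nat.cast_ne_zero.2 (Nat.one_le_iff_ne_zero.1 hn)
    have hlog : Real.log k - Real.log m - Real.log n = 0 := by
      rw [h, Nat.cast_mul, Real.log_mul hm0 hn0]
      ring
    simp only [if_pos h, hlog, ne_eq, OfNat.ofNat_ne_zero, not_false_eq_true, zero_pow,
      mul_zero, zero_div, neg_zero, Real.exp_zero, mul_one, ofReal_zero, Complex.exp_zero, sub_self,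
      norm_zero]
    positivity
  · have hphase (x : ℝ) : ‖cexp (I * T * (x : ℂ))‖ = 1 := by simp [Complex.norm_exp]
    rw [if_neg h, sub_zero, norm_mul, hphase, mul_one,
      Complex.norm_of_nonneg (mul_nonneg hK (Real.exp_nonneg _))]
    gcongr
    exact exp_neg_log_sub_log_sq_le hk hm hn h hH

/-- The diagonal `k = m n` gives the autocorrelation; all other frequencies `log k - log m - log n`
are at least `1 / 2N` in absolute value, so the Gaussian suppresses them. -/
theorem norm_integral_exp_neg_mul_weight_sub_le (ha : ∀ k, |a k| ≤ 1) (hH : 1 ≤ H) {n : ℕ}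
    (hn : 1 ≤ n) :
    ‖(∫ x : ℝ, cexp (-(I * x * (Real.log n : ℂ))) * weight a N T H x) -
        (gaussianMass H * autocorr a N n : ℝ)‖ ≤
      gaussianMass H * offDiagonal N H * ((n : ℝ) ^ 2)⁻¹ := by
  rw [integral_exp_neg_mul_weight (zero_lt_one.trans_le hH), ofReal_mul_autocorr hn]
  simp_rw [← Finset.sum_sub_distrib, ← mul_sub]
  calc _ ≤ ∑ k ∈ Finset.Icc 1 N, ∑ m ∈ Finset.Icc 1 N, gaussianMass H *
          (Real.exp 4 * (N : ℝ) ^ 2 * ((n : ℝ) ^ 2)⁻¹ *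
            Real.exp (-(H ^ 2 / (16 * (N : ℝ) ^ 2)))) := by
        refine norm_sum_le_of_le _ fun k hk => norm_sum_le_of_le _ fun m hm => ?_
        rw [norm_mul]
        exact (mul_le_mul (norm_coeff_mul_coeff_le_one ha k m)
          (norm_gaussian_sub_ite_le hk hm hn hH) (norm_nonneg _) one_pos.le).trans (one_mul _).le
    _ = _ := by
        simp only [Finset.sum_const, Nat.card_Icc, nsmul_eq_mul, Nat.add_sub_cancel]
        unfold offDiagonal
        ring

end DirichletPolynomial

/-! ### Weighted sums of `Λ(n) / n` -/

section Mertens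

open ArithmeticFunction (vonMangoldt vonMangoldt_nonneg)

lemma sum_log_eq_log_factorial (N : ℕ) :
    ∑ n ∈ Finset.Icc 1 N, ArithmeticFunction.log n = Real.log (N.factorial : ℕ) := by
  have hIcc : Finset.Icc 1 N = Finset.Ico 1 (N + 1) := by
    ext i
    simp only [Finset.mem_Icc, Finset.mem_Ico, Order.lt_add_one_iff]
  rw [← Finset.prod_Ico_id_eq_factorial, hIcc, Nat.cast_prod,
    Real.log_prod fun i hi => Nat.cast_ne_zero.2
      (Nat.one_le_iff_ne_zero.1 (Finset.mem_Ico.1 hi).1)]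
  rfl

/-- One half of Mertens' first theorem: compare `log N! = ∑ Λ(n) ⌊N / n⌋` with Stirling's lower
bound. -/
theorem log_sub_one_le_sum_vonMangoldt_div {N : ℕ} (hN : 1 ≤ N) :
    Real.log N - 1 ≤ ∑ n ∈ Finset.Icc 1 N, vonMangoldt n / n := by
  have hN' : (1 : ℝ) ≤ N := by exact_mod_cast hN
  have hfactorial : ∑ n ∈ Finset.Icc 1 N, vonMangoldt n * ((N / n : ℕ) : ℝ) =
      Real.log (N.factorial : ℕ) := by
    have h := ArithmeticFunction.sum_Ioc_mul_zeta_eq_sum vonMangoldt N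
    rw [ArithmeticFunction.vonMangoldt_mul_zeta] at h
    exact h.symm.trans (sum_log_eq_log_factorial N)
  have hfloor : ∑ n ∈ Finset.Icc 1 N, vonMangoldt n * ((N / n : ℕ) : ℝ) ≤
      N * ∑ n ∈ Finset.Icc 1 N, vonMangoldt n / n := by
    rw [Finset.mul_sum]
    refine Finset.sum_le_sum fun n _ => ?_
    exact (mul_le_mul_of_nonneg_left Nat.cast_div_le vonMangoldt_nonneg).trans (le_of_eq (by ring))
  have hstirling := Stirling.le_log_factorial_stirling (n := N) (by omega)
  have hlog : 0 ≤ Real.log N := Real.log_nonneg hN'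
  have hpi : 0 ≤ Real.log (2 * π) := Real.log_nonneg (by linarith [Real.pi_gt_three])
  rw [hfactorial] at hfloor
  exact le_of_mul_le_mul_left (a := (N : ℝ)) (by nlinarith) (by linarith)

variable {f : ℝ → ℝ} {K M : ℕ}

lemma div_mem_Icc {j : ℕ} (hj : j ≤ K) : (j : ℝ) / K ∈ Set.Icc (0 : ℝ) 1 :=
  ⟨by positivity, div_le_one_of_le₀ (by exact_mod_cast hj) K.cast_nonneg⟩

lemma sum_ite_sub_le_of_antitoneOn (hf : AntitoneOn f (Set.Icc 0 1)) (hf1 : f 1 = 0) (hK : 1 ≤ K)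
    (hM : 2 ≤ M) {n : ℕ} (hn : 1 ≤ n) (hnM : n ≤ M ^ K) :
    ∑ j ∈ Finset.Ico 1 K, (if n ≤ M ^ j then f ((j : ℝ) / K) - f (((j + 1 : ℕ) : ℝ) / K) else 0) ≤
      f (Real.log n / (K * Real.log M)) := by
  classical
  have hK' : (0 : ℝ) < K := by exact_mod_cast hK
  have hlogM : 0 < Real.log M := Real.log_pos (by exact_mod_cast hM)
  have hex : ∃ j, 1 ≤ j ∧ n ≤ M ^ j := ⟨K, hK, hnM⟩
  obtain ⟨k, hk⟩ : ∃ k, k = Nat.find hex := ⟨_, rfl⟩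
  obtain ⟨hk1, hnk⟩ : 1 ≤ k ∧ n ≤ M ^ k := hk ▸ Nat.find_spec hex
  have hkK : k ≤ K := hk ▸ Nat.find_min' hex ⟨hK, hnM⟩
  have hfilter : (Finset.Ico 1 K).filter (fun j => n ≤ M ^ j) = Finset.Ico k K := by
    ext j
    simp only [Finset.mem_filter, Finset.mem_Ico]
    refine ⟨fun ⟨⟨h1, h2⟩, h3⟩ => ⟨hk ▸ Nat.find_min' hex ⟨h1, h3⟩, h2⟩, fun ⟨h1, h2⟩ => ?_⟩
    exact ⟨⟨hk1.trans h1, h2⟩, hnk.trans (Nat.pow_le_pow_right (by omega) h1)⟩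
  have hle : Real.log n / (K * Real.log M) ≤ k / K := by
    have hlog : Real.log n ≤ k * Real.log M := by
      rw [← Real.log_pow]
      exact Real.log_le_log (by exact_mod_cast hn) (by exact_mod_cast hnk)
    rw [div_le_div_iff₀ (by positivity) hK']
    nlinarith
  have htelescope := Finset.sum_Ico_sub (fun j : ℕ => -f ((j : ℝ) / K)) hkK
  simp only [neg_sub_neg, div_self hK'.ne', hf1, neg_zero, zero_sub, neg_neg] at htelescope
  rw [← Finset.sum_filter, hfilter, htelescope]
  have := Real.log_natCast_nonneg n
  exact hf ⟨by positivity, hle.trans (div_mem_Icc hkK).2⟩ (div_mem_Icc hkK) hle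

/-- Partial summation of Mertens' bound over the breakpoints `M ^ j`. -/
theorem sum_sub_mul_log_le_sum_vonMangoldt_div_mul (hf : AntitoneOn f (Set.Icc 0 1)) (hf1 : f 1 = 0)
    (hK : 1 ≤ K) (hM : 2 ≤ M) :
    ∑ j ∈ Finset.Ico 1 K, (f ((j : ℝ) / K) - f (((j + 1 : ℕ) : ℝ) / K)) * (j * Real.log M - 1) ≤
      ∑ n ∈ Finset.Icc 1 (M ^ K), vonMangoldt n / n * f (Real.log n / (K * Real.log M)) := by
  have hblock : ∀ j ∈ Finset.Ico 1 K,
      (f ((j : ℝ) / K) - f (((j + 1 : ℕ) : ℝ) / K)) * (j * Real.log M - 1) ≤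
        ∑ n ∈ Finset.Icc 1 (M ^ K), vonMangoldt n / n *
          (if n ≤ M ^ j then f ((j : ℝ) / K) - f (((j + 1 : ℕ) : ℝ) / K) else 0) := by
    intro j hj
    rw [Finset.mem_Ico] at hj
    have hstep : 0 ≤ f ((j : ℝ) / K) - f (((j + 1 : ℕ) : ℝ) / K) :=
      sub_nonneg.2 (hf (div_mem_Icc hj.2.le) (div_mem_Icc hj.2) (by gcongr; omega))
    have hmertens := log_sub_one_le_sum_vonMangoldt_div (N := M ^ j) (Nat.one_le_pow _ _ (by omega))
    rw [Nat.cast_pow, Real.log_pow] at hmertens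
    have hfilter : (Finset.Icc 1 (M ^ K)).filter (fun n => n ≤ M ^ j) = Finset.Icc 1 (M ^ j) := by
      have hpow : M ^ j ≤ M ^ K := Nat.pow_le_pow_right (by omega) hj.2.le
      ext n
      simp only [Finset.mem_filter, Finset.mem_Icc]
      omega
    refine (mul_le_mul_of_nonneg_left hmertens hstep).trans (le_of_eq ?_)
    simp only [mul_ite, mul_zero]
    rw [← Finset.sum_filter, Finset.mul_sum, hfilter]
    exact Finset.sum_congr rfl fun n _ => mul_comm _ _
  refine (Finset.sum_le_sum hblock).trans ?_
  rw [Finset.sum_comm]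
  refine Finset.sum_le_sum fun n hn => ?_
  rw [Finset.mem_Icc] at hn
  rw [← Finset.mul_sum]
  exact mul_le_mul_of_nonneg_left (sum_ite_sub_le_of_antitoneOn hf hf1 hK hM hn.1 hn.2)
    (div_nonneg vonMangoldt_nonneg n.cast_nonneg)

/-- The profile of the prime sum: `1 - x` is the loss in the autocorrelation of the coefficients and
`1 - 0.38 x²` is a lower bound for `sin u / u` at `u = 0.48 π x`. -/
def primeProfile (x : ℝ) : ℝ := (1 - 0.38 * x ^ 2) * (1 - x)

lemma antitoneOn_primeProfile : AntitoneOn primeProfile (Set.Icc 0 1) := by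
  intro x hx y hy hxy
  unfold primeProfile
  apply mul_le_mul
  · have : x ^ 2 ≤ y ^ 2 := pow_le_pow_left₀ hx.1 hxy 2
    linarith
  · linarith
  · linarith [hy.2]
  · nlinarith [hx.1, hxy.trans hy.2]

lemma log_le_sum_vonMangoldt_div_mul_primeProfile (hM : 2 ≤ M) :
    6.99 * Real.log M - 1 ≤ ∑ n ∈ Finset.Icc 1 (M ^ 16), vonMangoldt n / n *
      primeProfile (Real.log n / (16 * Real.log M)) := by
  have hlogM : 0 < Real.log M := Real.log_pos (by exact_mod_cast hM)
  have h := sum_sub_mul_log_le_sum_vonMangoldt_div_mul (K := 16) antitoneOn_primeProfile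
    (by norm_num [primeProfile]) (by norm_num) hM
  refine le_trans ?_ h
  norm_num [Finset.sum_Ico_eq_sum_range, Finset.sum_range_succ, primeProfile]
  linarith

end Mertens

/-! ### The prime sum for Liouville coefficients -/

section LiouvilleCoefficients

open ArithmeticFunction (vonMangoldt vonMangoldt_nonneg cardFactors)

/-- The coefficients `λ(k) / √k`, with `λ` Liouville's function. The sign makes the autocorrelation
at primes negative, which biases the weight towards small gaps. -/
def liouvilleCoeff (k : ℕ) : ℝ := (-1) ^ (cardFactors k) / √k

/-- The von Mangoldt function restricted to perfect squares, where Liouville's function has the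
wrong sign. -/
def squareVonMangoldt (n : ℕ) : ℝ := if IsSquare n then vonMangoldt n else 0

/-- The constant `∑ Λ(n) n ^ (-3 / 2)`, which dominates the convergent sums over prime powers. -/
def vonMangoldtConst : ℝ := ∑' n : ℕ, vonMangoldt n * (n : ℝ) ^ (-(3 / 2) : ℝ)

variable {N n : ℕ} {η ℓ L : ℝ}

lemma abs_liouvilleCoeff_le_one (k : ℕ) : |liouvilleCoeff k| ≤ 1 := by
  rw [liouvilleCoeff, abs_div, abs_pow, abs_neg, abs_one, one_pow,
    abs_of_nonneg (Real.sqrt_nonneg _)]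
  rcases k.eq_zero_or_pos with rfl | hk
  · simp
  · exact div_le_one_of_le₀ (Real.one_le_sqrt.2 (by exact_mod_cast hk)) (Real.sqrt_nonneg _)

lemma vonMangoldtConst_nonneg : 0 ≤ vonMangoldtConst :=
  tsum_nonneg fun _ => mul_nonneg vonMangoldt_nonneg (by positivity)

lemma liouvilleCoeff_mul_liouvilleCoeff_mul {m n : ℕ} (hm : 1 ≤ m) (hn : 1 ≤ n) :
    liouvilleCoeff m * liouvilleCoeff (m * n) = liouvilleCoeff n * (1 / m) := by
  have hm' : (0 : ℝ) < m := by exact_mod_cast hm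
  have hsign : (-1 : ℝ) ^ cardFactors m * (-1) ^ cardFactors m = 1 := by
    rw [← mul_pow]
    norm_num
  have hsqrt := Real.mul_self_sqrt hm'.le
  simp only [liouvilleCoeff]
  rw [ArithmeticFunction.cardFactors_mul (by omega) (by omega), Nat.cast_mul,
    Real.sqrt_mul hm'.le, pow_add]
  calc _ = ((-1 : ℝ) ^ cardFactors m * (-1) ^ cardFactors m) * (-1) ^ cardFactors n /
        ((√m * √m) * √n) := by ring
    _ = _ := by rw [hsign, hsqrt]; ring

lemma autocorr_liouvilleCoeff (hn : 1 ≤ n) :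
    autocorr liouvilleCoeff N n = liouvilleCoeff n * harmonic (N / n) := by
  have hfilter : (Finset.Icc 1 N).filter (fun m => m * n ≤ N) = Finset.Icc 1 (N / n) := by
    ext m
    simp only [Finset.mem_filter, Finset.mem_Icc, Nat.le_div_iff_mul_le hn]
    exact ⟨fun ⟨⟨h1, _⟩, h3⟩ => ⟨h1, h3⟩,
      fun ⟨h1, h2⟩ => ⟨⟨h1, (Nat.le_mul_of_pos_right m hn).trans h2⟩, h2⟩⟩
  rw [autocorr, ← Finset.sum_filter, hfilter, harmonic_eq_sum_Icc]
  push_cast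
  rw [Finset.mul_sum]
  refine Finset.sum_congr rfl fun m hm => ?_
  rw [liouvilleCoeff_mul_liouvilleCoeff_mul (Finset.mem_Icc.1 hm).1 hn, one_div]

lemma autocorr_liouvilleCoeff_one (N : ℕ) : autocorr liouvilleCoeff N 1 = harmonic N := by
  rw [autocorr_liouvilleCoeff le_rfl]
  simp [liouvilleCoeff]

lemma vonMangoldt_sub_two_mul_squareVonMangoldt_le (n : ℕ) :
    vonMangoldt n - 2 * squareVonMangoldt n ≤ -((-1) ^ (cardFactors n) * vonMangoldt n) := by
  have hΛ : 0 ≤ vonMangoldt n := vonMangoldt_nonneg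
  unfold squareVonMangoldt
  by_cases h : IsPrimePow n
  · obtain ⟨p, k, hp, _, rfl⟩ := (isPrimePow_nat_iff _).1 h
    rw [ArithmeticFunction.cardFactors_apply_prime_pow hp]
    rcases Nat.even_or_odd k with heven | hodd
    · rw [heven.neg_one_pow, if_pos (heven.isSquare_pow p)]
      linarith
    · rw [hodd.neg_one_pow]
      split_ifs <;> linarith
  · simp [ArithmeticFunction.vonMangoldt_eq_zero_iff.2 h]

lemma squareVonMangoldt_nonneg (n : ℕ) : 0 ≤ squareVonMangoldt n := by
  unfold squareVonMangoldt
  split_ifs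
  exacts [vonMangoldt_nonneg, le_rfl]

lemma sum_squareVonMangoldt_div_le (N : ℕ) :
    ∑ n ∈ Finset.Icc 1 N, squareVonMangoldt n / n ≤ vonMangoldtConst := by
  have hsub : (Finset.Icc 1 N).filter (fun n => IsSquare n) ⊆
      (Finset.Icc 1 N).image (fun m => m ^ 2) := by
    intro n hn
    simp only [Finset.mem_filter, Finset.mem_Icc] at hn
    obtain ⟨⟨h1, h2⟩, m, rfl⟩ := hn
    exact Finset.mem_image.2 ⟨m, Finset.mem_Icc.2 ⟨Nat.pos_of_mul_pos_left h1,
      (Nat.le_mul_self m).trans h2⟩, sq m⟩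
  have hsquare (m : ℕ) : vonMangoldt (m ^ 2) / ((m ^ 2 : ℕ) : ℝ) ≤
      vonMangoldt m * (m : ℝ) ^ (-(3 / 2) : ℝ) := by
    rcases m.eq_zero_or_pos with rfl | hm
    · simp
    have hpow : ((m : ℝ) ^ 2)⁻¹ = (m : ℝ) ^ (-2 : ℝ) := by
      rw [Real.rpow_neg m.cast_nonneg]
      norm_num
    rw [ArithmeticFunction.vonMangoldt_apply_pow two_ne_zero, div_eq_mul_inv, Nat.cast_pow, hpow]
    exact mul_le_mul_of_nonneg_left (Real.rpow_le_rpow_of_exponent_le (by exact_mod_cast hm)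
      (by norm_num)) vonMangoldt_nonneg
  calc ∑ n ∈ Finset.Icc 1 N, squareVonMangoldt n / n
      = ∑ n ∈ (Finset.Icc 1 N).filter (fun n => IsSquare n), vonMangoldt n / n := by
        simp only [squareVonMangoldt, ite_div, zero_div, Finset.sum_filter]
    _ ≤ ∑ n ∈ (Finset.Icc 1 N).image (fun m => m ^ 2), vonMangoldt n / n :=
        Finset.sum_le_sum_of_subset_of_nonneg hsub fun n _ _ =>
          div_nonneg vonMangoldt_nonneg n.cast_nonneg
    _ = ∑ m ∈ Finset.Icc 1 N, vonMangoldt (m ^ 2) / ((m ^ 2 : ℕ) : ℝ) :=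
        Finset.sum_image fun a _ b _ h => by simpa using h
    _ ≤ ∑ m ∈ Finset.Icc 1 N, vonMangoldt m * (m : ℝ) ^ (-(3 / 2) : ℝ) :=
        Finset.sum_le_sum fun m _ => hsquare m
    _ ≤ vonMangoldtConst := (summable_vonMangoldt_mul_rpow_neg (by norm_num)).sum_le_tsum _
        fun m _ => mul_nonneg vonMangoldt_nonneg (by positivity)

lemma mul_one_sub_sq_le_sin_div (hη : 0 < η) (hℓ : 0 < ℓ) (hL : 0 < L)
    (hηL : η * L ≤ 0.48 * π) : η * (1 - 0.38 * (ℓ / L) ^ 2) ≤ Real.sin (η * ℓ) / ℓ := by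
  have hsq : (η * ℓ) ^ 2 / 6 ≤ 0.38 * (ℓ / L) ^ 2 := by
    have hbound : (η * L) ^ 2 ≤ 6 * 0.38 :=
      (pow_le_pow_left₀ (by positivity) hηL 2).trans (by nlinarith [Real.pi_pos, Real.pi_lt_d4])
    rw [show η * ℓ = η * L * (ℓ / L) by field_simp, mul_pow]
    linarith [mul_le_mul_of_nonneg_right hbound (sq_nonneg (ℓ / L))]
  rw [le_div_iff₀ hℓ]
  calc η * (1 - 0.38 * (ℓ / L) ^ 2) * ℓ = η * ℓ * (1 - 0.38 * (ℓ / L) ^ 2) := by ring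
    _ ≤ η * ℓ * (1 - (η * ℓ) ^ 2 / 6) := by gcongr
    _ = η * ℓ - (η * ℓ) ^ 3 / 6 := by ring
    _ ≤ Real.sin (η * ℓ) := Real.sin_ge_sub_cube (by positivity)

lemma log_sub_log_le_harmonic_div (hn : 1 ≤ n) (hN : 1 ≤ N) :
    Real.log N - Real.log n ≤ harmonic (N / n) := by
  have h := log_le_harmonic_floor ((N : ℝ) / n) (by positivity)
  rwa [Nat.floor_div_natCast, Nat.floor_natCast,
    Real.log_div (Nat.cast_ne_zero.2 (Nat.one_le_iff_ne_zero.1 hN))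
      (Nat.cast_ne_zero.2 (Nat.one_le_iff_ne_zero.1 hn))] at h

lemma harmonic_div_le (N n : ℕ) : (harmonic (N / n) : ℝ) ≤ 1 + Real.log N := by
  refine (harmonic_le_one_add_log (N / n)).trans (add_le_add_right ?_ 1)
  rcases (N / n).eq_zero_or_pos with h | h
  · simpa [h] using Real.log_natCast_nonneg N
  · exact Real.log_le_log (by exact_mod_cast h) (by exact_mod_cast Nat.div_le_self _ _)

lemma mul_primeProfile_le_harmonic_mul_sin_div (hη : 0 < η) (hηN : η * Real.log N ≤ 0.48 * π)
    (hn : 1 < n) (hnN : n ≤ N) :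
    η * Real.log N * primeProfile (Real.log n / Real.log N) ≤
      harmonic (N / n) * (Real.sin (η * Real.log n) / Real.log n) := by
  have hlogn : 0 < Real.log n := Real.log_pos (by exact_mod_cast hn)
  have hle : Real.log n ≤ Real.log N :=
    Real.log_le_log (by exact_mod_cast hn.le) (by exact_mod_cast hnN)
  have hlogN : 0 < Real.log N := hlogn.trans_le hle
  have hquot : Real.log n / Real.log N ≤ 1 := div_le_one_of_le₀ hle hlogN.le
  have hsq : (Real.log n / Real.log N) ^ 2 ≤ 1 := pow_le_one₀ (by positivity) hquot
  have hharmonic := log_sub_log_le_harmonic_div hn.le (hn.le.trans hnN)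
  calc η * Real.log N * primeProfile (Real.log n / Real.log N)
      = (Real.log N - Real.log n) * (η * (1 - 0.38 * (Real.log n / Real.log N) ^ 2)) := by
        rw [primeProfile]
        field_simp
    _ ≤ _ := mul_le_mul hharmonic (mul_one_sub_sq_le_sin_div hη hlogn hlogN hηN)
        (mul_nonneg hη.le (by linarith)) ((sub_nonneg.2 hle).trans hharmonic)

lemma harmonic_mul_sin_div_nonneg (hη : 0 < η) (hηN : η * Real.log N ≤ 0.48 * π)
    (hn : 1 < n) (hnN : n ≤ N) :
    0 ≤ (harmonic (N / n) : ℝ) * (Real.sin (η * Real.log n) / Real.log n) := by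
  have hlogn : 0 < Real.log n := Real.log_pos (by exact_mod_cast hn)
  have hle : Real.log n ≤ Real.log N :=
    Real.log_le_log (by exact_mod_cast hn.le) (by exact_mod_cast hnN)
  refine mul_nonneg ((sub_nonneg.2 hle).trans (log_sub_log_le_harmonic_div hn.le (hn.le.trans hnN)))
    (div_nonneg (Real.sin_nonneg_of_nonneg_of_le_pi (by positivity) ?_) hlogn.le)
  nlinarith [Real.pi_pos]

lemma harmonic_mul_sin_div_le (hη : 0 < η) (hn : 1 < n) (N : ℕ) :
    harmonic (N / n) * (Real.sin (η * Real.log n) / Real.log n) ≤ η * (1 + Real.log N) := by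
  have hlogn : 0 < Real.log n := Real.log_pos (by exact_mod_cast hn)
  have hsin : Real.sin (η * Real.log n) / Real.log n ≤ η :=
    (div_le_iff₀ hlogn).2 (Real.sin_le (by positivity))
  have hharmonic : (0 : ℝ) ≤ harmonic (N / n) := by
    rw [harmonic]
    positivity
  calc _ ≤ harmonic (N / n) * η := mul_le_mul_of_nonneg_left hsin hharmonic
    _ ≤ (1 + Real.log N) * η := mul_le_mul_of_nonneg_right (harmonic_div_le N n) hη.le
    _ = _ := mul_comm _ _

lemma sub_le_neg_vonMangoldt_mul_autocorr (hη : 0 < η) (hηN : η * Real.log N ≤ 0.48 * π)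
    (hn : 1 ≤ n) (hnN : n ≤ N) :
    η * Real.log N * (vonMangoldt n / n * primeProfile (Real.log n / Real.log N)) -
        2 * η * (1 + Real.log N) * (squareVonMangoldt n / n) ≤
      -(vonMangoldt n / √n * autocorr liouvilleCoeff N n *
        (Real.sin (η * Real.log n) / Real.log n)) := by
  rcases hn.eq_or_lt with rfl | hn1
  · simp [squareVonMangoldt]
  have hn0 : (0 : ℝ) < n := by exact_mod_cast hn
  rw [autocorr_liouvilleCoeff hn]
  set S := harmonic (N / n) * (Real.sin (η * Real.log n) / Real.log n) with hS
  have hmain := mul_le_mul_of_nonneg_left (mul_primeProfile_le_harmonic_mul_sin_div hη hηN hn1 hnN)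
    (div_nonneg (vonMangoldt_nonneg (n := n)) hn0.le)
  have hsquare := mul_le_mul_of_nonneg_left (harmonic_mul_sin_div_le hη hn1 N)
    (div_nonneg (squareVonMangoldt_nonneg n) hn0.le)
  have hS0 : 0 ≤ S / n := div_nonneg (harmonic_mul_sin_div_nonneg hη hηN hn1 hnN) hn0.le
  rw [← hS] at hmain hsquare
  calc _ ≤ vonMangoldt n / n * S - 2 * (squareVonMangoldt n / n * S) := by linarith
    _ = (vonMangoldt n - 2 * squareVonMangoldt n) * (S / n) := by ring
    _ ≤ -((-1) ^ (cardFactors n) * vonMangoldt n) * (S / n) :=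
        mul_le_mul_of_nonneg_right (vonMangoldt_sub_two_mul_squareVonMangoldt_le n) hS0
    _ = -((-1) ^ (cardFactors n) * vonMangoldt n) * S / (√n * √n) := by
        rw [Real.mul_self_sqrt hn0.le, mul_div_assoc _ S]
    _ = _ := by
        rw [hS, liouvilleCoeff]
        ring

/-- The value `6.99` is a Riemann sum for `16 ∫₀¹ primeProfile` with `16` steps. -/
theorem le_neg_sum_vonMangoldt_mul_autocorr {M : ℕ} (hM : 2 ≤ M) (hη : 0 < η)
    (hηM : η * Real.log M ≤ 0.03 * π) :
    η * (16 * Real.log M * (6.99 * Real.log M - 1) -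
        2 * (1 + 16 * Real.log M) * vonMangoldtConst) ≤
      -∑ n ∈ Finset.Icc 1 (M ^ 16), vonMangoldt n / √n * autocorr liouvilleCoeff (M ^ 16) n *
        (Real.sin (η * Real.log n) / Real.log n) := by
  have hlogM : 0 < Real.log M := Real.log_pos (by exact_mod_cast hM)
  have hlogN : Real.log ((M ^ 16 : ℕ) : ℝ) = 16 * Real.log M := by
    rw [Nat.cast_pow, Real.log_pow, Nat.cast_ofNat]
  have hterm : ∀ n ∈ Finset.Icc 1 (M ^ 16), _ := fun n hn =>
    sub_le_neg_vonMangoldt_mul_autocorr (N := M ^ 16) hη (by rw [hlogN]; linarith)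
      (Finset.mem_Icc.1 hn).1 (Finset.mem_Icc.1 hn).2
  have hprimes := mul_le_mul_of_nonneg_left (log_le_sum_vonMangoldt_div_mul_primeProfile hM)
    (by positivity : 0 ≤ η * (16 * Real.log M))
  have hsquares := mul_le_mul_of_nonneg_left (sum_squareVonMangoldt_div_le (M ^ 16))
    (by positivity : 0 ≤ 2 * η * (1 + 16 * Real.log M))
  rw [← Finset.sum_neg_distrib]
  refine le_trans ?_ (Finset.sum_le_sum hterm)
  rw [Finset.sum_sub_distrib, ← Finset.mul_sum, ← Finset.mul_sum, hlogN]
  linarith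

end LiouvilleCoefficients

/-! ### The explicit formula for the weighted count of ordinates -/

section WeightedCount

/-- The even test function `weight a N T H (α + z) + weight a N T H (α - z)` to which the explicit
formula is applied; on the positive axis it counts the ordinates near `T - α`. -/
def symmWeight (a : ℕ → ℝ) (N : ℕ) (T H α : ℝ) (z : ℂ) : ℂ :=
  weight a N T H (z + α) + weight a N T H (-z + α)

/-- The total mass of `realWeight`. -/
def weightMass (a : ℕ → ℝ) (N : ℕ) (T H : ℝ) : ℝ := ∫ x : ℝ, realWeight a N T H x

variable {a : ℕ → ℝ} {N : ℕ} {T H α : ℝ}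

lemma one_div_one_add_add_sq_le (hα : |α| ≤ 1) (x : ℝ) :
    1 / (1 + (x + α) ^ 2) ≤ 4 / (1 + x ^ 2) := by
  have hα2 : α ^ 2 ≤ 1 := (sq_le_one_iff_abs_le_one α).2 hα
  have hx := one_add_sq_le x (-α)
  rw [sub_neg_eq_add, neg_sq] at hx
  rw [div_le_div_iff₀ (by positivity) (by positivity)]
  nlinarith [sq_nonneg (x + α)]

lemma isTestFunction_symmWeight (ha : ∀ k, |a k| ≤ 1) (hN : 1 ≤ N) (hH : 1 ≤ H) (hα : |α| ≤ 1) :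
    IsTestFunction (symmWeight a N T H α) where
  differentiable := by
    have := differentiable_weight a N T H
    unfold symmWeight
    fun_prop
  even z := by rw [symmWeight, symmWeight, neg_neg, add_comm]
  exists_norm_le := by
    obtain ⟨C, hC, hweight⟩ := exists_norm_weight_le (T := T) ha hN hH
    have hshift (z : ℂ) (hz : |z.im| ≤ 1) :
        ‖weight a N T H (z + α)‖ ≤ C * 4 ^ 3 / (1 + z.re ^ 2) ^ 3 :=
      calc _ ≤ C / (1 + (z + α).re ^ 2) ^ 3 := hweight _ (by simpa using hz)
        _ = C * (1 / (1 + (z.re + α) ^ 2)) ^ 3 := by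
            rw [add_re, ofReal_re, div_pow, one_pow]
            ring
        _ ≤ C * (4 / (1 + z.re ^ 2)) ^ 3 := mul_le_mul_of_nonneg_left
            (pow_le_pow_left₀ (by positivity) (one_div_one_add_add_sq_le hα z.re) 3) hC
        _ = _ := by rw [div_pow, mul_div_assoc]
    refine ⟨C * 4 ^ 3 + C * 4 ^ 3, fun z hz => ?_⟩
    have hneg := hshift (-z) (by simpa using hz)
    rw [neg_re, neg_sq] at hneg
    rw [add_div]
    exact norm_add_le_of_le (hshift z hz) hneg

lemma norm_weight_add_le_weightTail (ha : ∀ k, |a k| ≤ 1) (hN : 1 ≤ N) (hH : 1 ≤ H) (hT : 8 ≤ T)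
    (hα : |α| ≤ 1) {z : ℂ} (hz : |z.im| ≤ 1) (hr : T / 2 ≤ |z.re - T|) :
    ‖weight a N T H (z + α)‖ ≤ 4 * weightTail N T H / (1 + z.re ^ 2) := by
  have hre : (z + α).re = z.re + α := by simp
  have hfar : T / 4 ≤ |(z + α).re - T| := by
    have := abs_sub_abs_le_abs_sub (z.re - T) (-α)
    rw [abs_neg, show z.re - T - -α = (z + α).re - T by rw [hre]; ring] at this
    linarith
  calc _ ≤ weightTail N T H * (1 / (1 + (z.re + α) ^ 2)) := by
        rw [mul_one_div, ← hre]
        exact norm_weight_le_weightTail ha hN hH (by linarith) (by simpa using hz) hfar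
    _ ≤ weightTail N T H * (4 / (1 + z.re ^ 2)) :=
        mul_le_mul_of_nonneg_left (one_div_one_add_add_sq_le hα _) (weightTail_nonneg N T H)
    _ = _ := by ring

lemma realWeight_add_le_weightTail (ha : ∀ k, |a k| ≤ 1) (hN : 1 ≤ N) (hH : 1 ≤ H) (hT : 8 ≤ T)
    (hα : |α| ≤ 1) {x : ℝ} (hx : T / 2 ≤ |x - T|) :
    realWeight a N T H (x + α) ≤ 4 * weightTail N T H / (1 + x ^ 2) := by
  have h := norm_weight_add_le_weightTail ha hN hH hT hα (z := x) (by simp) (by simpa using hx)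
  rwa [← ofReal_add, weight_ofReal, Complex.norm_of_nonneg (realWeight_nonneg a N T H _),
    ofReal_re] at h

lemma norm_symmWeight_le_weightTail (ha : ∀ k, |a k| ≤ 1) (hN : 1 ≤ N) (hH : 1 ≤ H) (hT : 8 ≤ T)
    (hα : |α| ≤ 1) {z : ℂ} (hz : |z.im| ≤ 1) (hr : z.re = 0) :
    ‖symmWeight a N T H α z‖ ≤ 8 * weightTail N T H := by
  have hfar : T / 2 ≤ |0 - T| := by
    rw [zero_sub, abs_neg]
    exact (half_le_self (by linarith)).trans (le_abs_self T)
  have hbound {w : ℂ} (hw : |w.im| ≤ 1) (hwr : w.re = 0) :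
      ‖weight a N T H (w + α)‖ ≤ 4 * weightTail N T H := by
    simpa [hwr] using norm_weight_add_le_weightTail ha hN hH hT hα hw (by rwa [hwr])
  refine (norm_add_le_of_le (hbound hz hr) (hbound (w := -z) (by simpa using hz)
    (by simpa using hr))).trans (by linarith)

lemma symmWeight_ofReal (a : ℕ → ℝ) (N : ℕ) (T H α x : ℝ) :
    symmWeight a N T H α x =
      ((realWeight a N T H (x + α) + realWeight a N T H (-x + α) : ℝ) : ℂ) := by
  rw [symmWeight, ofReal_add, ← weight_ofReal, ← weight_ofReal]
  push_cast
  rfl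

lemma continuous_realWeight (a : ℕ → ℝ) (N : ℕ) (T H : ℝ) : Continuous (realWeight a N T H) := by
  unfold realWeight dirichletPoly
  fun_prop

lemma integrable_realWeight (ha : ∀ k, |a k| ≤ 1) (hN : 1 ≤ N) (hH : 1 ≤ H) :
    Integrable (realWeight a N T H) := by
  obtain ⟨C, hC, hweight⟩ := exists_norm_weight_le (T := T) ha hN hH
  refine (integrable_of_norm_le_div_one_add_sq (C := C) (f := fun x : ℝ => weight a N T H x)
    ((differentiable_weight a N T H).continuous.comp continuous_ofReal) fun x => ?_).re.congr
    (Eventually.of_forall fun x => by simp [weight_ofReal])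
  refine (hweight x (by simp)).trans (div_le_div_of_nonneg_left hC (by positivity) ?_)
  exact le_self_pow₀ (le_add_of_nonneg_right (sq_nonneg _)) (by norm_num)

lemma abs_weightMass_sub_le (ha : ∀ k, |a k| ≤ 1) (hH : 1 ≤ H) :
    |weightMass a N T H - gaussianMass H * autocorr a N 1| ≤ gaussianMass H * offDiagonal N H := by
  have h := norm_integral_exp_neg_mul_weight_sub_le (T := T) (N := N) ha hH le_rfl
  simp only [Nat.cast_one, Real.log_one, ofReal_zero, mul_zero, neg_zero, Complex.exp_zero,
    one_mul, weight_ofReal, one_pow, inv_one, mul_one] at h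
  rwa [integral_complex_ofReal, ← ofReal_sub, Complex.norm_real] at h

lemma integral_realWeight_add_add (ha : ∀ k, |a k| ≤ 1) (hN : 1 ≤ N) (hH : 1 ≤ H) :
    Integrable (fun x => realWeight a N T H (x + α) + realWeight a N T H (-x + α)) ∧
      ∫ x : ℝ, (realWeight a N T H (x + α) + realWeight a N T H (-x + α)) =
        2 * weightMass a N T H := by
  have hshift : Integrable fun x => realWeight a N T H (x + α) :=
    (integrable_realWeight ha hN hH).comp_add_right α
  have hmass : ∫ x : ℝ, realWeight a N T H (x + α) = weightMass a N T H :=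
    integral_add_right_eq_self (realWeight a N T H) α
  refine ⟨hshift.add hshift.comp_neg, ?_⟩
  rw [integral_add hshift hshift.comp_neg, integral_neg_eq_self fun x => realWeight a N T H (x + α),
    hmass, two_mul]

lemma realWeight_add_add_le_weightTail (ha : ∀ k, |a k| ≤ 1) (hN : 1 ≤ N) (hH : 1 ≤ H)
    (hT : 8 ≤ T) (hα : |α| ≤ 1) {x : ℝ} (hx : |x| ≤ T / 2) :
    realWeight a N T H (x + α) + realWeight a N T H (-x + α) ≤
      8 * weightTail N T H * (1 + x ^ 2)⁻¹ := by
  have hfar {y : ℝ} (hy : |y| ≤ T / 2) : T / 2 ≤ |y - T| := by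
    rw [abs_sub_comm]
    linarith [le_abs_self (T - y), le_abs_self y]
  have hpos := realWeight_add_le_weightTail ha hN hH hT hα (hfar hx)
  have hneg := realWeight_add_le_weightTail ha hN hH hT hα (hfar (y := -x) (by rwa [abs_neg]))
  rw [neg_sq] at hneg
  rw [div_eq_mul_inv] at hpos hneg
  linarith

lemma log_half_mul_realWeight_le (ha : ∀ k, |a k| ≤ 1) (hN : 1 ≤ N) (hH : 1 ≤ H) (hT : 8 ≤ T)
    (hα : |α| ≤ 1) (x : ℝ) :
    Real.log (T / 2) * (realWeight a N T H (x + α) + realWeight a N T H (-x + α)) -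
        Real.log (T / 2) * (8 * weightTail N T H) * (1 + x ^ 2)⁻¹ ≤
      Real.log (1 + |x|) * (realWeight a N T H (x + α) + realWeight a N T H (-x + α)) := by
  have hlog : 0 ≤ Real.log (T / 2) := Real.log_nonneg (by linarith)
  have hweight : 0 ≤ realWeight a N T H (x + α) + realWeight a N T H (-x + α) :=
    add_nonneg (realWeight_nonneg ..) (realWeight_nonneg ..)
  rcases le_total (T / 2) |x| with h | h
  · refine (sub_le_self _ ?_).trans (mul_le_mul_of_nonneg_right
      (Real.log_le_log (by linarith) (by linarith)) hweight)
    have := weightTail_nonneg N T H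
    positivity
  · have htail := mul_le_mul_of_nonneg_left
      (realWeight_add_add_le_weightTail ha hN hH hT hα h) hlog
    have hright := mul_nonneg (Real.log_nonneg (by linarith [abs_nonneg x] : 1 ≤ 1 + |x|)) hweight
    linarith

/-- The Gamma factor contributes the expected density `log T` of ordinates. -/
lemma le_re_integral_logDeriv_Gammaℝ_mul_symmWeight (ha : ∀ k, |a k| ≤ 1) (hN : 1 ≤ N)
    (hH : 1 ≤ H) (hT : 8 ≤ T) (hα : |α| ≤ 1) {C : ℝ}
    (hC : ∀ t : ℝ, 1 / 2 * Real.log (1 + |t|) - C ≤ (logDeriv Gammaℝ (1 / 2 + I * t)).re) :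
    (Real.log (T / 2) - 2 * C) * weightMass a N T H -
        4 * π * weightTail N T H * Real.log (T / 2) ≤
      (∫ x : ℝ, logDeriv Gammaℝ (1 / 2 + I * x) * symmWeight a N T H α x).re := by
  set P : ℝ → ℝ := fun x => realWeight a N T H (x + α) + realWeight a N T H (-x + α)
  have hintegrable :=
    (isTestFunction_symmWeight (T := T) ha hN hH hα).integrable_logDeriv_Gammaℝ_mul
  obtain ⟨hPint, hPmass⟩ := integral_realWeight_add_add (T := T) (α := α) ha hN hH
  have hmain := hPint.const_mul (1 / 2 * Real.log (T / 2) - C)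
  have htail := integrable_inv_one_add_sq.const_mul
    (1 / 2 * Real.log (T / 2) * (8 * weightTail N T H))
  calc _ = ∫ x : ℝ, ((1 / 2 * Real.log (T / 2) - C) * P x -
          1 / 2 * Real.log (T / 2) * (8 * weightTail N T H) * (1 + x ^ 2)⁻¹) := by
        rw [integral_sub hmain htail, integral_const_mul, integral_const_mul, hPmass,
          integral_univ_inv_one_add_sq]
        ring
    _ ≤ ∫ x : ℝ, (logDeriv Gammaℝ (1 / 2 + I * x) * symmWeight a N T H α x).re := by
        refine integral_mono (hmain.sub htail) hintegrable.re fun x => ?_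
        have hPx : 0 ≤ P x := add_nonneg (realWeight_nonneg ..) (realWeight_nonneg ..)
        have hre : (logDeriv Gammaℝ (1 / 2 + I * x) * symmWeight a N T H α x).re =
            (logDeriv Gammaℝ (1 / 2 + I * x)).re * P x := by
          rw [symmWeight_ofReal, re_mul_ofReal]
        have hlog := log_half_mul_realWeight_le ha hN hH hT hα x
        have hΓ := mul_le_mul_of_nonneg_right (hC x) hPx
        rw [← hre] at hΓ
        refine le_trans ?_ hΓ
        linarith
    _ = _ := integral_re hintegrable

lemma integral_exp_neg_mul_comp_add (f : ℝ → ℂ) (α ℓ : ℝ) :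
    ∫ x : ℝ, cexp (-(I * x * ℓ)) * f (x + α) =
      cexp (I * α * ℓ) * ∫ x : ℝ, cexp (-(I * x * ℓ)) * f x := by
  rw [← integral_add_right_eq_self (fun x : ℝ => cexp (-(I * x * ℓ)) * f x) α,
    ← integral_const_mul]
  refine integral_congr_ae (Eventually.of_forall fun x => ?_)
  beta_reduce
  rw [← mul_assoc, ← Complex.exp_add]
  push_cast
  congr 2
  ring

lemma integral_exp_neg_mul_comp_neg (f : ℝ → ℝ) (ℓ : ℝ) :
    ∫ x : ℝ, cexp (-(I * x * ℓ)) * (f (-x) : ℂ) =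
      starRingEnd ℂ (∫ x : ℝ, cexp (-(I * x * ℓ)) * (f x : ℂ)) := by
  rw [← integral_conj, ← integral_neg_eq_self]
  refine integral_congr_ae (Eventually.of_forall fun x => ?_)
  simp [← Complex.exp_conj]

lemma integrable_exp_neg_mul {f : ℝ → ℂ} (hf : Integrable f) (ℓ : ℝ) :
    Integrable fun x : ℝ => cexp (-(I * x * ℓ)) * f x := by
  refine hf.bdd_mul (c := 1) (Continuous.aestronglyMeasurable (by fun_prop))
    (Eventually.of_forall fun x => ?_)
  simp [Complex.norm_exp]

lemma natCast_cpow_neg_half_add {n : ℕ} (hn : n ≠ 0) (x : ℝ) :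
    (n : ℂ) ^ (-(1 / 2 + I * x)) = ((√n)⁻¹ : ℝ) * cexp (-(I * x * (Real.log n : ℂ))) := by
  have hsqrt : (√n)⁻¹ = Real.exp (-(1 / 2 * Real.log n)) := by
    rw [Real.exp_neg, Real.sqrt_eq_rpow, Real.rpow_def_of_pos (by positivity), mul_comm]
  rw [hsqrt, ofReal_exp, ← Complex.exp_add, Complex.cpow_def_of_ne_zero (Nat.cast_ne_zero.2 hn),
    ← Complex.natCast_log]
  congr 1
  push_cast
  ring

lemma integral_cpow_mul_symmWeight (ha : ∀ k, |a k| ≤ 1) (hN : 1 ≤ N) (hH : 1 ≤ H) {n : ℕ}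
    (hn : n ≠ 0) :
    ∫ x : ℝ, (n : ℂ) ^ (-(1 / 2 + I * x)) * symmWeight a N T H α x =
      (((√n)⁻¹ * (2 * (cexp (I * α * (Real.log n : ℂ)) *
        ∫ x : ℝ, cexp (-(I * x * (Real.log n : ℂ))) * weight a N T H x).re) : ℝ) : ℂ) := by
  set ℓ := Real.log n
  set f : ℝ → ℝ := fun x => realWeight a N T H (x + α)
  have hintegrable : Integrable fun x : ℝ => (f x : ℂ) :=
    ((integrable_realWeight ha hN hH).comp_add_right α).ofReal
  have hshift : ∫ x : ℝ, cexp (-(I * x * ℓ)) * (f x : ℂ) =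
      cexp (I * α * ℓ) * ∫ x : ℝ, cexp (-(I * x * ℓ)) * weight a N T H x := by
    simp only [weight_ofReal]
    exact integral_exp_neg_mul_comp_add (fun x => (realWeight a N T H x : ℂ)) α ℓ
  calc _ = ∫ x : ℝ, ((√n)⁻¹ : ℝ) *
          (cexp (-(I * x * ℓ)) * (f x : ℂ) + cexp (-(I * x * ℓ)) * (f (-x) : ℂ)) := by
        refine integral_congr_ae (Eventually.of_forall fun x => ?_)
        beta_reduce
        rw [natCast_cpow_neg_half_add hn, symmWeight_ofReal, ofReal_add, mul_assoc, mul_add]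
    _ = _ := by
        rw [integral_const_mul, integral_add (integrable_exp_neg_mul hintegrable ℓ)
          (integrable_exp_neg_mul hintegrable.comp_neg ℓ), integral_exp_neg_mul_comp_neg, hshift,
          Complex.add_conj, ← ofReal_mul]

lemma offDiagonal_nonneg (N : ℕ) (H : ℝ) : 0 ≤ offDiagonal N H := by
  unfold offDiagonal
  positivity

lemma re_exp_mul_integral_weight_le (ha : ∀ k, |a k| ≤ 1) (hH : 1 ≤ H) {n : ℕ} (hn : 1 ≤ n) :
    (cexp (I * α * (Real.log n : ℂ)) *
        ∫ x : ℝ, cexp (-(I * x * (Real.log n : ℂ))) * weight a N T H x).re ≤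
      gaussianMass H * autocorr a N n * Real.cos (α * Real.log n) +
        gaussianMass H * offDiagonal N H * ((n : ℝ) ^ 2)⁻¹ := by
  set J := ∫ x : ℝ, cexp (-(I * x * (Real.log n : ℂ))) * weight a N T H x
  set A := gaussianMass H * autocorr a N n
  set e := cexp (I * α * (Real.log n : ℂ)) with he
  have hexp : e = cexp ((α * Real.log n : ℝ) * I) := by
    rw [he]
    push_cast
    ring_nf
  have hre : e.re = Real.cos (α * Real.log n) := by rw [hexp, Complex.exp_ofReal_mul_I_re]
  have hnorm : ‖e‖ = 1 := by rw [hexp, Complex.norm_exp_ofReal_mul_I]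
  calc (e * J).re = A * Real.cos (α * Real.log n) + (e * (J - (A : ℝ))).re := by
        rw [mul_sub, sub_re, re_mul_ofReal, hre]
        ring
    _ ≤ A * Real.cos (α * Real.log n) + ‖e * (J - (A : ℝ))‖ := by
        gcongr
        exact re_le_norm _
    _ ≤ _ := by
        rw [norm_mul, hnorm, one_mul]
        gcongr
        exact norm_integral_exp_neg_mul_weight_sub_le ha hH hn

lemma inv_sqrt_mul_inv_sq_le {x : ℝ} (hx : 1 ≤ x) : (√x)⁻¹ * (x ^ 2)⁻¹ ≤ x ^ (-(3 / 2) : ℝ) := by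
  have hx0 : 0 < x := by linarith
  rw [Real.sqrt_eq_rpow, ← Real.rpow_natCast x 2, ← Real.rpow_neg hx0.le, ← Real.rpow_neg hx0.le,
    ← Real.rpow_add hx0]
  exact Real.rpow_le_rpow_of_exponent_le hx (by norm_num)

open ArithmeticFunction (vonMangoldt vonMangoldt_nonneg)

lemma re_vonMangoldt_mul_integral_le (ha : ∀ k, |a k| ≤ 1) (hN : 1 ≤ N) (hH : 1 ≤ H) (n : ℕ) :
    ((vonMangoldt n : ℂ) *
        ∫ x : ℝ, (n : ℂ) ^ (-(1 / 2 + I * x)) * symmWeight a N T H α x).re ≤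
      2 * gaussianMass H *
          (vonMangoldt n / √n * autocorr a N n * Real.cos (α * Real.log n)) +
        2 * gaussianMass H * offDiagonal N H * (vonMangoldt n * (n : ℝ) ^ (-(3 / 2) : ℝ)) := by
  rcases Nat.eq_zero_or_pos n with rfl | hn
  · simp
  have hK : 0 ≤ gaussianMass H := gaussianMass_nonneg (zero_le_one.trans hH)
  have hE : 0 ≤ offDiagonal N H := offDiagonal_nonneg N H
  have : 0 ≤ vonMangoldt n := vonMangoldt_nonneg
  have hsqrt := inv_sqrt_mul_inv_sq_le (x := n) (by exact_mod_cast hn)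
  rw [integral_cpow_mul_symmWeight ha hN hH hn.ne', ← ofReal_mul, ofReal_re]
  calc _ ≤ vonMangoldt n * ((√n)⁻¹ * (2 *
          (gaussianMass H * autocorr a N n * Real.cos (α * Real.log n) +
            gaussianMass H * offDiagonal N H * ((n : ℝ) ^ 2)⁻¹))) := by
        gcongr
        exact re_exp_mul_integral_weight_le ha hH hn
    _ = 2 * gaussianMass H *
          (vonMangoldt n / √n * autocorr a N n * Real.cos (α * Real.log n)) +
        2 * gaussianMass H * offDiagonal N H *
          (vonMangoldt n * ((√n)⁻¹ * ((n : ℝ) ^ 2)⁻¹)) := by ring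
    _ ≤ _ := by gcongr

lemma autocorr_eq_zero_of_lt {n : ℕ} (h : N < n) : autocorr a N n = 0 :=
  Finset.sum_eq_zero fun _ hm => if_neg
    (h.trans_le (Nat.le_mul_of_pos_left n (Finset.mem_Icc.1 hm).1)).not_ge

lemma re_tsum_vonMangoldt_mul_integral_le (ha : ∀ k, |a k| ≤ 1) (hN : 1 ≤ N) (hH : 1 ≤ H)
    (hα : |α| ≤ 1) :
    (∑' n : ℕ, (vonMangoldt n : ℂ) *
        ∫ x : ℝ, (n : ℂ) ^ (-(1 / 2 + I * x)) * symmWeight a N T H α x).re ≤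
      2 * gaussianMass H * (∑ n ∈ Finset.Icc 1 N,
          vonMangoldt n / √n * autocorr a N n * Real.cos (α * Real.log n)) +
        2 * gaussianMass H * offDiagonal N H * vonMangoldtConst := by
  have hprimes := (isTestFunction_symmWeight (T := T) ha hN hH hα).hasSum_vonMangoldt_mul_integral
  rw [hprimes.tsum_eq]
  have hdiag : HasSum
      (fun n : ℕ => vonMangoldt n / √n * autocorr a N n * Real.cos (α * Real.log n))
      (∑ n ∈ Finset.Icc 1 N, vonMangoldt n / √n * autocorr a N n * Real.cos (α * Real.log n)) := by
    refine hasSum_sum_of_ne_finset_zero fun n hn => ?_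
    rcases Nat.eq_zero_or_pos n with rfl | hn0
    · simp
    · rw [autocorr_eq_zero_of_lt (by grind), mul_zero, zero_mul]
  have hoff := (summable_vonMangoldt_mul_rpow_neg (σ := 3 / 2) (by norm_num)).hasSum
  exact hasSum_le (fun n => re_vonMangoldt_mul_integral_le ha hN hH n) (hasSum_re hprimes)
    ((hdiag.mul_left _).add (hoff.mul_left _))

end WeightedCount

section WeightedCount

open ArithmeticFunction (vonMangoldt)

/-- The total error made when the explicit formula is applied to `symmWeight`: contributions of
the far ordinates (with `Z = ∑ 1 / (1 + γ²)`), of the pole, of a possible zero of order `m` of `Xi`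
at the origin, of the Gamma factor near the origin, and of the off-diagonal terms of the prime
sum. -/
def explicitFormulaError (N : ℕ) (T H Z : ℝ) (m : ℕ) : ℝ :=
  16 * π * weightTail N T H * Z + 16 * π * weightTail N T H + 8 * π * m * weightTail N T H +
    4 * π * weightTail N T H * Real.log (T / 2) +
    2 * gaussianMass H * offDiagonal N H * vonMangoldtConst

variable {a : ℕ → ℝ} {N : ℕ} {T H α : ℝ}

lemma realWeight_add_add_le_ite (ha : ∀ k, |a k| ≤ 1) (hN : 1 ≤ N) (hH : 1 ≤ H) (hT : 8 ≤ T)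
    (hα : |α| ≤ 1) {x : ℝ} (hx : 0 ≤ x) {p : Prop} [Decidable p] (hfar : ¬p → T / 2 ≤ |x - T|) :
    realWeight a N T H (x + α) + realWeight a N T H (-x + α) ≤
      (if p then realWeight a N T H (x + α) else 0) +
        8 * weightTail N T H * (1 / (1 + x ^ 2)) := by
  have hneg : realWeight a N T H (-x + α) ≤ 4 * weightTail N T H / (1 + x ^ 2) := by
    rw [← neg_sq x]
    refine realWeight_add_le_weightTail ha hN hH hT hα ?_
    rw [abs_sub_comm]
    linarith [le_abs_self (T - -x)]
  have hpos : realWeight a N T H (x + α) ≤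
      (if p then realWeight a N T H (x + α) else 0) + 4 * weightTail N T H / (1 + x ^ 2) := by
    split_ifs with h
    · have := weightTail_nonneg N T H
      exact le_add_of_nonneg_right (by positivity)
    · rw [zero_add]
      exact realWeight_add_le_weightTail ha hN hH hT hα (hfar h)
  calc _ ≤ _ := add_le_add hpos hneg
    _ = _ := by ring

variable {γ : ℕ → ℝ} {m : ℕ}

lemma re_le_two_pi_mul_sum_realWeight (ha : ∀ k, |a k| ≤ 1) (hN : 1 ≤ N) (hH : 1 ≤ H)
    (hT : 8 ≤ T) (hα : |α| ≤ 1) (hpos : ∀ n, 0 < γ n) (hsum : Summable fun n => 1 / (1 + γ n ^ 2))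
    {W : ℂ} (hW : HasSum (fun n => 2 * π * symmWeight a N T H α (γ n)) W) {S : Finset ℕ}
    (hS : ∀ n ∉ S, T / 2 ≤ |γ n - T|) :
    W.re ≤ 2 * π * ∑ n ∈ S, realWeight a N T H (γ n + α) +
      16 * π * weightTail N T H * ∑' n, 1 / (1 + γ n ^ 2) := by
  have hwindow : HasSum (fun n => if n ∈ S then realWeight a N T H (γ n + α) else 0)
      (∑ n ∈ S, realWeight a N T H (γ n + α)) := by
    rw [← Finset.sum_congr rfl fun n hn => if_pos hn]
    exact hasSum_sum_of_ne_finset_zero fun n hn => if_neg hn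
  refine hasSum_le (fun n => ?_) (hasSum_re hW)
    ((hwindow.mul_left (2 * π)).add (hsum.hasSum.mul_left (16 * π * weightTail N T H)))
  have hre : (2 * π * symmWeight a N T H α (γ n)).re =
      2 * π * (realWeight a N T H (γ n + α) + realWeight a N T H (-γ n + α)) := by
    rw [symmWeight_ofReal]
    norm_cast
  rw [hre]
  calc _ ≤ 2 * π * ((if n ∈ S then realWeight a N T H (γ n + α) else 0) +
        8 * weightTail N T H * (1 / (1 + γ n ^ 2))) := mul_le_mul_of_nonneg_left
          (realWeight_add_add_le_ite ha hN hH hT hα (hpos n).le (hS n)) two_pi_pos.le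
    _ = _ := by ring

theorem le_two_pi_mul_sum_realWeight
    (hp : IsZeroEnumeration Xi (fun i => (symmetrize m γ i : ℂ))) (hpos : ∀ n, 0 < γ n)
    (htop : Tendsto γ atTop atTop) {C : ℝ}
    (hC : ∀ t : ℝ, 1 / 2 * Real.log (1 + |t|) - C ≤ (logDeriv Gammaℝ (1 / 2 + I * t)).re)
    (ha : ∀ k, |a k| ≤ 1) (hN : 1 ≤ N) (hH : 1 ≤ H) (hT : 8 ≤ T) (hα : |α| ≤ 1) {S : Finset ℕ}
    (hS : ∀ n ∉ S, T / 2 ≤ |γ n - T|) :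
    (Real.log (T / 2) - 2 * C) * weightMass a N T H -
        2 * gaussianMass H * (∑ n ∈ Finset.Icc 1 N,
          vonMangoldt n / √n * autocorr a N n * Real.cos (α * Real.log n)) -
        explicitFormulaError N T H (∑' n, 1 / (1 + γ n ^ 2)) m ≤
      2 * π * ∑ n ∈ S, realWeight a N T H (γ n + α) := by
  have hΨ := isTestFunction_symmWeight (T := T) ha hN hH hα
  have hzeros := re_le_two_pi_mul_sum_realWeight ha hN hH hT hα hpos
    (summable_one_div_one_add_ordinate_sq hp hpos htop) (hΨ.hasSum_ordinate hp hpos htop) hS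
  have hΓ := le_re_integral_logDeriv_Gammaℝ_mul_symmWeight ha hN hH hT hα hC
  have hprimes := re_tsum_vonMangoldt_mul_integral_le (T := T) ha hN hH hα
  have hpole : -(16 * π * weightTail N T H) ≤ (2 * π * symmWeight a N T H α (I / 2)).re := by
    have h := neg_le_of_abs_le ((abs_re_le_norm _).trans
      (norm_symmWeight_le_weightTail ha hN hH hT hα (z := I / 2) (by norm_num) (by simp)))
    calc _ = 2 * π * -(8 * weightTail N T H) := by ring
      _ ≤ 2 * π * (symmWeight a N T H α (I / 2)).re := by gcongr
      _ = _ := by rw [← re_ofReal_mul]; norm_cast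
  have horigin : (π * m * symmWeight a N T H α 0).re ≤ 8 * π * m * weightTail N T H := by
    have h := (re_le_norm _).trans
      (norm_symmWeight_le_weightTail ha hN hH hT hα (z := 0) (by simp) (by simp))
    calc _ = π * m * (symmWeight a N T H α 0).re := by rw [← re_ofReal_mul]; norm_cast
      _ ≤ π * m * (8 * weightTail N T H) := by gcongr
      _ = _ := by ring
  rw [sub_re, add_re, sub_re] at hzeros
  unfold explicitFormulaError
  linarith

lemma integral_vonMangoldt_mul_cos (c η : ℝ) (n : ℕ) :
    ∫ α in (-η)..η, vonMangoldt n / √n * c * Real.cos (α * Real.log n) =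
      2 * (vonMangoldt n / √n * c * (Real.sin (η * Real.log n) / Real.log n)) := by
  rcases le_or_gt n 1 with h | h
  · interval_cases n <;> simp
  · rw [intervalIntegral.integral_const_mul, intervalIntegral.integral_comp_mul_right _
        (Real.log_pos (Nat.one_lt_cast.2 h)).ne',
      integral_cos, neg_mul, Real.sin_neg, smul_eq_mul]
    ring

lemma sum_integral_comp_add_le_integral {ι : Type*} {f : ℝ → ℝ} (hf : Integrable f)
    (hf0 : ∀ x, 0 ≤ f x) {η : ℝ} (hη : 0 ≤ η) {γ : ι → ℝ} {S : Finset ι}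
    (hsep : ∀ i ∈ S, ∀ j ∈ S, i ≠ j → 2 * η ≤ |γ i - γ j|) :
    ∑ i ∈ S, ∫ α in (-η)..η, f (γ i + α) ≤ ∫ x, f x := by
  have hshift (i : ι) : ∫ α in (-η)..η, f (γ i + α) = ∫ x in Ioc (γ i + -η) (γ i + η), f x := by
    rw [intervalIntegral.integral_comp_add_left, intervalIntegral.integral_of_le (by linarith)]
  simp only [hshift]
  rw [← integral_biUnion_finset S (fun _ _ => measurableSet_Ioc) (fun i hi j hj hij => ?_)
    fun _ _ => hf.integrableOn]
  · exact setIntegral_le_integral hf (Eventually.of_forall hf0)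
  · rw [Function.onFun, Set.disjoint_left]
    intro x hxi hxj
    rcases le_abs.1 (hsep i hi j hj hij) with h | h
    · linarith [hxi.1, hxj.2]
    · linarith [hxi.2, hxj.1]

/-- If the ordinates near `T` were `2η`-separated, the translates of the weight by them would
overlap little, which bounds the weighted count by the mass of the weight. -/
theorem two_mul_mul_weightMass_le_of_separated
    (hp : IsZeroEnumeration Xi (fun i => (symmetrize m γ i : ℂ))) (hpos : ∀ n, 0 < γ n)
    (htop : Tendsto γ atTop atTop) {C : ℝ}
    (hC : ∀ t : ℝ, 1 / 2 * Real.log (1 + |t|) - C ≤ (logDeriv Gammaℝ (1 / 2 + I * t)).re)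
    (ha : ∀ k, |a k| ≤ 1) (hN : 1 ≤ N) (hH : 1 ≤ H) (hT : 8 ≤ T) {η : ℝ} (hη0 : 0 ≤ η)
    (hη1 : η ≤ 1) {S : Finset ℕ} (hS : ∀ n ∉ S, T / 2 ≤ |γ n - T|)
    (hsep : ∀ i ∈ S, ∀ j ∈ S, i ≠ j → 2 * η ≤ |γ i - γ j|) :
    2 * η * ((Real.log (T / 2) - 2 * C) * weightMass a N T H -
          explicitFormulaError N T H (∑' n, 1 / (1 + γ n ^ 2)) m) -
        4 * gaussianMass H * (∑ n ∈ Finset.Icc 1 N, vonMangoldt n / √n * autocorr a N n *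
          (Real.sin (η * Real.log n) / Real.log n)) ≤
      2 * π * weightMass a N T H := by
  set E := explicitFormulaError N T H (∑' n, 1 / (1 + γ n ^ 2)) m
  have hcont := continuous_realWeight a N T H
  have hcos : Continuous fun α : ℝ => ∑ n ∈ Finset.Icc 1 N,
      vonMangoldt n / √n * autocorr a N n * Real.cos (α * Real.log n) := by fun_prop
  have hmono := intervalIntegral.integral_mono_on (by linarith : -η ≤ η)
    (Continuous.intervalIntegrable (μ := volume) (by fun_prop) _ _)
    (Continuous.intervalIntegrable (by fun_prop) _ _) fun α hα =>
      le_two_pi_mul_sum_realWeight hp hpos htop hC ha hN hH hT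
        (abs_le.2 ⟨by linarith [hα.1], by linarith [hα.2]⟩) hS
  have hleft : ∫ α in (-η)..η, ((Real.log (T / 2) - 2 * C) * weightMass a N T H -
        2 * gaussianMass H * (∑ n ∈ Finset.Icc 1 N,
          vonMangoldt n / √n * autocorr a N n * Real.cos (α * Real.log n)) - E) =
      2 * η * ((Real.log (T / 2) - 2 * C) * weightMass a N T H - E) -
        4 * gaussianMass H * (∑ n ∈ Finset.Icc 1 N, vonMangoldt n / √n * autocorr a N n *
          (Real.sin (η * Real.log n) / Real.log n)) := by
    simp_rw [sub_right_comm _ _ E]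
    rw [intervalIntegral.integral_sub intervalIntegrable_const
        ((hcos.intervalIntegrable _ _).const_mul _), intervalIntegral.integral_const,
      intervalIntegral.integral_const_mul, intervalIntegral.integral_finsetSum
        fun _ _ => Continuous.intervalIntegrable (by fun_prop) _ _]
    simp only [integral_vonMangoldt_mul_cos, ← Finset.mul_sum, smul_eq_mul]
    ring
  rw [hleft, intervalIntegral.integral_const_mul, intervalIntegral.integral_finsetSum
    fun _ _ => Continuous.intervalIntegrable (by fun_prop) _ _] at hmono
  exact hmono.trans (mul_le_mul_of_nonneg_left (sum_integral_comp_add_le_integral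
    (integrable_realWeight ha hN hH) (realWeight_nonneg a N T H) hη0 hsep) two_pi_pos.le)

end WeightedCount

/-! ### Choice of the parameters -/

section Parameters

lemma tendsto_natCast_pow_mul_exp_neg_mul_pow {b : ℝ} (hb : 0 < b) (n : ℕ) {k : ℕ} (hk : k ≠ 0) :
    Tendsto (fun M : ℕ => (M : ℝ) ^ n * Real.exp (-b * (M : ℝ) ^ k)) atTop (𝓝 0) := by
  refine ((tendsto_rpow_mul_exp_neg_mul_atTop_nhds_zero (n / k) b hb).comp
    ((tendsto_pow_atTop hk).comp tendsto_natCast_atTop_atTop)).congr fun M => ?_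
  simp only [Function.comp_apply]
  rw [← Real.rpow_natCast_mul (Nat.cast_nonneg M), mul_div_cancel₀ _ (Nat.cast_ne_zero.2 hk),
    Real.rpow_natCast]

lemma tendsto_pow_mul_weightTail (j : ℕ) :
    Tendsto (fun M : ℕ => (M : ℝ) ^ j * weightTail (M ^ 16) ((M : ℝ) ^ 20) ((M : ℝ) ^ 18))
      atTop (𝓝 0) := by
  have h := (tendsto_natCast_pow_mul_exp_neg_mul_pow (b := 1 / 64) (by norm_num) (j + 84)
    four_ne_zero).const_mul 280
  rw [mul_zero] at h
  refine h.congr' ?_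
  filter_upwards [eventually_ne_atTop 0] with M hM
  have hexp : -(((M : ℝ) ^ 20) ^ 2 / (64 * ((M : ℝ) ^ 18) ^ 2)) = -(1 / 64) * (M : ℝ) ^ 4 := by
    have : (M : ℝ) ≠ 0 := Nat.cast_ne_zero.2 hM
    field_simp
  rw [weightTail, hexp, Nat.cast_pow]
  ring

lemma tendsto_pow_mul_offDiagonal (j : ℕ) :
    Tendsto (fun M : ℕ => (M : ℝ) ^ j * offDiagonal (M ^ 16) ((M : ℝ) ^ 18)) atTop (𝓝 0) := by
  have h := (tendsto_natCast_pow_mul_exp_neg_mul_pow (b := 1 / 16) (by norm_num) (j + 64)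
    four_ne_zero).const_mul (Real.exp 4)
  rw [mul_zero] at h
  refine h.congr' ?_
  filter_upwards [eventually_ne_atTop 0] with M hM
  have hexp : -(((M : ℝ) ^ 18) ^ 2 / (16 * ((M ^ 16 : ℕ) : ℝ) ^ 2)) =
      -(1 / 16) * (M : ℝ) ^ 4 := by
    have : (M : ℝ) ≠ 0 := Nat.cast_ne_zero.2 hM
    push_cast
    field_simp
  rw [offDiagonal, hexp, Nat.cast_pow]
  ring

lemma tendsto_weightTail_mul_log :
    Tendsto (fun M : ℕ => weightTail (M ^ 16) ((M : ℝ) ^ 20) ((M : ℝ) ^ 18) *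
      Real.log ((M : ℝ) ^ 20 / 2)) atTop (𝓝 0) := by
  refine squeeze_zero' ?_ ?_ (tendsto_pow_mul_weightTail 20)
  all_goals
    filter_upwards [eventually_ge_atTop 2] with M hM
    have hM' : (2 : ℝ) ≤ M := by exact_mod_cast hM
    have hT : (2 : ℝ) ≤ (M : ℝ) ^ 20 := hM'.trans (le_self_pow₀ (by linarith) (by norm_num))
    have hδ := weightTail_nonneg (M ^ 16) ((M : ℝ) ^ 20) ((M : ℝ) ^ 18)
  · exact mul_nonneg hδ (Real.log_nonneg (by linarith))
  · rw [mul_comm]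
    gcongr
    linarith [Real.log_le_sub_one_of_pos (by linarith : 0 < (M : ℝ) ^ 20 / 2)]

lemma tendsto_explicitFormulaError (Z : ℝ) (m : ℕ) :
    Tendsto (fun M : ℕ => explicitFormulaError (M ^ 16) ((M : ℝ) ^ 20) ((M : ℝ) ^ 18) Z m)
      atTop (𝓝 0) := by
  have htail := tendsto_pow_mul_weightTail 0
  simp only [pow_zero, one_mul] at htail
  have h := (((htail.const_mul (16 * π * Z + 16 * π + 8 * π * m)).add
    (tendsto_weightTail_mul_log.const_mul (4 * π))).add
    ((tendsto_pow_mul_offDiagonal 18).const_mul (2 * √(2 * π) * vonMangoldtConst)))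
  simp only [mul_zero, add_zero] at h
  refine h.congr fun M => ?_
  unfold explicitFormulaError gaussianMass
  ring

lemma mul_log_le_harmonic_pow (M k : ℕ) : k * Real.log M ≤ harmonic (M ^ k) := by
  rw [← Real.log_pow]
  refine le_trans ?_ (log_add_one_le_harmonic (M ^ k))
  rcases (M ^ k).eq_zero_or_pos with h | h
  · rw [← Nat.cast_pow, h]
    simp
  · push_cast
    exact Real.log_le_log (by exact_mod_cast h) (by linarith)

lemma harmonic_pow_le_one_add_mul_log (M k : ℕ) : harmonic (M ^ k) ≤ 1 + k * Real.log M := by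
  rw [← Real.log_pow, ← Nat.cast_pow]
  exact harmonic_le_one_add_log (M ^ k)

lemma one_le_gaussianMass {H : ℝ} (hH : 1 ≤ H) : 1 ≤ gaussianMass H :=
  one_le_mul_of_one_le_of_one_le (Real.one_le_sqrt.2 (by linarith [Real.pi_gt_three])) hH

lemma weightMass_liouvilleCoeff_pow_mem_Icc {M k : ℕ} {T H : ℝ} (hH : 1 ≤ H)
    (hoff : offDiagonal (M ^ k) H ≤ 1) :
    weightMass liouvilleCoeff (M ^ k) T H ∈
      Icc (gaussianMass H * (k * Real.log M - 1)) (gaussianMass H * (k * Real.log M + 2)) := by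
  have hmass := gaussianMass_nonneg (zero_le_one.trans hH)
  have h := abs_le.1 ((abs_weightMass_sub_le (T := T) (N := M ^ k) abs_liouvilleCoeff_le_one
    hH).trans (mul_le_of_le_one_right hmass hoff))
  rw [autocorr_liouvilleCoeff_one] at h
  have hlower := mul_le_mul_of_nonneg_left (mul_log_le_harmonic_pow M k) hmass
  have hupper := mul_le_mul_of_nonneg_left (harmonic_pow_le_one_add_mul_log M k) hmass
  constructor <;> linarith

lemma mul_add_lt_of_le {y c K : ℝ} (hc : 1 ≤ c) (hK : 0 ≤ K)
    (hy : 100 * (2 + 0.03 * (53 + 16 * c + 68 * K)) ≤ y) :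
    2 * (16 * y + 2) * y <
      0.06 * ((20 * y - c) * (16 * y - 1) - 1) +
        0.12 * (16 * y * (6.99 * y - 1) - 2 * (1 + 16 * y) * K) := by
  have hy0 : 0 ≤ y := by linarith
  nlinarith [mul_nonneg hK hy0, mul_le_mul_of_nonneg_right hy hy0]

lemma two_pi_mul_lt_of_mem_Icc {y k η C K W E A : ℝ} (hC : 0 ≤ C) (hK : 0 ≤ K) (hk : 1 ≤ k)
    (hη : η * y = 0.03 * π) (hy : 100 * (2 + 0.03 * (53 + 16 * (1 + 2 * C) + 68 * K)) ≤ y)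
    (hW : W ∈ Icc (k * (16 * y - 1)) (k * (16 * y + 2))) (hE : E ≤ 1)
    (hA : η * (16 * y * (6.99 * y - 1) - 2 * (1 + 16 * y) * K) ≤ A) :
    2 * π * W < 2 * η * ((20 * y - Real.log 2 - 2 * C) * W - E) + 4 * k * A := by
  have hk0 : 0 < k := one_pos.trans_le hk
  have hηy : 0 < η * y := by
    rw [hη]
    positivity
  have hη0 : 0 < η := pos_of_mul_pos_left hηy (by linarith)
  have hW0 : 0 ≤ W := (mul_nonneg hk0.le (by linarith)).trans hW.1
  have hlog2 : Real.log 2 ≤ 1 := Real.log_two_lt_d9.le.trans (by norm_num)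
  have hlower : k * ((20 * y - (1 + 2 * C)) * (16 * y - 1) - 1) ≤
      (20 * y - Real.log 2 - 2 * C) * W - E :=
    calc _ ≤ (20 * y - (1 + 2 * C)) * (k * (16 * y - 1)) - 1 := by linarith
      _ ≤ (20 * y - (1 + 2 * C)) * W - E :=
        sub_le_sub (mul_le_mul_of_nonneg_left hW.1 (by linarith)) hE
      _ ≤ _ := sub_le_sub_right (mul_le_mul_of_nonneg_right (by linarith) hW0) E
  calc 2 * π * W ≤ 2 * π * (k * (16 * y + 2)) := by gcongr; exact hW.2
    _ = k * η / 0.03 * (2 * (16 * y + 2) * y) := by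
      linear_combination -(2 * k * (16 * y + 2) / 0.03) * hη
    _ < k * η / 0.03 * (0.06 * ((20 * y - (1 + 2 * C)) * (16 * y - 1) - 1) +
        0.12 * (16 * y * (6.99 * y - 1) - 2 * (1 + 16 * y) * K)) := by
      gcongr
      exact mul_add_lt_of_le (by linarith) hK hy
    _ = 2 * η * (k * ((20 * y - (1 + 2 * C)) * (16 * y - 1) - 1)) +
        4 * k * (η * (16 * y * (6.99 * y - 1) - 2 * (1 + 16 * y) * K)) := by ring
    _ ≤ _ := by gcongr

end Parameters

/-! ### Gaps between ordinates -/

section Gaps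

lemma finite_abs_sub_lt {γ : ℕ → ℝ} (htop : Tendsto γ atTop atTop) (T R : ℝ) :
    {n | |γ n - T| < R}.Finite := by
  have h := htop.eventually_ge_atTop (T + R)
  rw [← Nat.cofinite_eq_atTop] at h
  exact h.subset fun n (hn : |γ n - T| < R) (hle : T + R ≤ γ n) => by
    linarith [(abs_lt.1 hn).2]

variable {γ : ℕ → ℝ} {m : ℕ}

theorem eventually_exists_abs_sub_lt
    (hp : IsZeroEnumeration Xi (fun i => (symmetrize m γ i : ℂ))) (hpos : ∀ n, 0 < γ n)
    (htop : Tendsto γ atTop atTop) :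
    ∀ᶠ M : ℕ in atTop, ∃ i j, i ≠ j ∧ |γ i - (M : ℝ) ^ 20| < (M : ℝ) ^ 20 / 2 ∧
      |γ j - (M : ℝ) ^ 20| < (M : ℝ) ^ 20 / 2 ∧ |γ i - γ j| < 2 * (0.03 * π / Real.log M) := by
  obtain ⟨C₀, hC₀⟩ := exists_log_sub_le_re_logDeriv_Gammaℝ
  set C := max C₀ 0
  have hC (t : ℝ) : 1 / 2 * Real.log (1 + |t|) - C ≤ (logDeriv Gammaℝ (1 / 2 + I * t)).re :=
    (sub_le_sub_left (le_max_left _ _) _).trans (hC₀ t)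
  set Z := ∑' n, 1 / (1 + γ n ^ 2)
  have hlogtop : Tendsto (fun M : ℕ => Real.log M) atTop atTop :=
    Real.tendsto_log_atTop.comp tendsto_natCast_atTop_atTop
  have hoff := tendsto_pow_mul_offDiagonal 0
  simp only [pow_zero, one_mul] at hoff
  filter_upwards [hoff.eventually_le_const one_pos,
    (tendsto_explicitFormulaError Z m).eventually_le_const one_pos, eventually_ge_atTop 8,
    hlogtop.eventually_ge_atTop
      (100 * (2 + 0.03 * (53 + 16 * (1 + 2 * C) + 68 * vonMangoldtConst)))]
    with M hoff1 herr1 hM hlogM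
  by_contra! hsep
  have hC0 : 0 ≤ C := le_max_right _ _
  have hKV := vonMangoldtConst_nonneg
  have hM1 : (8 : ℝ) ≤ M := by exact_mod_cast hM
  have hH : 1 ≤ (M : ℝ) ^ 18 := one_le_pow₀ (by linarith)
  have hT : 8 ≤ (M : ℝ) ^ 20 := hM1.trans (le_self_pow₀ (by linarith) (by norm_num))
  set y := Real.log M
  set η := 0.03 * π / y
  have hy : 100 ≤ y := by linarith
  have hηy : η * y = 0.03 * π := div_mul_cancel₀ _ (by linarith)
  have hη0 : 0 < η := by positivity
  have hη1 : η ≤ 1 := (div_le_one (by linarith)).2 (by linarith [Real.pi_lt_four])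
  have hfinite := finite_abs_sub_lt htop ((M : ℝ) ^ 20) ((M : ℝ) ^ 20 / 2)
  have hcount := two_mul_mul_weightMass_le_of_separated hp hpos htop hC abs_liouvilleCoeff_le_one
    (Nat.one_le_pow 16 M (by lia)) hH hT hη0.le hη1 (S := hfinite.toFinset)
    (fun n hn => by simpa using hn)
    (fun i hi j hj hij => hsep i j hij (by simpa using hi) (by simpa using hj))
  have hprimes := le_neg_sum_vonMangoldt_mul_autocorr (M := M) (by lia) hη0 hηy.le
  have hlogT : Real.log ((M : ℝ) ^ 20 / 2) = 20 * y - Real.log 2 := by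
    rw [Real.log_div (by positivity) two_ne_zero, Real.log_pow, Nat.cast_ofNat]
  rw [hlogT] at hcount
  have hlt := two_pi_mul_lt_of_mem_Icc hC0 hKV (one_le_gaussianMass hH) hηy hlogM
    (weightMass_liouvilleCoeff_pow_mem_Icc (T := (M : ℝ) ^ 20) hH hoff1) herr1 hprimes
  linarith

/-- The gap after the `n`-th ordinate, in units of the mean spacing `2π / log γ` at its height. -/
def normalizedGap (γ : ℕ → ℝ) (n : ℕ) : ℝ := (γ (n + 1) - γ n) * Real.log (γ n) / (2 * π)

lemma isBoundedUnder_ge_normalizedGap (hmono : Monotone γ) (htop : Tendsto γ atTop atTop) :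
    IsBoundedUnder (· ≥ ·) atTop (normalizedGap γ) := by
  refine isBoundedUnder_of_eventually_ge (a := 0) ?_
  filter_upwards [htop.eventually_ge_atTop 1] with n hn
  have hgap := sub_nonneg.2 (hmono n.le_succ)
  have hlog := Real.log_nonneg hn
  unfold normalizedGap
  positivity

lemma le_abs_sub_of_le_normalizedGap (hmono : Monotone γ) {c δ X : ℝ} {n₀ : ℕ}
    (hgap : ∀ n ≥ n₀, c ≤ normalizedGap γ n) (hδ : δ * Real.log X ≤ c * (2 * π)) {i j : ℕ}
    (hij : i ≠ j) (hi : n₀ ≤ i) (hj : n₀ ≤ j) (hi1 : 1 < γ i) (hj1 : 1 < γ j) (hiX : γ i ≤ X)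
    (hjX : γ j ≤ X) : δ ≤ |γ i - γ j| := by
  wlog h : i < j generalizing i j
  · rw [abs_sub_comm]
    exact this hij.symm hj hi hj1 hi1 hjX hiX (hij.lt_or_gt.resolve_left h)
  have hlogX : 0 < Real.log X := Real.log_pos (hi1.trans_le hiX)
  have hstep : 0 ≤ γ (i + 1) - γ i := sub_nonneg.2 (hmono i.le_succ)
  have hδi : δ * Real.log X ≤ (γ (i + 1) - γ i) * Real.log X :=
    calc _ ≤ c * (2 * π) := hδ
      _ ≤ (γ (i + 1) - γ i) * Real.log (γ i) := (le_div_iff₀ two_pi_pos).1 (hgap i hi)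
      _ ≤ _ := by gcongr
  calc δ ≤ γ (i + 1) - γ i := le_of_mul_le_mul_right hδi hlogX
    _ ≤ γ j - γ i := sub_le_sub_right (hmono h) _
    _ ≤ |γ i - γ j| := by
      rw [abs_sub_comm]
      exact le_abs_self _

lemma two_mul_div_mul_log_le {c M : ℝ} (hc : 0.6 < c) (hM : 1 < M)
    (hlogM : 0.03 / (c - 0.6) ≤ Real.log M) :
    2 * (0.03 * π / Real.log M) * Real.log (2 * M ^ 20) ≤ c * (2 * π) := by
  have hlog : 0 < Real.log M := Real.log_pos hM
  have hlog2 : Real.log 2 ≤ 1 := Real.log_two_lt_d9.le.trans (by norm_num)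
  have hsmall : 0.03 * π / Real.log M ≤ π * (c - 0.6) := by
    rw [div_le_iff₀ (sub_pos.2 hc)] at hlogM
    rw [div_le_iff₀ hlog]
    linarith [mul_le_mul_of_nonneg_left hlogM Real.pi_pos.le]
  rw [Real.log_mul two_ne_zero (by positivity), Real.log_pow, Nat.cast_ofNat]
  calc _ = 2 * (0.03 * π / Real.log M * Real.log 2) + 1.2 * π := by field_simp; ring
    _ ≤ 2 * (0.03 * π / Real.log M * 1) + 1.2 * π := by gcongr
    _ ≤ c * (2 * π) := by linarith

theorem liminf_normalizedGap_le (hmono : Monotone γ)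
    (hp : IsZeroEnumeration Xi (fun i => (symmetrize m γ i : ℂ))) (hpos : ∀ n, 0 < γ n)
    (htop : Tendsto γ atTop atTop) : liminf (normalizedGap γ) atTop ≤ 0.6 := by
  by_contra! hlim
  obtain ⟨c, hc, hclim⟩ := exists_between hlim
  obtain ⟨n₀, hgap⟩ := eventually_atTop.1
    (eventually_lt_of_lt_liminf hclim (isBoundedUnder_ge_normalizedGap hmono htop))
  have hlogtop : Tendsto (fun M : ℕ => Real.log M) atTop atTop :=
    Real.tendsto_log_atTop.comp tendsto_natCast_atTop_atTop
  obtain ⟨M, ⟨i, j, hij, hi, hj, hlt⟩, hM, hγ, hlogM⟩ :=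
    ((eventually_exists_abs_sub_lt hp hpos htop).and ((eventually_ge_atTop 2).and
      ((tendsto_natCast_atTop_atTop.eventually_ge_atTop (2 * γ n₀)).and
        (hlogtop.eventually_ge_atTop (0.03 / (c - 0.6)))))).exists
  have hM2 : (2 : ℝ) ≤ M := by exact_mod_cast hM
  have hMT : (M : ℝ) ≤ (M : ℝ) ^ 20 := le_self_pow₀ (by linarith) (by norm_num)
  have hwindow (k : ℕ) (hk : |γ k - (M : ℝ) ^ 20| < (M : ℝ) ^ 20 / 2) :
      n₀ ≤ k ∧ 1 < γ k ∧ γ k ≤ 2 * (M : ℝ) ^ 20 := by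
    rw [abs_lt] at hk
    exact ⟨(hmono.reflect_lt (by linarith : γ n₀ < γ k)).le, by linarith, by linarith⟩
  obtain ⟨hi₀, hi1, hiX⟩ := hwindow i hi
  obtain ⟨hj₀, hj1, hjX⟩ := hwindow j hj
  exact hlt.not_ge (le_abs_sub_of_le_normalizedGap hmono (fun n hn => (hgap n hn).le)
    (two_mul_div_mul_log_le hc (by linarith) hlogM) hij hi₀ hj₀ hi1 hj1 hiX hjX)

end Gaps

end ZetaGaps

theorem small_gaps_between_zeros_general (hRH : RiemannHypothesis)
    (γ : ℕ → ℝ) (hmono : Monotone γ) (hpos : ∀ n, 0 < γ n)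
    (htop : Filter.Tendsto γ Filter.atTop Filter.atTop)
    (hcount : ∀ t : ℝ, 0 < t →
      {n : ℕ | γ n = t}.ncard = zetaMult ((1 / 2 : ℝ) + (t : ℝ) * Complex.I)) :
    Filter.liminf (fun n => (γ (n + 1) - γ n) * Real.log (γ n) / (2 * π))
        Filter.atTop ≤ 0.6 :=
  ZetaGaps.liminf_normalizedGap_le hmono (ZetaGaps.isZeroEnumeration_Xi hRH hpos htop hcount)
    hpos htop

/-- Assuming RH, if `γ 0 ≤ γ 1 ≤ γ 2 ≤ ⋯` enumerates (in nondecreasing order, with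
multiplicity) the ordinates of the non-trivial zeros of `ζ` in the upper half-plane, then
`liminf (γ_{n+1} - γ_n) (log γ_n)/(2π) ≤ 0.6073`. -/
theorem small_gaps_between_zeros (hRH : RiemannHypothesis)
    (γ : ℕ → ℝ) (hmono : Monotone γ) (hpos : ∀ n, 0 < γ n)
    (hzero : ∀ n, ZetaNontrivZero ((1 / 2 : ℝ) + (γ n : ℝ) * Complex.I))
    (htop : Filter.Tendsto γ Filter.atTop Filter.atTop)
    (hcount : ∀ t : ℝ, 0 < t →
      {n : ℕ | γ n = t}.ncard = zetaMult ((1 / 2 : ℝ) + (t : ℝ) * Complex.I)) :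
    Filter.liminf (fun n => (γ (n + 1) - γ n) * Real.log (γ n) / (2 * π))
        Filter.atTop ≤ 0.6073 :=
  (small_gaps_between_zeros_general hRH γ hmono hpos htop hcount).trans (by norm_num)
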